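/- Let k be a field of characteristic 0, and let S and R be integral domains that are finitely generated k-algebras, with R a k-subalgebra of S. Let R' be the integral closure of R in its fraction field, and assume that the map from the maximal spectrum of R' to the maximal spectrum of R sending a maximal ideal m of R' to its contraction m ∩ R is injective (this encodes that the affine variety with coordinate ring R has no selfintersection points). Assume also that every ideal of height 1 in R generates a proper ideal in S. Let F : S → S be a k-algebra endomorphism with F(R) ⊆ R. If F is bijective, then the restriction of F to R, viewed as a map R → R, is bijective. -/

import Mathlib

/-!
Write `R'` and `S'` for the normalizations of `R` and `S`; they are finite over `R` and `S`, and `F`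
extends to `S'`, preserving `R'`.

**Reduction to the normal case.** Since maximal ideals of `R'` are determined by their contractions
to `R`, contraction reflects inclusions of primes (`le_of_comap_le_comap`), so the hypothesis on
height-one ideals passes to `R' ⊆ S'`. Once `F⁻¹(R') = R'` is known, the modules `F⁻ⁿ(R)` form an
ascending chain of `R`-submodules of the finite module `R'`; it stabilizes, whence `F⁻¹(R) = R`.

**The normal case** (`mem_range_of_normal`). Let `R` be normal and put `T = ⋃ F⁻ⁿ(R)`. The ideals of
`S ⊗ S` generated by `y ⊗ 1 - 1 ⊗ y` for `y ∈ F⁻ⁿ(R)` form an ascending chain that is shifted by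
`F ⊗ F`, so they all coincide; hence at every prime `Q` of `S` the residues of elements of `T` lie in
the field generated by `R` (`exists_sub_mem`). For `Q = 0` this says that `T` consists of fractions of
`R`, and their polar loci are unions of components of one hypersurface (`exists_pow_mul_mem`). Let `D`
be the ideal of functions vanishing on all these loci. If `F x ∈ R` with `x ∉ R`, then `D` is contained
in a height-one prime, so `D S` is a proper ideal; it is `F`-stable, so a power of `F` fixes a minimal
prime `Q` of it. Let `P = Q ∩ R`. The local Artinian rings `R_P / Q^(j) ∩ R` have injective
endomorphisms induced by `F`, which are onto the residue field and therefore surjective; thus elements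
of `T` are approximated by elements of `R_P` modulo all symbolic powers of `Q` (`exists_sub_mem_symb`).
By `exists_symb_le_symb` the symbolic powers of `Q` define on `R` a topology at least as fine as the
symbolic powers of `P`, so `T ⊆ R_P`. No polar locus then passes through `P`, which yields an element
of `D` outside `P`: a contradiction.

**The comparison of topologies** (`exists_symb_le_symb`) uses normality and characteristic zero.
Localizing, one may assume `P` maximal, and `R` finite over `k[x]` with all variables in `P`. If the
comparison fails, completeness gives an element `z` of `k[[x]] ⊗ R` that vanishes to infinite order
along `Q` but not at `P`. Up to a nonzero power series `α`, `z` generates an ideal generated by an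
idempotent `e` (`exists_idempotent_tensor`); `e` does not vanish at `P`, so the power series `α` vanishes
to infinite order along `Q`. Such power series form a proper ideal stable under partial derivatives,
which must be zero.
-/

set_option linter.style.haveILetI false
set_option linter.unusedSimpArgs false

set_option synthInstance.maxHeartbeats 1000000
set_option maxHeartbeats 1000000

/-- The height of an ideal `I`: the infimum of the heights of the prime ideals
containing `I` (in the prime spectrum, ordered by inclusion). -/
noncomputable def Ideal.heightOf {R : Type*} [CommRing R] (I : Ideal R) : ℕ∞ :=
  ⨅ p ∈ {p : PrimeSpectrum R | I ≤ p.asIdeal}, Order.height p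

/-! ### Extension of derivations -/

/-- The lifting property of formally smooth `A`-algebras `B`, in the form: a square-zero extension
`C → B` has a ring-theoretic section with prescribed values `g` on `A`. -/
theorem FormallySmooth.exists_ringHom_section {A B C : Type*} [CommRing A] [CommRing B]
    [CommRing C] [Algebra A B] [Algebra.FormallySmooth A B] (g : A →+* C) (π : C →+* B)
    (hπ : Function.Surjective π) (hker : RingHom.ker π ^ 2 = ⊥)
    (hcomp : ∀ a, π (g a) = algebraMap A B a) :
    ∃ s : B →+* C, (∀ b, π (s b) = b) ∧ ∀ a, s (algebraMap A B a) = g a := by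
  letI : Algebra A C := g.toAlgebra
  let π' : C →ₐ[A] B := { π with commutes' := hcomp }
  have hnil : IsNilpotent (RingHom.ker (π' : C →+* B)) := ⟨2, hker⟩
  refine ⟨(Algebra.FormallySmooth.liftOfSurjective (AlgHom.id A B) π' hπ hnil : B →ₐ[A] C), ?_, ?_⟩
  · intro b
    exact Algebra.FormallySmooth.liftOfSurjective_apply (AlgHom.id A B) π' hπ hnil b
  · intro a
    exact AlgHom.commutes _ a

/-- Derivations extend along formally smooth homomorphisms. -/
theorem Derivation.exists_extension {k A B N : Type*} [CommRing k] [CommRing A] [CommRing B]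
    [Algebra k A] [Algebra k B] [Algebra A B] [IsScalarTower k A B] [Algebra.FormallySmooth A B]
    [AddCommGroup N] [Module k N] [Module A N] [Module B N] [IsScalarTower A B N]
    [IsScalarTower k B N] (D : Derivation k A N) :
    ∃ D' : Derivation k B N, ∀ a, D' (algebraMap A B a) = D a := by
  letI : Module Bᵐᵒᵖ N := Module.compHom N ((RingHom.id B).fromOpposite fun _ _ => mul_comm _ _)
  haveI : IsCentralScalar B N := ⟨fun b n => rfl⟩
  let g : A →+* TrivSqZeroExt B N :=
    { toFun := fun a => TrivSqZeroExt.inl (algebraMap A B a) + TrivSqZeroExt.inr (D a)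
      map_one' := by ext <;> simp
      map_zero' := by ext <;> simp
      map_add' := fun x y => by ext <;> simp
      map_mul' := fun x y => by
        ext
        · simp
        · simp [algebraMap_smul] }
  have hk : RingHom.ker (TrivSqZeroExt.fstHom B B N : TrivSqZeroExt B N →+* B) ^ 2 = ⊥ := by
    rw [eq_bot_iff, pow_two, Ideal.mul_le]
    intro x hx y hy
    have hx' : x.fst = 0 := hx
    have hy' : y.fst = 0 := hy
    rw [Ideal.mem_bot]
    ext <;> simp [hx', hy']
  obtain ⟨s, hs, hs'⟩ := FormallySmooth.exists_ringHom_section g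
    (TrivSqZeroExt.fstHom B B N : TrivSqZeroExt B N →+* B)
    (fun b => ⟨TrivSqZeroExt.inl b, by simp⟩) hk (fun a => by simp [g])
  have hfst : ∀ b, (s b).fst = b := hs
  have hmul : ∀ a b, (s (a * b)).snd = a • (s b).snd + b • (s a).snd := by
    intro a b
    rw [map_mul, TrivSqZeroExt.snd_mul, hfst, hfst, op_smul_eq_smul]
  have hkz : ∀ c : k, (s (algebraMap k B c)).snd = 0 := by
    intro c
    rw [IsScalarTower.algebraMap_apply k A B, hs']
    simp [g]
  refine ⟨Derivation.mk' ⟨⟨fun b => (s b).snd, by simp⟩, ?_⟩ hmul, ?_⟩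
  · intro c b
    change (s (c • b)).snd = c • (s b).snd
    rw [Algebra.smul_def, hmul, hkz, smul_zero, add_zero, algebraMap_smul]
  · intro a
    change (s (algebraMap A B a)).snd = _
    rw [hs']; simp [g]

/-- Derivations that agree on `A` agree on any formally unramified `A`-algebra. -/
theorem Derivation.eq_of_formallyUnramified {k A B N : Type*} [CommRing k] [CommRing A]
    [CommRing B] [Algebra k A] [Algebra k B] [Algebra A B] [IsScalarTower k A B]
    [Algebra.FormallyUnramified A B] [AddCommGroup N] [Module k N] [Module B N]
    (D D' : Derivation k B N) (h : ∀ a, D (algebraMap A B a) = D' (algebraMap A B a)) :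
    D = D' := by
  letI : Module A N := Module.compHom N (algebraMap A B)
  haveI : IsScalarTower A B N := ⟨fun a b n => by
    change (a • b) • n = algebraMap A B a • b • n
    rw [Algebra.smul_def, mul_smul]⟩
  let E : Derivation A B N := Derivation.mk' ⟨(D - D' : Derivation k B N).toLinearMap.toAddHom, by
    intro a b
    change (D - D') (a • b) = a • (D - D') b
    rw [Algebra.smul_def, Derivation.leibniz]
    have : (D - D') (algebraMap A B a) = 0 := by simp [h]
    rw [this, smul_zero, add_zero]; rfl⟩ (fun a b => (D - D').leibniz a b)
  have hE : E = 0 := by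
    rw [← E.liftKaehlerDifferential_comp, Subsingleton.elim E.liftKaehlerDifferential 0]
    ext; simp
  ext b
  have := congr($hE b)
  change (D - D') b = 0 at this
  simpa [sub_eq_zero] using this

/-! ### Normality in codimension one and derivations of affine domains -/

/-- Let `p` be a prime of a normal Noetherian domain `R` with `p x ⊆ R` for some fraction `x ∉ R`.
Then `p R_p` is principal, generated by some `c ∈ p`: the element `u ∉ p` clears denominators. -/
theorem exists_mul_subset_span {R K : Type*} [CommRing R] [IsDomain R]
    [IsNoetherianRing R] [IsIntegrallyClosed R] [Field K] [Algebra R K] [IsFractionRing R K]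
    (p : Ideal R) [p.IsPrime] (x : K) (hx : x ∉ (algebraMap R K).range)
    (hpx : ∀ c ∈ p, algebraMap R K c * x ∈ (algebraMap R K).range) :
    ∃ c ∈ p, ∃ u ∉ p, ∀ d ∈ p, ∃ e, u * d = c * e := by
  by_cases hp : p = ⊥
  · subst hp
    exact ⟨0, rfl, 1, by simp, fun d hd => ⟨0, by simpa using hd⟩⟩
  have hinj := IsFractionRing.injective R K
  by_contra hcon
  push Not at hcon
  apply hx
  let N : Submodule R K := Submodule.map (Algebra.linearMap R K) p
  have hinteg : IsIntegral R x := by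
    refine isIntegral_of_smul_mem_submodule (R := R) (A := K) (M := K) N ?_ ?_ x ?_
    · intro h
      apply hp
      rw [eq_bot_iff] at h ⊢
      intro a ha
      have : algebraMap R K a ∈ (⊥ : Submodule R K) := h ⟨a, ha, rfl⟩
      exact hinj (by simpa using this)
    · exact (IsNoetherian.noetherian p).map _
    · rintro _ ⟨c, hc, rfl⟩
      obtain ⟨v, hv⟩ := hpx c hc
      have hvp : v ∈ p := by
        by_contra hvp
        obtain ⟨d, hd, hd'⟩ := hcon c hc v hvp
        obtain ⟨w, hw⟩ := hpx d hd
        apply hd' w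
        apply hinj
        rw [map_mul, map_mul, hv, hw]; ring
      exact ⟨v, hvp, by rw [Algebra.linearMap_apply, Algebra.linearMap_apply, hv, smul_eq_mul,
        mul_comm]⟩
  obtain ⟨y, hy⟩ := IsIntegrallyClosed.isIntegral_iff.1 hinteg
  exact ⟨y, hy⟩

/-- Krull's intersection theorem in the localization at `p`. -/
theorem exists_pow_ne {R : Type*} [CommRing R] [IsDomain R] [IsNoetherianRing R]
    (p : Ideal R) [p.IsPrime] {a : R} (ha : a ≠ 0) :
    ∃ n, ∀ u ∉ p, u * a ∉ p ^ n := by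
  by_contra hcon
  push Not at hcon
  apply ha
  have hinj : Function.Injective (algebraMap R (Localization.AtPrime p)) :=
    IsLocalization.injective _ p.primeCompl_le_nonZeroDivisors
  have : algebraMap R (Localization.AtPrime p) a ∈
      (⨅ i, (IsLocalRing.maximalIdeal (Localization.AtPrime p)) ^ i :
        Ideal (Localization.AtPrime p)) := by
    rw [Ideal.mem_iInf]
    intro n
    obtain ⟨u, hu, hua⟩ := hcon n
    rw [← Localization.AtPrime.map_eq_maximalIdeal, ← Ideal.map_pow]
    have := Ideal.mem_map_of_mem (algebraMap R (Localization.AtPrime p)) hua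
    rw [map_mul] at this
    exact (Ideal.unit_mul_mem_iff_mem _
      (IsLocalization.map_units (Localization.AtPrime p) (⟨u, hu⟩ : p.primeCompl))).1 this
  rw [Ideal.iInf_pow_eq_bot_of_isLocalRing _ (IsLocalRing.maximalIdeal.isMaximal _).ne_top] at this
  exact hinj (by simpa using this)

section DVR
variable {R : Type*} [CommRing R] [IsDomain R] [IsNoetherianRing R]
    {p : Ideal R} [p.IsPrime] {c u : R}

/-- If `p R_p` is generated by `c`, every nonzero element is a unit of `R_p` times a power of `c`. -/
theorem exists_eq_unit_mul_pow (hc : c ∈ p) (hu : u ∉ p) (h : ∀ d ∈ p, ∃ e, u * d = c * e)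
    {a : R} (ha : a ≠ 0) : ∃ m, ∃ t ∉ p, ∃ t' ∉ p, t * a = t' * c ^ m := by
  by_contra hcon
  push Not at hcon
  have key : ∀ n : ℕ, ∃ b, u ^ n * a = b * c ^ n := by
    intro n
    induction n with
    | zero => exact ⟨a, by simp⟩
    | succ n ih =>
      obtain ⟨b, hb⟩ := ih
      have hbp : b ∈ p := by
        by_contra hbp
        exact hcon n (u ^ n) (fun hh => hu (Ideal.IsPrime.mem_of_pow_mem ‹_› n hh)) b hbp hb
      obtain ⟨e, he⟩ := h b hbp
      exact ⟨e, by rw [pow_succ', mul_assoc, hb, ← mul_assoc, he]; ring⟩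
  obtain ⟨n, hn⟩ := exists_pow_ne p ha
  obtain ⟨b, hb⟩ := key n
  apply hn (u ^ n) (fun hh => hu (Ideal.IsPrime.mem_of_pow_mem ‹_› n hh))
  rw [hb]
  exact Ideal.mul_mem_left _ _ (Ideal.pow_mem_pow hc n)

/-- If `p R_p` is principal, then `p` is minimal among the nonzero primes. -/
theorem eq_of_le_of_ne_bot (hc : c ∈ p) (hu : u ∉ p) (h : ∀ d ∈ p, ∃ e, u * d = c * e)
    {q : Ideal R} [q.IsPrime] (hq : q ≤ p) (hq0 : q ≠ ⊥) : q = p := by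
  obtain ⟨a, ha, ha0⟩ := Submodule.exists_mem_ne_zero_of_ne_bot hq0
  obtain ⟨m, t, ht, t', ht', hta⟩ := exists_eq_unit_mul_pow hc hu h ha0
  have h1 : t' * c ^ m ∈ q := hta ▸ Ideal.mul_mem_left _ _ ha
  have hcq : c ∈ q := Ideal.IsPrime.mem_of_pow_mem ‹_› m
    ((Ideal.IsPrime.mem_or_mem ‹q.IsPrime› h1).resolve_left fun hh => ht' (hq hh))
  refine le_antisymm hq fun d hd => ?_
  obtain ⟨e, he⟩ := h d hd
  exact (Ideal.IsPrime.mem_or_mem ‹q.IsPrime› (he ▸ Ideal.mul_mem_right _ _ hcq :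
    u * d ∈ q)).resolve_left fun hh => hu (hq hh)

end DVR

/-- Derivations of an algebraic extension of domains vanish in characteristic zero: differentiate an
annihilating polynomial of least degree. -/
theorem Derivation.eq_zero_of_isAlgebraic {B C : Type*} [CommRing B] [CommRing C] [IsDomain C]
    [Algebra B C] [FaithfulSMul B C] [CharZero B] [Algebra.IsAlgebraic B C]
    (D : Derivation B C C) : D = 0 := by
  haveI : IsDomain B := (FaithfulSMul.algebraMap_injective B C).isDomain _
  ext z
  obtain ⟨q₀, hq₀, hz₀⟩ := Algebra.IsAlgebraic.isAlgebraic (R := B) z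
  classical
  have hex : ∃ n, ∃ q : Polynomial B, q ≠ 0 ∧ Polynomial.aeval z q = 0 ∧ q.natDegree = n :=
    ⟨_, q₀, hq₀, hz₀, rfl⟩
  obtain ⟨q, hq, hz, hn⟩ := Nat.find_spec hex
  have hdeg : q.natDegree ≠ 0 := by
    intro h0
    rw [Polynomial.eq_C_of_natDegree_eq_zero h0, Polynomial.aeval_C] at hz
    apply hq
    rw [Polynomial.eq_C_of_natDegree_eq_zero h0,
      (map_eq_zero_iff _ (FaithfulSMul.algebraMap_injective B C)).1 hz, map_zero]
  have hd : Polynomial.aeval z (Polynomial.derivative q) ≠ 0 := by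
    intro h0
    refine Nat.find_min hex (m := (Polynomial.derivative q).natDegree) ?_ ⟨_, ?_, h0, rfl⟩
    · rw [← hn]; exact Polynomial.natDegree_derivative_lt hdeg
    · intro h
      exact hdeg (Polynomial.derivative_eq_zero.1 h)
  have := D.map_aeval q z
  rw [hz, map_zero, smul_eq_mul, zero_eq_mul] at this
  simpa using this.resolve_left hd

/-- A field extension that is not algebraic has a non-zero derivation (characteristic zero). -/
theorem exists_derivation_ne_zero {k K : Type*} [Field k] [CharZero k] [Field K] [Algebra k K]
    [Algebra.EssFiniteType k K] (h : ¬ Algebra.IsAlgebraic k K) :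
    ∃ D : Derivation k K K, D ≠ 0 := by
  by_contra hcon
  push Not at hcon
  apply h
  have : Subsingleton (Ω[K⁄k]) := by
    rw [subsingleton_iff_forall_eq 0]
    intro w
    rw [← Module.forall_dual_apply_eq_zero_iff K w]
    intro φ
    have h0 : φ = 0 := by
      apply (Derivation.liftKaehlerDifferential_unique)
      rw [hcon (φ.compDer (KaehlerDifferential.D k K)),
        hcon ((0 : Ω[K⁄k] →ₗ[K] K).compDer (KaehlerDifferential.D k K))]
    rw [h0]; rfl
  have : Algebra.FormallyUnramified k K := ⟨this⟩
  have := Algebra.FormallyUnramified.isSeparable k K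
  infer_instance

/-- Division of a derivation by a non-zero element of a domain. -/
theorem Derivation.exists_div {k R : Type*} [CommRing k] [CommRing R] [IsDomain R] [Algebra k R]
    (D : Derivation k R R) {c : R} (hc : c ≠ 0) (h : ∀ r, c ∣ D r) :
    ∃ D' : Derivation k R R, ∀ r, c * D' r = D r := by
  choose e he using h
  refine ⟨Derivation.mk' ⟨⟨e, fun x y => mul_left_cancel₀ hc ?_⟩, fun a x =>
    mul_left_cancel₀ hc ?_⟩ fun x y => mul_left_cancel₀ hc ?_, fun r => (he r).symm⟩
  · rw [mul_add, ← he, ← he, ← he, map_add]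
  · simp only [RingHom.id_apply]
    rw [mul_smul_comm, ← he, ← he, map_smul]
  · change c * e (x * y) = c * (x • e y + y • e x)
    rw [mul_add, mul_smul_comm, mul_smul_comm, ← he, ← he, ← he, D.leibniz]

/-- A derivation of the fraction field of a finitely generated domain maps the domain into itself
after multiplication by a non-zero element. -/
theorem Derivation.exists_restrict {k R K : Type*} [Field k] [CommRing R] [IsDomain R]
    [Algebra k R] [Algebra.FiniteType k R] [Field K] [Algebra R K] [IsFractionRing R K]
    [Algebra k K] [IsScalarTower k R K] (D : Derivation k K K) :
    ∃ f : R, f ≠ 0 ∧ ∃ D' : Derivation k R R,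
      ∀ r, algebraMap R K (D' r) = algebraMap R K f * D (algebraMap R K r) := by
  have hinj := IsFractionRing.injective R K
  obtain ⟨s, hs⟩ := (Algebra.FiniteType.out : (⊤ : Subalgebra k R).FG)
  classical
  obtain ⟨⟨f, hf⟩, hfs⟩ := IsLocalization.exist_integer_multiples_of_finset (nonZeroDivisors R)
    (s.image fun r => D (algebraMap R K r))
  have key : ∀ r, algebraMap R K f * D (algebraMap R K r) ∈ (algebraMap R K).range := by
    intro r
    have hr : r ∈ Algebra.adjoin k (s : Set R) := hs ▸ Algebra.mem_top
    induction hr using Algebra.adjoin_induction with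
    | mem x hx =>
      obtain ⟨y, hy⟩ := hfs _ (Finset.mem_image_of_mem _ hx)
      exact ⟨y, by rw [hy]; simp [Algebra.smul_def]⟩
    | algebraMap c =>
      rw [← IsScalarTower.algebraMap_apply, Derivation.map_algebraMap, mul_zero]
      exact Subring.zero_mem _
    | add x y _ _ hx hy =>
      rw [map_add, map_add, mul_add]; exact Subring.add_mem _ hx hy
    | mul x y _ _ hx hy =>
      rw [map_mul, Derivation.leibniz, mul_add]
      refine Subring.add_mem _ ?_ ?_
      · rw [smul_eq_mul, mul_left_comm]; exact Subring.mul_mem _ ⟨x, rfl⟩ hy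
      · rw [smul_eq_mul, mul_left_comm]; exact Subring.mul_mem _ ⟨y, rfl⟩ hx
  choose e he using key
  refine ⟨f, nonZeroDivisors.ne_zero hf, Derivation.mk' ⟨⟨e, fun x y => hinj ?_⟩, fun a x =>
    hinj ?_⟩ fun x y => hinj ?_, he⟩
  · rw [map_add, he, he, he, map_add, map_add, mul_add]
  · simp only [RingHom.id_apply]
    rw [algebraMap.smul, he, he, algebraMap.smul, map_smul, mul_smul_comm]
  · change algebraMap R K (e (x * y)) = algebraMap R K (x • e y + y • e x)
    rw [map_add, smul_eq_mul, smul_eq_mul, map_mul, map_mul, he, he, he, map_mul, D.leibniz]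
    simp only [smul_eq_mul]; ring

/-- Let `p` be a prime of an affine domain in characteristic zero such that `p R_p` is generated by
`c ≠ 0`. Then some derivation of `R` moves `c` outside `p`. Indeed, lifting a transcendence basis of
`R ⧸ p` to elements `Y i` of `R`, there is a derivation killing all `Y i` with some value outside `p`;
if it mapped `c` into `p`, it would induce a derivation of `R ⧸ p` killing a transcendence basis,
which has to be zero. -/
theorem exists_derivation_not_mem {k R : Type*} [Field k] [CharZero k] [CommRing R] [IsDomain R]
    [Algebra k R] [Algebra.FiniteType k R] {p : Ideal R} [p.IsPrime] {c u : R} (hc0 : c ≠ 0)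
    (hc : c ∈ p) (hu : u ∉ p) (h : ∀ d ∈ p, ∃ e, u * d = c * e) :
    ∃ D : Derivation k R R, D c ∉ p := by
  haveI : IsNoetherianRing R := Algebra.FiniteType.isNoetherianRing k R
  obtain ⟨ι, y, hy⟩ := exists_isTranscendenceBasis' k (R ⧸ p)
  choose Y hY using fun i => Ideal.Quotient.mk_surjective (y i)
  let K := FractionRing R
  have hinj := IsFractionRing.injective R K
  -- a derivation of `R` that kills the `Y i`
  obtain ⟨D₁, hD₁, hD₁Y⟩ : ∃ D : Derivation k R R, D ≠ 0 ∧ ∀ i, D (Y i) = 0 := by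
    let YK : ι → K := fun i => algebraMap R K (Y i)
    let k₁ := IntermediateField.adjoin k (Set.range YK)
    have hna : ¬ Algebra.IsAlgebraic k₁ K := by
      intro halg
      have h1 : IsAlgebraic k₁ (algebraMap R K c) := Algebra.IsAlgebraic.isAlgebraic _
      let B := Algebra.adjoin k (Set.range YK)
      have h2 : IsAlgebraic B (algebraMap R K c) := by
        open scoped IntermediateField.algebraAdjoinAdjoin in
        exact (IsFractionRing.isAlgebraic_iff B k₁ K).2 h1
      obtain ⟨q, hq0, hq⟩ := h2.exists_nonzero_coeff_and_aeval_eq_zero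
        (mem_nonZeroDivisors_of_ne_zero ((map_ne_zero_iff _ hinj).2 hc0))
      -- every element of `B` comes from a polynomial in the `Y i`
      have hB : ∀ b : B, ∃ f : MvPolynomial ι k,
          (b : K) = algebraMap R K (MvPolynomial.aeval Y f) := by
        intro b
        have : (b : K) ∈ Algebra.adjoin k (Set.range YK) := b.2
        rw [Algebra.adjoin_range_eq_range_aeval] at this
        obtain ⟨f, hf⟩ := this
        exact ⟨f, hf.symm.trans (MvPolynomial.aeval_algebraMap_apply K Y f)⟩
      choose g hg using hB
      have h3 : MvPolynomial.aeval Y (g (q.coeff 0)) ∈ p := by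
        have : ∃ z : R, MvPolynomial.aeval Y (g (q.coeff 0)) = c * z := by
          have hsum : Polynomial.aeval (algebraMap R K c) q =
              algebraMap R K (MvPolynomial.aeval Y (g (q.coeff 0)) +
                c * ∑ i ∈ Finset.range q.natDegree,
                  MvPolynomial.aeval Y (g (q.coeff (i + 1))) * c ^ i) := by
            rw [Polynomial.aeval_eq_sum_range, Finset.sum_range_succ', map_add, map_mul, map_sum,
              Finset.mul_sum, add_comm]
            congr 1
            · rw [← hg]; simp [Algebra.smul_def]
            · refine Finset.sum_congr rfl fun i _ => ?_
              rw [map_mul, ← hg, map_pow, Algebra.smul_def]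
              change ((q.coeff (i + 1) : B) : K) * _ = _
              ring
          rw [hq] at hsum
          have := hinj (hsum.symm.trans (map_zero _).symm)
          exact ⟨-∑ i ∈ Finset.range q.natDegree,
            MvPolynomial.aeval Y (g (q.coeff (i + 1))) * c ^ i, by linear_combination this⟩
        obtain ⟨z, hz⟩ := this
        rw [hz]; exact Ideal.mul_mem_right _ _ hc
      have h4 : MvPolynomial.aeval y (g (q.coeff 0)) = 0 := by
        rw [← Ideal.Quotient.eq_zero_iff_mem] at h3
        rw [← h3, ← Ideal.Quotient.algebraMap_eq, ← MvPolynomial.aeval_algebraMap_apply]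
        congr 2
        exact funext fun i => (hY i).symm
      have h5 : g (q.coeff 0) = 0 := by
        have := hy.1
        rw [algebraicIndependent_iff] at this
        exact this _ h4
      apply hq0
      ext
      rw [hg, h5]; simp
    haveI : Algebra.EssFiniteType k₁ K := Algebra.EssFiniteType.of_comp k k₁ K
    obtain ⟨D₀, hD₀⟩ := exists_derivation_ne_zero hna
    obtain ⟨f, hf, D', hD'⟩ := Derivation.exists_restrict (R := R) (D₀.restrictScalars k)
    refine ⟨D', ?_, ?_⟩
    · intro h0
      apply hD₀
      have hR : ∀ r : R, D₀ (algebraMap R K r) = 0 := by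
        intro r
        have := hD' r
        rw [h0] at this
        simpa [hf] using this.symm
      ext x
      obtain ⟨a, b, hb, rfl⟩ := IsFractionRing.div_surjective (A := R) x
      have hb' : algebraMap R K b ≠ 0 := (map_ne_zero_iff _ hinj).2 (nonZeroDivisors.ne_zero hb)
      have := D₀.leibniz (algebraMap R K b) (algebraMap R K a / algebraMap R K b)
      rw [mul_div_cancel₀ _ hb', hR, hR, smul_zero, add_zero, smul_eq_mul, zero_eq_mul] at this
      simpa using this.resolve_left hb'
    · intro i
      apply hinj
      rw [hD']
      have : algebraMap R K (Y i) = algebraMap k₁ K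
          ⟨YK i, IntermediateField.subset_adjoin _ _ ⟨i, rfl⟩⟩ := rfl
      rw [this]
      change _ * D₀ _ = _
      rw [Derivation.map_algebraMap]; simp
  -- divide by a uniformizer until the values leave `p`
  obtain ⟨D, hDY, r₀, hr₀⟩ : ∃ D : Derivation k R R, (∀ i, D (Y i) = 0) ∧ ∃ r, D r ∉ p := by
    by_contra hcon
    push Not at hcon
    obtain ⟨r, hr⟩ : ∃ r, D₁ r ≠ 0 := by
      by_contra hh
      push Not at hh
      exact hD₁ (Derivation.ext hh)
    have key : ∀ n : ℕ, ∃ D : Derivation k R R, (∀ i, D (Y i) = 0) ∧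
        c ^ n * D r = u ^ n * D₁ r := by
      intro n
      induction n with
      | zero => exact ⟨D₁, hD₁Y, by simp⟩
      | succ n ih =>
        obtain ⟨D, hDY, hD⟩ := ih
        obtain ⟨D', hD'⟩ := (u • D).exists_div hc0 (fun r => by
          obtain ⟨e, he⟩ := h (D r) (hcon D hDY r)
          exact ⟨e, he⟩)
        refine ⟨D', fun i => mul_left_cancel₀ hc0 ?_, ?_⟩
        · rw [hD', Derivation.smul_apply, hDY]; simp
        · rw [pow_succ, mul_assoc, hD', Derivation.smul_apply, smul_eq_mul, mul_left_comm, hD]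
          ring
    obtain ⟨n, hn⟩ := exists_pow_ne p hr
    obtain ⟨D, -, hD⟩ := key n
    apply hn (u ^ n) (fun hh => hu (Ideal.IsPrime.mem_of_pow_mem ‹_› n hh))
    rw [← hD]
    exact Ideal.mul_mem_right _ _ (Ideal.pow_mem_pow hc n)
  refine ⟨D, fun hDc => hr₀ ?_⟩
  have hDp : ∀ d ∈ p, D d ∈ p := by
    intro d hd
    obtain ⟨e, he⟩ := h d hd
    have h1 := congr(D $he)
    rw [D.leibniz, D.leibniz] at h1
    have h2 : u * D d ∈ p := by
      have : u * D d = c • D e + e • D c - d • D u := by rw [← h1]; simp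
      rw [this]
      exact p.sub_mem (p.add_mem (Ideal.mul_mem_right _ _ hc) (Ideal.mul_mem_left _ _ hDc))
        (Ideal.mul_mem_right _ _ hd)
    exact (Ideal.IsPrime.mem_or_mem ‹_› h2).resolve_left hu
  -- the induced derivation of `R ⧸ p` is linear over the algebra generated by the `y i`
  let B := Algebra.adjoin k (Set.range y)
  have hDB : ∀ b ∈ B, ∀ r, Ideal.Quotient.mk p r = b → D r ∈ p := by
    intro b hb
    induction hb using Algebra.adjoin_induction with
    | mem x hx =>
      obtain ⟨i, rfl⟩ := hx
      intro r hr
      rw [← hY i, Ideal.Quotient.eq] at hr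
      have := hDp _ hr
      rwa [map_sub, hDY, sub_zero] at this
    | algebraMap a =>
      intro r hr
      have : Ideal.Quotient.mk p r = Ideal.Quotient.mk p (algebraMap k R a) := hr
      rw [Ideal.Quotient.eq] at this
      have := hDp _ this
      rwa [map_sub, Derivation.map_algebraMap, sub_zero] at this
    | add x z _ _ hx hz =>
      intro r hr
      obtain ⟨r₁, rfl⟩ := Ideal.Quotient.mk_surjective x
      obtain ⟨r₂, rfl⟩ := Ideal.Quotient.mk_surjective z
      rw [← map_add, Ideal.Quotient.eq] at hr
      have := hDp _ hr
      rw [map_sub, map_add] at this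
      simpa using p.add_mem this (p.add_mem (hx _ rfl) (hz _ rfl))
    | mul x z _ _ hx hz =>
      intro r hr
      obtain ⟨r₁, rfl⟩ := Ideal.Quotient.mk_surjective x
      obtain ⟨r₂, rfl⟩ := Ideal.Quotient.mk_surjective z
      rw [← map_mul, Ideal.Quotient.eq] at hr
      have := hDp _ hr
      rw [map_sub, D.leibniz] at this
      simpa using p.add_mem this
        (p.add_mem (p.mul_mem_left r₁ (hz _ rfl)) (p.mul_mem_left r₂ (hx _ rfl)))
  let L : (R ⧸ p) →+ (R ⧸ p) := QuotientAddGroup.map _ _ (D : R →+ R) (by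
    intro d hd; exact hDp d hd)
  have hL : ∀ r, L (Ideal.Quotient.mk p r) = Ideal.Quotient.mk p (D r) := fun r => rfl
  have hLmul : ∀ a b, L (a * b) = a • L b + b • L a := by
    intro a b
    obtain ⟨a, rfl⟩ := Ideal.Quotient.mk_surjective a
    obtain ⟨b, rfl⟩ := Ideal.Quotient.mk_surjective b
    rw [← map_mul, hL, hL, hL, D.leibniz]; simp
  let Dbar : Derivation B (R ⧸ p) (R ⧸ p) := Derivation.mk' ⟨⟨L, map_add L⟩, by
    intro b x
    change L (b • x) = b • L x
    obtain ⟨r, hr⟩ := Ideal.Quotient.mk_surjective (b : R ⧸ p)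
    have h0 : L (b : R ⧸ p) = 0 := by
      rw [← hr, hL, Ideal.Quotient.eq_zero_iff_mem]; exact hDB _ b.2 _ hr
    rw [Algebra.smul_def, hLmul]
    change (b : R ⧸ p) • L x + x • L (b : R ⧸ p) = _
    rw [h0, smul_zero, add_zero]; rfl⟩ hLmul
  haveI : Algebra.IsAlgebraic B (R ⧸ p) := hy.isAlgebraic
  haveI : CharZero B := charZero_of_injective_algebraMap (algebraMap k B).injective
  have := Dbar.eq_zero_of_isAlgebraic
  have h0 : Dbar (Ideal.Quotient.mk p r₀) = 0 := by rw [this]; rfl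
  change L (Ideal.Quotient.mk p r₀) = 0 at h0
  rwa [hL, Ideal.Quotient.eq_zero_iff_mem] at h0

/-! ### Derivation-stable ideals of power series and derivations of tensor products -/

open TensorProduct

/-- A non-zero ideal of a power series ring in characteristic zero that is stable under all partial
derivatives is the unit ideal. -/
theorem MvPowerSeries.eq_top_of_pderiv_mem {k σ : Type*} [Field k] [CharZero k]
    (J : Ideal (MvPowerSeries σ k)) (hJ : ∀ i, ∀ f ∈ J, MvPowerSeries.pderiv k i f ∈ J)
    (h0 : J ≠ ⊥) : J = ⊤ := by
  have key : ∀ n : ℕ, ∀ f ∈ J, ∀ d : σ →₀ ℕ, d.degree = n → MvPowerSeries.coeff d f ≠ 0 →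
      J = ⊤ := by
    intro n
    induction n with
    | zero =>
      intro f hf d hd hfd
      rw [Finsupp.degree_eq_zero_iff] at hd
      subst hd
      refine Ideal.eq_top_of_isUnit_mem _ hf (MvPowerSeries.isUnit_iff_constantCoeff.2 ?_)
      exact isUnit_iff_ne_zero.2 (by simpa using hfd)
    | succ n ih =>
      intro f hf d hd hfd
      obtain ⟨i, hi⟩ : ∃ i, d i ≠ 0 := by
        by_contra hcon
        push Not at hcon
        have : d = 0 := Finsupp.ext hcon
        simp [this] at hd
      have hd' : d - Finsupp.single i 1 + Finsupp.single i 1 = d := by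
        ext j
        by_cases hj : j = i
        · subst hj; simp; omega
        · simp [Finsupp.single_apply, Ne.symm hj]
      refine ih _ (hJ i f hf) (d - Finsupp.single i 1) ?_ ?_
      · have := congrArg Finsupp.degree hd'
        rw [map_add, Finsupp.degree_single] at this
        omega
      · rw [MvPowerSeries.coeff_pderiv, hd']
        refine mul_ne_zero hfd ?_
        norm_cast
  obtain ⟨f, hf, hf0⟩ := Submodule.exists_mem_ne_zero_of_ne_bot h0
  obtain ⟨d, hd⟩ : ∃ d, MvPowerSeries.coeff d f ≠ 0 := by
    by_contra hcon
    push Not at hcon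
    exact hf0 (MvPowerSeries.ext hcon)
  exact key _ f hf d rfl hd

/-- In a reduced Artinian ring every element generates the same ideal as an idempotent. -/
theorem exists_idempotent_eq_mul {E : Type*} [CommRing E] [IsArtinianRing E] [IsReduced E]
    (z : E) : ∃ e w, e * e = e ∧ e * z = z ∧ e = z * w := by
  classical
  let φ := IsArtinianRing.equivPi E
  letI : ∀ I : MaximalSpectrum E, Field (E ⧸ I.asIdeal) := fun I => Ideal.Quotient.field _
  let w : (I : MaximalSpectrum E) → E ⧸ I.asIdeal := fun I => (φ z I)⁻¹
  refine ⟨z * φ.symm w, φ.symm w, ?_, ?_, rfl⟩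
  · apply φ.injective
    rw [map_mul, map_mul, AlgEquiv.apply_symm_apply]
    funext I
    by_cases hz : φ z I = 0 <;> simp [w, hz]
  · apply φ.injective
    rw [map_mul, map_mul, AlgEquiv.apply_symm_apply]
    funext I
    by_cases hz : φ z I = 0 <;> simp [w, hz]

section Abstract

variable {k A Ah Φ K : Type*} [Field k] [CommRing A] [Algebra k A]
  [CommRing Ah] [Algebra k Ah] [Algebra A Ah]
  [Field Φ] [Algebra Ah Φ] [IsFractionRing Ah Φ] [Algebra A Φ] [IsScalarTower A Ah Φ]
  [Algebra k Φ] [IsScalarTower k A Φ] [IsScalarTower k Ah Φ]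
  [Field K] [Algebra A K] [Algebra k K] [IsScalarTower k A K]

/-- Let `Ah` be an `A`-algebra with fraction field `Φ` to which the derivations `dA i` of `A` extend
as `dAh i`. If `K` is formally étale over `A`, a derivation `D` of `K` that is expressed on `A`
through the `dA i` by the chain rule extends to `Φ ⊗[A] K`, following the same rule on `Ah`. -/
theorem exists_derivation_tensor {ι : Type*} [Fintype ι] [Algebra.FormallyEtale A K]
    (x : ι → A) (dA : ι → Derivation k A A) (dAh : ι → Derivation k Ah Ah)
    (hd : ∀ i a, dAh i (algebraMap A Ah a) = algebraMap A Ah (dA i a))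
    (D : Derivation k K K) (hD : ∀ a, D (algebraMap A K a) = ∑ i, dA i a • D (algebraMap A K (x i))) :
    ∃ D' : Derivation k (Φ ⊗[A] K) (Φ ⊗[A] K), (∀ y : K, D' (1 ⊗ₜ y) = 1 ⊗ₜ D y) ∧
      ∀ α : Ah, D' (algebraMap Ah Φ α ⊗ₜ 1) =
        ∑ i, algebraMap Ah Φ (dAh i α) ⊗ₜ[A] D (algebraMap A K (x i)) := by
  haveI : Algebra.FormallyEtale Ah Φ := Algebra.FormallyEtale.of_isLocalization (nonZeroDivisors Ah)
  haveI : Algebra.FormallyEtale Ah (Φ ⊗[A] K) := Algebra.FormallyEtale.comp Ah Φ _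
  let D₀ : Derivation k Ah (Φ ⊗[A] K) := Derivation.mk'
    { toFun := fun α => ∑ i, algebraMap Ah Φ (dAh i α) ⊗ₜ[A] D (algebraMap A K (x i))
      map_add' := fun α β => by simp [TensorProduct.add_tmul, Finset.sum_add_distrib]
      map_smul' := fun c α => by
        simp only [RingHom.id_apply, Finset.smul_sum]
        refine Finset.sum_congr rfl fun i _ => ?_
        rw [Derivation.map_smul, algebraMap.smul, TensorProduct.smul_tmul'] }
    (fun α β => by
      change ∑ i, _ = α • (∑ i, _) + β • (∑ i, _)
      rw [Finset.smul_sum, Finset.smul_sum, ← Finset.sum_add_distrib]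
      refine Finset.sum_congr rfl fun i _ => ?_
      rw [Derivation.leibniz, map_add, TensorProduct.add_tmul, TensorProduct.smul_tmul',
        TensorProduct.smul_tmul']
      simp [Algebra.smul_def])
  obtain ⟨D', hD'⟩ := D₀.exists_extension (B := Φ ⊗[A] K)
  refine ⟨D', ?_, hD'⟩
  letI : Algebra K (Φ ⊗[A] K) := Algebra.TensorProduct.rightAlgebra
  have hsm : ∀ (y : K) (t : Φ ⊗[A] K), y • t = (1 ⊗ₜ y) * t := fun y t => Algebra.smul_def _ _
  let D₁ : Derivation k K (Φ ⊗[A] K) := Derivation.mk'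
    { toFun := fun y => D' (1 ⊗ₜ y)
      map_add' := fun α β => by rw [TensorProduct.tmul_add, map_add]
      map_smul' := fun c α => by
        rw [RingHom.id_apply, ← D'.map_smul]; congr 1
        rw [← algebraMap_smul A c α, ← TensorProduct.smul_tmul, TensorProduct.smul_tmul',
          algebraMap_smul] }
    (fun α β => by
      change D' (1 ⊗ₜ (α * β)) = α • D' _ + β • D' _
      have h1 : (1 : Φ) ⊗ₜ[A] (α * β) = (1 ⊗ₜ α) * (1 ⊗ₜ β) := by simp
      rw [hsm, hsm, h1, D'.leibniz, smul_eq_mul, smul_eq_mul])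
  let D₂ : Derivation k K (Φ ⊗[A] K) := Derivation.mk'
    { toFun := fun y => 1 ⊗ₜ D y
      map_add' := fun α β => by rw [map_add, TensorProduct.tmul_add]
      map_smul' := fun c α => by
        rw [RingHom.id_apply, D.map_smul]
        rw [← algebraMap_smul A c (D α), ← TensorProduct.smul_tmul, TensorProduct.smul_tmul',
          algebraMap_smul] }
    (fun α β => by
      change 1 ⊗ₜ D _ = α • (1 ⊗ₜ D _) + β • (1 ⊗ₜ D _)
      rw [hsm, hsm, D.leibniz, TensorProduct.tmul_add]
      simp)
  have h12 : D₁ = D₂ := by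
    refine Derivation.eq_of_formallyUnramified (A := A) _ _ fun a => ?_
    change D' (1 ⊗ₜ algebraMap A K a) = 1 ⊗ₜ D (algebraMap A K a)
    have h1 : (1 : Φ) ⊗ₜ[A] algebraMap A K a = algebraMap Ah (Φ ⊗[A] K) (algebraMap A Ah a) := by
      rw [Algebra.TensorProduct.algebraMap_apply, ← IsScalarTower.algebraMap_apply A Ah Φ,
        Algebra.algebraMap_eq_smul_one, Algebra.algebraMap_eq_smul_one, TensorProduct.smul_tmul]
    rw [h1, hD', hD, TensorProduct.tmul_sum]
    change ∑ i, _ = _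
    refine Finset.sum_congr rfl fun i _ => ?_
    rw [hd, ← IsScalarTower.algebraMap_apply A Ah Φ, Algebra.algebraMap_eq_smul_one,
      TensorProduct.smul_tmul]
  intro y
  exact congr($h12 y)

end Abstract

/-! ### Spans inside `Φ ⊗[A] K` -/

section Span

variable {A K : Type*} (Ah Φ : Type*) [CommRing A] [CommRing Ah] [Algebra A Ah]
  [Field Φ] [Algebra Ah Φ] [Algebra A Φ] [IsScalarTower A Ah Φ] [Field K] [Algebra A K]

/-- The `Ah`-submodule of `Φ ⊗[A] K` spanned by (the image of) an `A`-submodule `N` of `K`. When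
`Ah` is flat over `A` this is a copy of `Ah ⊗[A] N`. -/
def tensorSpan (N : Submodule A K) : Submodule Ah (Φ ⊗[A] K) :=
  Submodule.span Ah ((fun y : K => (1 : Φ) ⊗ₜ[A] y) '' N)

variable {Ah Φ}

theorem tmul_mem_tensorSpan {N : Submodule A K} {y : K} (hy : y ∈ N) (α : Ah) :
    algebraMap Ah Φ α ⊗ₜ[A] y ∈ tensorSpan Ah Φ N := by
  have : algebraMap Ah Φ α ⊗ₜ[A] y = α • ((1 : Φ) ⊗ₜ[A] y) := by
    rw [TensorProduct.smul_tmul', Algebra.algebraMap_eq_smul_one]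
  rw [this]
  exact Submodule.smul_mem _ _ (Submodule.subset_span ⟨y, hy, rfl⟩)

theorem mul_tmul_mem_tensorSpan {N : Submodule A K} {y : K} (hy : ∀ x ∈ N, x * y ∈ N) (α : Ah)
    {t : Φ ⊗[A] K} (ht : t ∈ tensorSpan Ah Φ N) :
    t * (algebraMap Ah Φ α ⊗ₜ[A] y) ∈ tensorSpan Ah Φ N := by
  induction ht using Submodule.span_induction with
  | mem t ht =>
    obtain ⟨x, hx, rfl⟩ := ht
    simp only [Algebra.TensorProduct.tmul_mul_tmul, one_mul]
    exact tmul_mem_tensorSpan (hy x hx) α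
  | zero => rw [zero_mul]; exact Submodule.zero_mem _
  | add s t _ _ hs ht => rw [add_mul]; exact Submodule.add_mem _ hs ht
  | smul β t _ ht => rw [smul_mul_assoc]; exact Submodule.smul_mem _ _ ht

/-- The extended derivations preserve `tensorSpan Ah Φ N` as soon as `D` preserves `N` and
multiplication by the values of `D` on the coordinates does. -/
theorem tensorSpan_derivation_mem {k ι : Type*} [Field k] [Algebra k Φ] [Algebra k A]
    [IsScalarTower k A Φ] [Algebra k K] [Fintype ι]
    (d : ι → Ah → Ah) (y : ι → K) (D : K → K)
    (D' : Derivation k (Φ ⊗[A] K) (Φ ⊗[A] K)) (hD : ∀ y : K, D' (1 ⊗ₜ y) = 1 ⊗ₜ D y)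
    (hD' : ∀ α : Ah, D' (algebraMap Ah Φ α ⊗ₜ 1) = ∑ i, algebraMap Ah Φ (d i α) ⊗ₜ[A] y i)
    {N : Submodule A K} (hN : ∀ x ∈ N, D x ∈ N) (hNy : ∀ i, ∀ x ∈ N, x * y i ∈ N)
    {t : Φ ⊗[A] K} (ht : t ∈ tensorSpan Ah Φ N) : D' t ∈ tensorSpan Ah Φ N := by
  induction ht using Submodule.span_induction with
  | mem t ht =>
    obtain ⟨x, hx, rfl⟩ := ht
    simp only [hD]
    exact Submodule.subset_span ⟨_, hN x hx, rfl⟩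
  | zero => rw [map_zero]; exact Submodule.zero_mem _
  | add s t _ _ hs ht => rw [map_add]; exact Submodule.add_mem _ hs ht
  | smul β t ht ht' =>
    have : β • t = (algebraMap Ah Φ β ⊗ₜ[A] 1) * t := by
      rw [Algebra.smul_def, Algebra.TensorProduct.algebraMap_apply]
    rw [this, D'.leibniz, hD', smul_eq_mul, smul_eq_mul, Finset.mul_sum]
    refine Submodule.add_mem _ ?_ (Submodule.sum_mem _ fun i _ => ?_)
    · have : (algebraMap Ah Φ β ⊗ₜ[A] (1 : K)) * D' t = β • D' t := by
        rw [Algebra.smul_def, Algebra.TensorProduct.algebraMap_apply]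
      rw [this]; exact Submodule.smul_mem _ _ ht'
    · exact mul_tmul_mem_tensorSpan (hNy i) _ ht

/-- Elements of `Φ ⊗[A] K` have denominators in `Ah`, provided elements of `K` have denominators
in `A` relative to `N`. -/
theorem exists_smul_mem_tensorSpan [IsDomain Ah] [IsFractionRing Ah Φ] [FaithfulSMul A Ah]
    {N : Submodule A K} (hN : ∀ y : K, ∃ a : A, a ≠ 0 ∧ a • y ∈ N) (t : Φ ⊗[A] K) :
    ∃ α : Ah, α ≠ 0 ∧ α • t ∈ tensorSpan Ah Φ N := by
  induction t with
  | zero => exact ⟨1, one_ne_zero, by rw [smul_zero]; exact Submodule.zero_mem _⟩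
  | tmul φ y =>
    obtain ⟨β, γ, hγ, rfl⟩ := IsFractionRing.div_surjective (A := Ah) φ
    obtain ⟨a, ha, hay⟩ := hN y
    refine ⟨γ * algebraMap A Ah a, mul_ne_zero (nonZeroDivisors.ne_zero hγ)
      ((map_ne_zero_iff _ (FaithfulSMul.algebraMap_injective A Ah)).2 ha), ?_⟩
    have hγ' : algebraMap Ah Φ γ ≠ 0 :=
      (map_ne_zero_iff _ (IsFractionRing.injective Ah Φ)).2 (nonZeroDivisors.ne_zero hγ)
    have : (γ * algebraMap A Ah a) • ((algebraMap Ah Φ β / algebraMap Ah Φ γ) ⊗ₜ[A] y) =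
        algebraMap Ah Φ β ⊗ₜ[A] (a • y) := by
      rw [← TensorProduct.smul_tmul, TensorProduct.smul_tmul', Algebra.smul_def, Algebra.smul_def,
        map_mul, ← IsScalarTower.algebraMap_apply A Ah Φ]
      congr 1
      field_simp
    rw [this]
    exact tmul_mem_tensorSpan hay β
  | add s t hs ht =>
    obtain ⟨α, hα, hs⟩ := hs
    obtain ⟨β, hβ, ht⟩ := ht
    refine ⟨α * β, mul_ne_zero hα hβ, ?_⟩
    rw [smul_add]
    refine Submodule.add_mem _ ?_ ?_
    · rw [mul_comm, mul_smul]; exact Submodule.smul_mem _ _ hs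
    · rw [mul_smul]; exact Submodule.smul_mem _ _ ht

/-- The comparison map `Ah ⊗[A] K → Φ ⊗[A] K`. -/
noncomputable abbrev tensorIncl (A Ah Φ K : Type*) [CommRing A] [CommRing Ah] [Algebra A Ah]
    [Field Φ] [Algebra Ah Φ] [Algebra A Φ] [IsScalarTower A Ah Φ] [Field K] [Algebra A K] :
    Ah ⊗[A] K →ₗ[A] Φ ⊗[A] K :=
  LinearMap.rTensor K (IsScalarTower.toAlgHom A Ah Φ).toLinearMap

theorem mem_tensorSpan_iff {N : Submodule A K} {t : Φ ⊗[A] K} :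
    t ∈ tensorSpan Ah Φ N ↔
      ∃ s : Ah ⊗[A] N, tensorIncl A Ah Φ K (LinearMap.lTensor Ah N.subtype s) = t := by
  constructor
  · intro ht
    induction ht using Submodule.span_induction with
    | mem t ht =>
      obtain ⟨x, hx, rfl⟩ := ht
      exact ⟨1 ⊗ₜ ⟨x, hx⟩, by simp⟩
    | zero => exact ⟨0, by simp⟩
    | add s t _ _ hs ht =>
      obtain ⟨s', rfl⟩ := hs
      obtain ⟨t', rfl⟩ := ht
      exact ⟨s' + t', by rw [map_add, map_add]⟩
    | smul β t hmem ht =>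
      obtain ⟨t', rfl⟩ := ht
      clear hmem
      refine ⟨β • t', ?_⟩
      induction t' with
      | zero => simp
      | tmul α y => simp [TensorProduct.smul_tmul', Algebra.smul_def]
      | add s t hs ht => rw [smul_add, map_add, map_add, hs, ht, map_add, map_add, smul_add]
  · rintro ⟨s, rfl⟩
    induction s with
    | zero => simp
    | tmul α y => exact tmul_mem_tensorSpan y.2 α
    | add s t hs ht => rw [map_add, map_add]; exact Submodule.add_mem _ hs ht

theorem tensorIncl_injective [IsDomain Ah] [IsFractionRing Ah Φ] [Module.Flat A K] :
    Function.Injective (tensorIncl A Ah Φ K) :=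
  Module.Flat.rTensor_preserves_injective_linearMap _ (IsFractionRing.injective Ah Φ)

theorem tmul_one_mul_tensorIncl (c : K) (s : Ah ⊗[A] K) :
    ((1 : Φ) ⊗ₜ[A] c) * tensorIncl A Ah Φ K s =
      tensorIncl A Ah Φ K (LinearMap.lTensor Ah (LinearMap.mulLeft A c) s) := by
  induction s with
  | zero => simp
  | tmul α y => simp
  | add s t hs ht => rw [map_add, mul_add, map_add, map_add, hs, ht]

/-- Flatness of `Ah` over `A`: torsion of `Ah ⊗ K / Ah ⊗ N` comes from torsion of `K / N`. -/
theorem exists_mul_mem_of_tensorSpan {R : Type*} [CommRing R] [IsNoetherianRing R] [Algebra R K]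
    [IsDomain Ah] [IsFractionRing Ah Φ] [Module.Flat A K] [Module.Flat A Ah]
    (N : Submodule A K) (hN : ∀ c : R, ∀ y ∈ N, algebraMap R K c * y ∈ N) (p : Ideal R)
    (t : Φ ⊗[A] K) (ht : t ∈ tensorSpan Ah Φ (⊤ : Submodule A K)) (htN : t ∉ tensorSpan Ah Φ N)
    (hpt : ∀ c ∈ p, ((1 : Φ) ⊗ₜ[A] algebraMap R K c) * t ∈ tensorSpan Ah Φ N) :
    ∃ x : K, x ∉ N ∧ ∀ c ∈ p, algebraMap R K c * x ∈ N := by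
  by_contra hcon
  push Not at hcon
  obtain ⟨s, hs⟩ := mem_tensorSpan_iff.1 ht
  set s' := LinearMap.lTensor Ah (⊤ : Submodule A K).subtype s
  obtain ⟨m, c, hc⟩ := Submodule.fg_iff_exists_fin_generating_family.1 (IsNoetherian.noetherian p)
  let μ : R → (K ⧸ N) →ₗ[A] (K ⧸ N) := fun r =>
    N.mapQ N (LinearMap.mulLeft A (algebraMap R K r)) (fun y hy => hN r y hy)
  have hexact := lTensor_exact Ah (f := N.subtype) (g := N.mkQ)
    (by intro x; simp) N.mkQ_surjective
  have hinj := tensorIncl_injective (A := A) (Ah := Ah) (Φ := Φ) (K := K)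
  have hπ : ∀ s : Ah ⊗[A] K, LinearMap.lTensor Ah N.mkQ s = 0 ↔
      tensorIncl A Ah Φ K s ∈ tensorSpan Ah Φ N := by
    intro s
    rw [hexact s, mem_tensorSpan_iff]
    exact ⟨fun ⟨u, hu⟩ => ⟨u, by rw [hu]⟩, fun ⟨u, hu⟩ => ⟨u, hinj hu⟩⟩
  apply htN
  rw [← hs, ← hπ]
  let ψ : (K ⧸ N) →ₗ[A] (Fin m → K ⧸ N) := LinearMap.pi fun i => μ (c i)
  have hψ : Function.Injective ψ := by
    rw [injective_iff_map_eq_zero]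
    intro x hx
    obtain ⟨x, rfl⟩ := N.mkQ_surjective x
    by_contra hx0
    have hxN : x ∉ N := fun h => hx0 (by simpa using h)
    obtain ⟨d, hd, hdx⟩ := hcon x hxN
    apply hdx
    clear hdx
    rw [← hc] at hd
    induction hd using Submodule.span_induction with
    | mem d hd =>
      obtain ⟨i, rfl⟩ := hd
      have : N.mkQ (algebraMap R K (c i) * x) = 0 := congrFun hx i
      simpa using this
    | zero => simp
    | add a b _ _ ha hb => rw [map_add, add_mul]; exact N.add_mem ha hb
    | smul a b _ hb => rw [smul_eq_mul, map_mul, mul_assoc]; exact hN _ _ hb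
  have hψ' := Module.Flat.lTensor_preserves_injective_linearMap (M := Ah) ψ hψ
  apply hψ'
  rw [map_zero]
  apply (TensorProduct.piRight A A Ah (fun _ : Fin m => K ⧸ N)).injective
  rw [map_zero]
  funext i
  have hcomp : ∀ v : Ah ⊗[A] K, TensorProduct.piRight A A Ah (fun _ : Fin m => K ⧸ N)
      (LinearMap.lTensor Ah ψ (LinearMap.lTensor Ah N.mkQ v)) i =
      LinearMap.lTensor Ah N.mkQ
        (LinearMap.lTensor Ah (LinearMap.mulLeft A (algebraMap R K (c i))) v) := by
    intro v
    induction v with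
    | zero => simp
    | tmul α y => simp [ψ, μ]; rfl
    | add s t hs ht => simp only [map_add, Pi.add_apply, hs, ht]
  rw [hcomp, Pi.zero_apply, hπ, ← tmul_one_mul_tensorIncl, hs]
  exact hpt _ (hc ▸ Submodule.subset_span ⟨i, rfl⟩)

end Span

/-! ### Idempotents of `k[[x]] ⊗ R` for normal `R` -/

/-- A proper ideal `d` of a Noetherian ring has an associated prime `(d : s)`. -/
theorem Ideal.exists_isPrime_colon {R : Type*} [CommRing R] [IsNoetherianRing R] {d : Ideal R}
    (hd : d ≠ ⊤) : ∃ (s : R) (p : Ideal R), p.IsPrime ∧ d ≤ p ∧ ∀ c, c ∈ p ↔ c * s ∈ d := by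
  have hcol : ∀ s c, c ∈ d.colon {s} ↔ c * s ∈ d := fun s c => by
    rw [Submodule.mem_colon_singleton, smul_eq_mul]
  obtain ⟨p, ⟨s, hs, rfl⟩, hmax⟩ := set_has_maximal_iff_noetherian.2 ‹IsNoetherianRing R›
    {I : Ideal R | ∃ s ∉ d, I = d.colon {s}}
    ⟨_, 1, fun h => hd ((Ideal.eq_top_iff_one _).2 h), rfl⟩
  refine ⟨s, d.colon {s}, ⟨?_, ?_⟩, fun c hc => (hcol s c).2 (d.mul_mem_right _ hc), hcol s⟩
  · intro h
    apply hs
    have := (hcol s 1).1 (h ▸ Submodule.mem_top)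
    rwa [one_mul] at this
  · intro a b hab
    by_contra hcon
    push Not at hcon
    -- maximality forces `(d : b * s) = (d : s)`
    have hbs : b * s ∉ d := fun h => hcon.2 ((hcol s b).2 h)
    refine hmax _ ⟨b * s, hbs, rfl⟩ (lt_of_le_of_ne ?_ ?_)
    · intro c hc
      rw [hcol] at hc ⊢
      rw [mul_left_comm]
      exact d.mul_mem_left _ hc
    · intro h
      apply hcon.1
      rw [h, hcol, ← mul_assoc]
      exact (hcol _ _).1 hab

/-- Elements of the `Ah`-span of `K` have denominators already in the base ring `A`. -/
theorem exists_base_smul_mem_tensorSpan {A Ah Φ K : Type*} [CommRing A] [IsDomain A] [CommRing Ah]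
    [Algebra A Ah] [Field Φ] [Algebra Ah Φ] [Algebra A Φ] [IsScalarTower A Ah Φ] [Field K]
    [Algebra A K] {N : Submodule A K} (hN : ∀ y : K, ∃ a : A, a ≠ 0 ∧ a • y ∈ N)
    {t : Φ ⊗[A] K} (ht : t ∈ tensorSpan Ah Φ (⊤ : Submodule A K)) :
    ∃ a : A, a ≠ 0 ∧ a • t ∈ tensorSpan Ah Φ N := by
  have hsm : ∀ (a : A) {t : Φ ⊗[A] K}, t ∈ tensorSpan Ah Φ N → a • t ∈ tensorSpan Ah Φ N := by
    intro a t ht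
    rw [← algebraMap_smul Ah a t]
    exact Submodule.smul_mem _ _ ht
  induction ht using Submodule.span_induction with
  | mem t ht =>
    obtain ⟨y, -, rfl⟩ := ht
    obtain ⟨a, ha, hay⟩ := hN y
    refine ⟨a, ha, ?_⟩
    rw [← TensorProduct.tmul_smul]
    exact Submodule.subset_span ⟨_, hay, rfl⟩
  | zero => exact ⟨1, one_ne_zero, by rw [smul_zero]; exact Submodule.zero_mem _⟩
  | add s t _ _ hs ht =>
    obtain ⟨a, ha, hs⟩ := hs
    obtain ⟨b, hb, ht⟩ := ht
    refine ⟨a * b, mul_ne_zero ha hb, ?_⟩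
    rw [smul_add]
    refine Submodule.add_mem _ ?_ ?_
    · rw [mul_comm, mul_smul]; exact hsm _ hs
    · rw [mul_smul]; exact hsm _ ht
  | smul β t _ ht =>
    obtain ⟨a, ha, ht⟩ := ht
    refine ⟨a, ha, ?_⟩
    rw [smul_comm]
    exact Submodule.smul_mem _ _ ht

/-- Derivations vanish on idempotents. -/
theorem Derivation.idempotent_eq_zero {k E : Type*} [CommRing k] [CommRing E] [Algebra k E]
    (D : Derivation k E E) {e : E} (he : e * e = e) : D e = 0 := by
  have h1 : D e = e * D e + e * D e := by
    conv_lhs => rw [← he, D.leibniz, smul_eq_mul]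
  have h2 : e * D e = 0 := by
    have := congr(e * $h1)
    rw [mul_add, ← mul_assoc, he] at this
    simpa using this
  rw [h1, h2, add_zero]

/-- The chain rule for a derivation on polynomials. -/
theorem Derivation.mvPolynomial_apply {k K σ : Type*} [Field k] [Fintype σ] [Field K]
    [Algebra (MvPolynomial σ k) K] [Algebra k K] [IsScalarTower k (MvPolynomial σ k) K]
    (D : Derivation k K K) (a : MvPolynomial σ k) :
    D (algebraMap _ K a) =
      ∑ i : σ, MvPolynomial.pderiv i a •
        D (algebraMap (MvPolynomial σ k) K (MvPolynomial.X i)) := by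
  classical
  let D₁ : Derivation k (MvPolynomial σ k) K := D.compAlgebraMap (MvPolynomial σ k)
  let D₂ : Derivation k (MvPolynomial σ k) K := ∑ i : σ,
    (LinearMap.toSpanSingleton (MvPolynomial σ k) K
      (D (algebraMap (MvPolynomial σ k) K (MvPolynomial.X i)))).compDer (MvPolynomial.pderiv i)
  have happ : ∀ a, D₂ a = ∑ i : σ, MvPolynomial.pderiv i a •
      D (algebraMap (MvPolynomial σ k) K (MvPolynomial.X i)) := by
    intro a
    change (∑ i, _ : Derivation k (MvPolynomial σ k) K) a = _
    rw [← Derivation.coeFnAddMonoidHom_apply, map_sum, Finset.sum_apply]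
    rfl
  have : D₁ = D₂ := by
    refine MvPolynomial.derivation_ext fun i => ?_
    rw [happ]
    simp [D₁, MvPolynomial.pderiv_X, Pi.single_apply, Finset.sum_ite_eq]
  rw [← happ, ← this]; rfl

section
variable {A R : Type*} [CommRing A] [IsDomain A] [CharZero A] [CommRing R] [IsDomain R]
  [Algebra A R] [Module.Finite A R] [FaithfulSMul A R]

theorem formallyEtale_fractionRing : Algebra.FormallyEtale A (FractionRing R) := by
  letI : Algebra (FractionRing A) (FractionRing R) := FractionRing.liftAlgebra A (FractionRing R)
  haveI : CharZero (FractionRing A) := charZero_of_injective_algebraMap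
    (IsFractionRing.injective A (FractionRing A))
  haveI : Algebra.IsAlgebraic R (FractionRing R) :=
    IsLocalization.isAlgebraic (FractionRing R) (nonZeroDivisors R)
  haveI : Algebra.IsAlgebraic (FractionRing A) (FractionRing R) :=
    (IsFractionRing.comap_isAlgebraic_iff (A := A) (K := FractionRing A)).1
      (Algebra.IsAlgebraic.trans A R (FractionRing R))
  haveI : Algebra.FormallyEtale (FractionRing A) (FractionRing R) :=
    Algebra.FormallyEtale.of_isSeparable _ _
  haveI : Algebra.FormallyEtale A (FractionRing A) :=
    Algebra.FormallyEtale.of_isLocalization (nonZeroDivisors A)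
  exact Algebra.FormallyEtale.comp A (FractionRing A) (FractionRing R)

theorem flat_fractionRing : Module.Flat A (FractionRing R) := by
  letI : Algebra (FractionRing A) (FractionRing R) := FractionRing.liftAlgebra A (FractionRing R)
  exact Module.Flat.trans A (FractionRing A) (FractionRing R)

/-- Fractions of a finite extension `R` of `A` have denominators in `A`. -/
theorem exists_smul_mem_range {K : Type*} [Field K] [Algebra R K] [IsFractionRing R K]
    [Algebra A K] [IsScalarTower A R K] (y : K) :
    ∃ a : A, a ≠ 0 ∧ ∃ r : R, algebraMap R K r = a • y := by
  obtain ⟨b, c, hc, rfl⟩ := IsFractionRing.div_surjective (A := R) y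
  have hc0 := nonZeroDivisors.ne_zero hc
  obtain ⟨a, ha, r, hr⟩ : ∃ a : A, a ≠ 0 ∧ ∃ r : R, algebraMap A R a = c * r := by
    have : IsAlgebraic A c := Algebra.IsAlgebraic.isAlgebraic c
    obtain ⟨a, ha, h⟩ := this.exists_nonzero_dvd hc
    exact ⟨a, ha, h⟩
  refine ⟨a, ha, r * b, ?_⟩
  have : algebraMap R K c ≠ 0 :=
    (map_ne_zero_iff _ (IsFractionRing.injective R K)).2 hc0
  rw [Algebra.smul_def, IsScalarTower.algebraMap_apply A R, hr, map_mul, map_mul]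
  field_simp
end

instance {k : Type*} [Field k] (h : ℕ) : IsDomain (MvPowerSeries (Fin h) k) :=
  NoZeroDivisors.to_isDomain _

instance {k : Type*} [Field k] (h : ℕ) :
    Module.Flat (MvPolynomial (Fin h) k) (MvPowerSeries (Fin h) k) := by
  haveI := AdicCompletion.flat_of_isNoetherian (MvPolynomial.idealOfVars (Fin h) k)
  exact Module.Flat.of_linearEquiv (MvPowerSeries.toAdicCompletionAlgEquiv (Fin h) k).toLinearEquiv

instance {k : Type*} [Field k] (h : ℕ) :
    FaithfulSMul (MvPolynomial (Fin h) k) (MvPowerSeries (Fin h) k) :=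
  (faithfulSMul_iff_algebraMap_injective _ _).2 (MvPolynomial.coe_injective _ _)

/-- Idempotents of `k[[x]] ⊗ R` for a normal domain `R` finite over `k[x]`: up to a nonzero power
series `α`, the element `z` generates an ideal generated by an idempotent `e` of `k[[x]] ⊗ R` itself.
This replaces the theorem that complete local rings of a normal variety are domains.

Such an idempotent exists in the reduced Artinian ring `Φ ⊗ K` formed from the fraction fields.
Derivations kill idempotents, so the ideal of power series `α` with `α e` in the span of `K` is
stable under partial derivatives, hence is the unit ideal. Likewise the ideal `d` of denominators
of `e` in `R` is stable under the derivations of `R`; if `d` were proper, an associated prime of `d`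
would have a principal localization by normality, and a derivation moving its generator `c` outside
the prime would lower the least exponent `m` with `c ^ m` in the localization of `d`. -/
theorem exists_idempotent_tensor_aux {k R : Type*} [Field k] [CharZero k] {h : ℕ} [CommRing R]
    [IsDomain R] [IsIntegrallyClosed R] [Algebra k R] [Algebra (MvPolynomial (Fin h) k) R]
    [IsScalarTower k (MvPolynomial (Fin h) k) R] [Module.Finite (MvPolynomial (Fin h) k) R]
    [FaithfulSMul (MvPolynomial (Fin h) k) R]
    {Φ K : Type*} [Field Φ] [Algebra (MvPowerSeries (Fin h) k) Φ]
    [IsFractionRing (MvPowerSeries (Fin h) k) Φ] [Algebra (MvPolynomial (Fin h) k) Φ]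
    [IsScalarTower (MvPolynomial (Fin h) k) (MvPowerSeries (Fin h) k) Φ] [Algebra k Φ]
    [IsScalarTower k (MvPolynomial (Fin h) k) Φ] [IsScalarTower k (MvPowerSeries (Fin h) k) Φ]
    [Field K] [Algebra R K] [IsFractionRing R K] [Algebra (MvPolynomial (Fin h) k) K]
    [IsScalarTower (MvPolynomial (Fin h) k) R K] [Algebra k K] [IsScalarTower k R K]
    [IsScalarTower k (MvPolynomial (Fin h) k) K]
    [Algebra.FormallyEtale (MvPolynomial (Fin h) k) K] [Module.Flat (MvPolynomial (Fin h) k) K]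
    (z : MvPowerSeries (Fin h) k ⊗[MvPolynomial (Fin h) k] R) :
    ∃ (e w : MvPowerSeries (Fin h) k ⊗[MvPolynomial (Fin h) k] R) (α : MvPowerSeries (Fin h) k),
      e * e = e ∧ e * z = z ∧ α ≠ 0 ∧ α • e = z * w := by
  let A := MvPolynomial (Fin h) k
  let Ah := MvPowerSeries (Fin h) k
  haveI : Algebra.FiniteType k R := Algebra.FiniteType.trans (S := A) inferInstance inferInstance
  haveI : IsNoetherianRing R := Algebra.FiniteType.isNoetherianRing k R
  haveI : Algebra.EssFiniteType R K := .of_isLocalization K (nonZeroDivisors R)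
  haveI : Algebra.EssFiniteType A K := .comp A R K
  haveI : Algebra.EssFiniteType Φ (Φ ⊗[A] K) := .baseChange A K Φ
  haveI : Module.Finite Φ (Φ ⊗[A] K) := Algebra.FormallyUnramified.finite_of_free Φ _
  haveI : IsArtinianRing (Φ ⊗[A] K) := IsArtinianRing.of_finite Φ _
  haveI : IsReduced (Φ ⊗[A] K) := Algebra.FormallyUnramified.isReduced_of_field Φ _
  have hinjR := IsFractionRing.injective R K
  let N : Submodule A K := LinearMap.range (IsScalarTower.toAlgHom A R K).toLinearMap
  have hNden : ∀ y : K, ∃ a : A, a ≠ 0 ∧ a • y ∈ N := by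
    intro y
    obtain ⟨a, ha, r, hr⟩ := exists_smul_mem_range (A := A) (R := R) y
    exact ⟨a, ha, r, hr⟩
  let j : Ah ⊗[A] R →ₐ[Ah] Φ ⊗[A] K :=
    Algebra.TensorProduct.map (Algebra.ofId Ah Φ) (IsScalarTower.toAlgHom A R K)
  have hj : ∀ s, j s = tensorIncl A Ah Φ K
      (LinearMap.lTensor Ah (IsScalarTower.toAlgHom A R K).toLinearMap s) := by
    intro s
    induction s with
    | zero => simp
    | tmul α r => rfl
    | add s t hs ht => rw [map_add, hs, ht, map_add, map_add]
  have hjinj : Function.Injective j := by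
    intro s t hst
    rw [hj, hj] at hst
    exact Module.Flat.lTensor_preserves_injective_linearMap _ hinjR (tensorIncl_injective hst)
  have hjrange : ∀ t ∈ tensorSpan Ah Φ N, ∃ s, j s = t := by
    intro t ht
    change t ∈ j.toLinearMap.range
    revert t
    change tensorSpan Ah Φ N ≤ _
    refine Submodule.span_le.2 ?_
    rintro _ ⟨_, ⟨r, rfl⟩, rfl⟩
    exact ⟨1 ⊗ₜ r, by simp [j]⟩
  -- extension of derivations to `Φ ⊗ K`
  have hder := fun D : Derivation k K K => exists_derivation_tensor (k := k) (A := A) (Ah := Ah)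
    (Φ := Φ) (K := K) (ι := Fin h) MvPolynomial.X MvPolynomial.pderiv
    (fun i => MvPowerSeries.pderiv k i) (fun i a => MvPowerSeries.pderiv_coe a) D
    (Derivation.mvPolynomial_apply D)
  obtain ⟨e, w, hee, hez, hew⟩ := exists_idempotent_eq_mul (j z)
  -- `e` has coefficients in `K`
  have heK : e ∈ tensorSpan Ah Φ (⊤ : Submodule A K) := by
    let J : Ideal Ah := Submodule.comap (LinearMap.toSpanSingleton Ah _ e)
      (tensorSpan Ah Φ (⊤ : Submodule A K))
    have hJtop : J = ⊤ := by
      refine MvPowerSeries.eq_top_of_pderiv_mem J ?_ ?_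
      · intro i α hα
        obtain ⟨D, hD⟩ := Derivation.exists_extension (B := K)
          (((Algebra.linearMap A K)).compDer (MvPolynomial.pderiv (R := k) i))
        obtain ⟨D', hD'1, hD'2⟩ := hder D
        have h1 : D' (α • e) ∈ tensorSpan Ah Φ (⊤ : Submodule A K) :=
          tensorSpan_derivation_mem (fun i => MvPowerSeries.pderiv k i) _ D D' hD'1 hD'2
            (fun _ _ => Submodule.mem_top) (fun _ _ _ => Submodule.mem_top) hα
        have h2 : α • e = (algebraMap Ah Φ α ⊗ₜ[A] (1 : K)) * e := by
          rw [Algebra.smul_def, Algebra.TensorProduct.algebraMap_apply]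
        rw [h2, D'.leibniz, D'.idempotent_eq_zero hee, smul_zero, zero_add, hD'2] at h1
        have hX : ∀ i', D (algebraMap A K (MvPolynomial.X i')) = if i' = i then 1 else 0 := by
          intro i'
          rw [hD]
          change algebraMap A K (MvPolynomial.pderiv i (MvPolynomial.X i' : MvPolynomial (Fin h) k))
            = _
          rw [MvPolynomial.pderiv_X, Pi.single_apply]
          split_ifs <;> simp
        have h3 : ∑ i', algebraMap Ah Φ (MvPowerSeries.pderiv k i' α) ⊗ₜ[A]
            D (algebraMap A K (MvPolynomial.X i')) =
            algebraMap Ah Φ (MvPowerSeries.pderiv k i α) ⊗ₜ[A] (1 : K) := by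
          rw [Finset.sum_eq_single i]
          · rw [hX, if_pos rfl]
          · intro i' _ hi'
            rw [hX, if_neg hi', TensorProduct.tmul_zero]
          · simp
        rw [h3, smul_eq_mul, mul_comm] at h1
        change MvPowerSeries.pderiv k i α • e ∈ tensorSpan Ah Φ (⊤ : Submodule A K)
        rwa [Algebra.smul_def, Algebra.TensorProduct.algebraMap_apply]
      · obtain ⟨α, hα, h1⟩ := exists_smul_mem_tensorSpan (Ah := Ah) (Φ := Φ)
          (N := (⊤ : Submodule A K)) (fun y => ⟨1, one_ne_zero, trivial⟩) e
        intro h0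
        have : α ∈ J := h1
        rw [h0] at this
        exact hα (by simpa using this)
    have : (1 : Ah) ∈ J := hJtop ▸ trivial
    have : (1 : Ah) • e ∈ tensorSpan Ah Φ (⊤ : Submodule A K) := this
    rwa [one_smul] at this
  -- `e` has coefficients in `R`; `d` is its denominator ideal
  have heN : e ∈ tensorSpan Ah Φ N := by
    let d : Ideal R :=
      { carrier := {c | ((1 : Φ) ⊗ₜ[A] algebraMap R K c) * e ∈ tensorSpan Ah Φ N}
        add_mem' := fun {a b} ha hb => by
          change _ * e ∈ tensorSpan Ah Φ N
          rw [map_add, TensorProduct.tmul_add, add_mul]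
          exact Submodule.add_mem _ ha hb
        zero_mem' := by
          change _ * e ∈ tensorSpan Ah Φ N
          rw [map_zero, TensorProduct.tmul_zero, zero_mul]
          exact Submodule.zero_mem _
        smul_mem' := fun c a ha => by
          change _ * e ∈ tensorSpan Ah Φ N
          have h1 : (1 : Φ) ⊗ₜ[A] algebraMap R K (c • a) * e =
              ((1 : Φ) ⊗ₜ[A] algebraMap R K a * e) *
                (algebraMap Ah Φ 1 ⊗ₜ[A] algebraMap R K c) := by
            have : (1 : Φ) ⊗ₜ[A] algebraMap R K (c • a) =
                (1 ⊗ₜ[A] algebraMap R K a) * (1 ⊗ₜ[A] algebraMap R K c) := by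
              simp [mul_comm]
            rw [this, map_one]; ring
          rw [h1]
          refine mul_tmul_mem_tensorSpan ?_ _ ha
          rintro _ ⟨r, rfl⟩
          exact ⟨r * c, by simp⟩ }
    have hmemd : ∀ c, c ∈ d ↔ ((1 : Φ) ⊗ₜ[A] algebraMap R K c) * e ∈ tensorSpan Ah Φ N :=
      fun c => Iff.rfl
    have hdD : ∀ D : Derivation k R R, ∀ c ∈ d, D c ∈ d := by
      intro D c hc
      haveI : Algebra.FormallySmooth R K :=
        Algebra.FormallySmooth.of_isLocalization (nonZeroDivisors R)
      obtain ⟨DK, hDK⟩ := Derivation.exists_extension (B := K)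
        ((Algebra.linearMap R K).compDer D)
      have hDK' : ∀ r, DK (algebraMap R K r) = algebraMap R K (D r) := hDK
      obtain ⟨D', hD'1, hD'2⟩ := hder DK
      have h1 := tensorSpan_derivation_mem (fun i => MvPowerSeries.pderiv k i) _ DK D' hD'1 hD'2
        (N := N) (by rintro _ ⟨r, rfl⟩; exact ⟨D r, (hDK' r).symm⟩)
        (by
          rintro i _ ⟨r, rfl⟩
          refine ⟨r * D (algebraMap A R (MvPolynomial.X i)), ?_⟩
          rw [IsScalarTower.algebraMap_apply A R K, hDK']
          simp) ((hmemd c).1 hc)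
      rw [D'.leibniz, D'.idempotent_eq_zero hee, smul_zero, zero_add, hD'1, hDK', smul_eq_mul,
        mul_comm] at h1
      exact h1
    have hd0 : d ≠ ⊥ := by
      obtain ⟨a, ha, hae⟩ := exists_base_smul_mem_tensorSpan hNden heK
      have haR : algebraMap A R a ≠ 0 :=
        (map_ne_zero_iff _ (FaithfulSMul.algebraMap_injective A R)).2 ha
      intro h0
      apply haR
      rw [← Ideal.mem_bot, ← h0, hmemd, ← IsScalarTower.algebraMap_apply,
        Algebra.algebraMap_eq_smul_one, TensorProduct.tmul_smul, smul_mul_assoc,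
        ← Algebra.TensorProduct.one_def, one_mul]
      exact hae
    by_contra heN
    have hdtop : d ≠ ⊤ := by
      intro h
      apply heN
      have : (1 : R) ∈ d := h ▸ Submodule.mem_top
      rw [hmemd, map_one, ← Algebra.TensorProduct.one_def, one_mul] at this
      exact this
    obtain ⟨s, p, hp, hdp, hps⟩ := Ideal.exists_isPrime_colon hdtop
    obtain ⟨x, hxN, hx⟩ := exists_mul_mem_of_tensorSpan (Ah := Ah) (Φ := Φ) N
      (by rintro c _ ⟨r, rfl⟩; exact ⟨c * r, by simp⟩) p
      ((1 : Φ) ⊗ₜ[A] algebraMap R K s * e)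
      (by
        rw [mul_comm, ← map_one (algebraMap Ah Φ)]
        exact mul_tmul_mem_tensorSpan (fun _ _ => Submodule.mem_top) _ heK)
      (fun h => hp.ne_top ((Ideal.eq_top_iff_one _).2 ((hps 1).2 (by rw [one_mul]; exact h))))
      (fun c hc => by
        have := (hps c).1 hc
        rw [hmemd, map_mul] at this
        rw [← mul_assoc, Algebra.TensorProduct.tmul_mul_tmul, one_mul]
        exact this)
    obtain ⟨c, hc, u, hu, hcu⟩ := exists_mul_subset_span p x (fun ⟨r, hr⟩ => hxN ⟨r, hr⟩)
      (fun c hc => by obtain ⟨r, hr⟩ := hx c hc; exact ⟨r, hr⟩)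
    obtain ⟨a, had, ha0⟩ := Submodule.exists_mem_ne_zero_of_ne_bot hd0
    have hc0 : c ≠ 0 := by
      rintro rfl
      obtain ⟨f, hf⟩ := hcu a (hdp had)
      rw [zero_mul] at hf
      exact (mul_ne_zero (fun h : u = 0 => hu (h ▸ p.zero_mem)) ha0) hf
    obtain ⟨D, hD⟩ := exists_derivation_not_mem (k := k) hc0 hc hu hcu
    -- the least order of an element of `d` at `p` can be lowered by applying `D`
    have hex : ∃ m : ℕ, ∃ t' ∉ p, t' * c ^ m ∈ d := by
      obtain ⟨m, t, ht, t', ht', h⟩ := exists_eq_unit_mul_pow hc hu hcu ha0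
      exact ⟨m, t', ht', h ▸ d.mul_mem_left _ had⟩
    classical
    obtain ⟨t', ht', hm⟩ := Nat.find_spec hex
    rcases hmm : Nat.find hex with _ | m
    · rw [hmm, pow_zero, mul_one] at hm
      exact ht' (hdp hm)
    · rw [hmm] at hm
      refine Nat.find_min hex (m := m) (by omega) ⟨(m + 1 : ℕ) * t' * D c + c * D t', ?_, ?_⟩
      · intro h
        have h1 : (m + 1 : ℕ) * t' * D c ∈ p := by
          have := p.sub_mem h (p.mul_mem_right (D t') hc)
          rwa [add_sub_cancel_right] at this
        rcases hp.mem_or_mem h1 with h2 | h2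
        · rcases hp.mem_or_mem h2 with h3 | h3
          · apply hp.ne_top
            refine Ideal.eq_top_of_isUnit_mem _ h3 ?_
            have : IsUnit ((m + 1 : ℕ) : k) := isUnit_iff_ne_zero.2 (by norm_cast)
            simpa using this.map (algebraMap k R)
          · exact ht' h3
        · exact hD h2
      · have := hdD D _ hm
        rw [D.leibniz, D.leibniz_pow] at this
        convert this using 1
        simp only [smul_eq_mul, nsmul_eq_mul, Nat.add_sub_cancel]
        ring
  obtain ⟨e', he'⟩ := hjrange e heN
  obtain ⟨α, hα, hαw⟩ := exists_smul_mem_tensorSpan (Ah := Ah) hNden w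
  obtain ⟨w', hw'⟩ := hjrange _ hαw
  refine ⟨e', w', α, hjinj ?_, hjinj ?_, hα, hjinj ?_⟩
  · rw [map_mul, he', hee]
  · rw [map_mul, he', hez]
  · rw [map_smul, map_mul, he', hw', mul_smul_comm, ← hew]

/-- `exists_idempotent_tensor_aux` for the standard fraction fields. -/
theorem exists_idempotent_tensor {k R : Type*} [Field k] [CharZero k] {h : ℕ} [CommRing R]
    [IsDomain R] [IsIntegrallyClosed R] [Algebra k R] [Algebra (MvPolynomial (Fin h) k) R]
    [IsScalarTower k (MvPolynomial (Fin h) k) R] [Module.Finite (MvPolynomial (Fin h) k) R]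
    [FaithfulSMul (MvPolynomial (Fin h) k) R]
    (z : MvPowerSeries (Fin h) k ⊗[MvPolynomial (Fin h) k] R) :
    ∃ (e w : MvPowerSeries (Fin h) k ⊗[MvPolynomial (Fin h) k] R) (α : MvPowerSeries (Fin h) k),
      e * e = e ∧ e * z = z ∧ α ≠ 0 ∧ α • e = z * w := by
  haveI : Algebra.FormallyEtale (MvPolynomial (Fin h) k) (FractionRing R) :=
    formallyEtale_fractionRing
  haveI : Module.Flat (MvPolynomial (Fin h) k) (FractionRing R) := flat_fractionRing
  exact exists_idempotent_tensor_aux (Φ := FractionRing (MvPowerSeries (Fin h) k))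
    (K := FractionRing R) z

/-! ### Symbolic powers and truncated evaluation -/

/-- The `j`-th symbolic power of a prime ideal. -/
def Ideal.symb {S : Type*} [CommRing S] (Q : Ideal S) [hQ : Q.IsPrime] (j : ℕ) : Ideal S where
  carrier := {x | ∃ u ∉ Q, u * x ∈ Q ^ j}
  add_mem' := by
    rintro x y ⟨u, hu, hx⟩ ⟨v, hv, hy⟩
    refine ⟨u * v, fun h => (hQ.mem_or_mem h).elim hu hv, ?_⟩
    have : u * v * (x + y) = v * (u * x) + u * (v * y) := by ring
    rw [this]
    exact add_mem (Ideal.mul_mem_left _ _ hx) (Ideal.mul_mem_left _ _ hy)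
  zero_mem' := ⟨1, fun h => hQ.ne_top ((Ideal.eq_top_iff_one _).2 h), by simp⟩
  smul_mem' := by
    rintro c x ⟨u, hu, hx⟩
    refine ⟨u, hu, ?_⟩
    rw [smul_eq_mul, mul_left_comm]
    exact Ideal.mul_mem_left _ _ hx

section Symb

variable {S : Type*} [CommRing S] {Q : Ideal S} [hQ : Q.IsPrime]

theorem Ideal.mem_symb {j : ℕ} {x : S} : x ∈ Q.symb j ↔ ∃ u ∉ Q, u * x ∈ Q ^ j := Iff.rfl

theorem Ideal.pow_le_symb (j : ℕ) : Q ^ j ≤ Q.symb j := fun x hx =>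
  ⟨1, fun h => hQ.ne_top ((Ideal.eq_top_iff_one _).2 h), by simpa using hx⟩

theorem Ideal.symb_anti {i j : ℕ} (h : i ≤ j) : Q.symb j ≤ Q.symb i := fun _ ⟨u, hu, hx⟩ =>
  ⟨u, hu, Ideal.pow_le_pow_right h hx⟩

theorem Ideal.mem_symb_of_mul_mem {j : ℕ} {u x : S} (hu : u ∉ Q) (h : u * x ∈ Q.symb j) :
    x ∈ Q.symb j := by
  obtain ⟨v, hv, h⟩ := h
  exact ⟨v * u, fun h => (hQ.mem_or_mem h).elim hv hu, by rwa [mul_assoc]⟩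

theorem Ideal.symb_le {j : ℕ} (hj : j ≠ 0) : Q.symb j ≤ Q := fun _ ⟨_, hu, hx⟩ =>
  (hQ.mem_or_mem (Ideal.pow_le_self hj hx)).resolve_left hu

theorem Derivation.apply_mem_pow {k S : Type*} [CommRing k] [CommRing S] [Algebra k S]
    (D : Derivation k S S) (Q : Ideal S) (j : ℕ) : ∀ x ∈ Q ^ (j + 1), D x ∈ Q ^ j := by
  induction j with
  | zero => intro x _; simp
  | succ j ih =>
    intro x hx
    rw [pow_succ] at hx
    refine Submodule.mul_induction_on hx ?_ ?_
    · intro a ha b hb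
      rw [D.leibniz, smul_eq_mul, smul_eq_mul]
      refine add_mem (Ideal.mul_mem_right _ _ ha) ?_
      rw [pow_succ']
      exact Ideal.mul_mem_mul hb (ih a ha)
    · intro a b ha hb
      rw [map_add]
      exact add_mem ha hb

/-- A derivation lowers the order along a prime ideal by at most one. -/
theorem Derivation.apply_mem_symb {k : Type*} [CommRing k] [Algebra k S]
    (D : Derivation k S S) (j : ℕ) {x : S} (hx : x ∈ Q.symb (j + 1)) : D x ∈ Q.symb j := by
  obtain ⟨u, hu, hx⟩ := hx
  refine ⟨u * u, fun h => (hQ.mem_or_mem h).elim hu hu, ?_⟩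
  have h1 := D.apply_mem_pow Q j _ hx
  rw [D.leibniz, smul_eq_mul, smul_eq_mul] at h1
  have h2 : u * u * D x = u * (u * D x + x * D u) - (u * x) * D u := by ring
  rw [h2]
  exact sub_mem (Ideal.mul_mem_left _ _ h1)
    (Ideal.mul_mem_right _ _ (Ideal.pow_le_pow_right (Nat.le_succ j) hx))

/-- Artin–Rees for symbolic powers and a principal ideal. -/
theorem Ideal.exists_mem_symb_of_mul_mem [IsDomain S] [IsNoetherianRing S] {c : S} (hc : c ≠ 0)
    (j : ℕ) : ∃ i, ∀ x, c * x ∈ Q.symb i → x ∈ Q.symb j := by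
  obtain ⟨n, hn⟩ := Ideal.exists_pow_inf_eq_pow_smul Q (Ideal.span {c} : Ideal S)
  refine ⟨j + n, ?_⟩
  rintro x ⟨u, hu, hx⟩
  have h1 : u * (c * x) ∈ (Q ^ (j + n) • ⊤ ⊓ Ideal.span {c} : Ideal S) := by
    refine ⟨by simpa using hx, ?_⟩
    exact Ideal.mem_span_singleton'.2 ⟨u * x, by ring⟩
  rw [hn _ (by omega), Nat.add_sub_cancel] at h1
  have h2 : u * (c * x) ∈ Q ^ j * Ideal.span {c} :=
    Ideal.mul_mono_right (inf_le_right) h1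
  obtain ⟨y, hy, hyc⟩ := Ideal.mem_mul_span_singleton.1 h2
  refine ⟨u, hu, ?_⟩
  have : y = u * x := mul_right_cancel₀ hc (by rw [hyc]; ring)
  exact this ▸ hy

end Symb

section Trunc

variable {k R C : Type*} [Field k] {h : ℕ} [CommRing R] [CommRing C]
  [Algebra (MvPolynomial (Fin h) k) R] [Algebra (MvPolynomial (Fin h) k) C]

/-- The map `k[[x]] ⊗ R → C` induced by `R → C` when `C` is killed by the `j`-th power of the
ideal of the variables. -/
noncomputable def truncEval (φ : R →ₐ[MvPolynomial (Fin h) k] C) (j : ℕ)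
    (hj : ∀ a ∈ MvPolynomial.idealOfVars (Fin h) k ^ j, algebraMap (MvPolynomial (Fin h) k) C a = 0) :
    MvPowerSeries (Fin h) k ⊗[MvPolynomial (Fin h) k] R →ₐ[MvPolynomial (Fin h) k] C :=
  Algebra.TensorProduct.lift
    ((Ideal.Quotient.liftₐ (MvPolynomial.idealOfVars (Fin h) k ^ j)
      (Algebra.ofId (MvPolynomial (Fin h) k) C) hj).comp
      (MvPowerSeries.truncTotalAlgHom (Fin h) k j)) φ (fun _ _ => Commute.all _ _)

theorem truncEval_tmul (φ : R →ₐ[MvPolynomial (Fin h) k] C) (j : ℕ)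
    (hj : ∀ a ∈ MvPolynomial.idealOfVars (Fin h) k ^ j, algebraMap (MvPolynomial (Fin h) k) C a = 0)
    (f : MvPowerSeries (Fin h) k) (r : R) :
    truncEval φ j hj (f ⊗ₜ r) =
      algebraMap (MvPolynomial (Fin h) k) C (MvPowerSeries.truncTotal j f) * φ r := by
  rw [truncEval, Algebra.TensorProduct.lift_tmul]
  rfl

end Trunc

/-! ### Power series in symbolic powers -/

/-- A finitely generated field extension of `k` containing `k[x]` is formally smooth over `k[x]` in
characteristic zero. -/
theorem formallySmooth_field {k L : Type*} [Field k] [CharZero k] {h : ℕ} [Field L] [Algebra k L]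
    [Algebra.EssFiniteType k L]
    [Algebra (MvPolynomial (Fin h) k) L] [FaithfulSMul (MvPolynomial (Fin h) k) L]
    [IsScalarTower k (MvPolynomial (Fin h) k) L] :
    Algebra.FormallySmooth (MvPolynomial (Fin h) k) L := by
  letI : Algebra (FractionRing (MvPolynomial (Fin h) k)) L :=
    FractionRing.liftAlgebra (MvPolynomial (Fin h) k) L
  haveI : CharZero (FractionRing (MvPolynomial (Fin h) k)) := charZero_of_injective_algebraMap
    (IsFractionRing.injective (MvPolynomial (Fin h) k) _)
  haveI : Algebra.FormallySmooth (MvPolynomial (Fin h) k) (FractionRing (MvPolynomial (Fin h) k)) :=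
    Algebra.FormallySmooth.of_isLocalization (nonZeroDivisors (MvPolynomial (Fin h) k))
  haveI : Algebra.EssFiniteType (MvPolynomial (Fin h) k) L :=
    Algebra.EssFiniteType.of_comp k _ _
  haveI : Algebra.EssFiniteType (FractionRing (MvPolynomial (Fin h) k)) L :=
    Algebra.EssFiniteType.of_comp (MvPolynomial (Fin h) k) _ _
  haveI : Algebra.FormallySmooth (FractionRing (MvPolynomial (Fin h) k)) L :=
    Algebra.FormallySmooth.of_perfectField
  exact Algebra.FormallySmooth.comp _ (FractionRing (MvPolynomial (Fin h) k)) _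

/-- A partial derivative on the polynomial subring, multiplied by a suitable non-zero element,
extends to a derivation of an affine domain. -/
theorem exists_derivation_pderiv_aux {k S : Type*} [Field k] [CharZero k] {h : ℕ} [CommRing S]
    [IsDomain S] [Algebra k S] [Algebra.FiniteType k S] [Algebra (MvPolynomial (Fin h) k) S]
    [IsScalarTower k (MvPolynomial (Fin h) k) S] [FaithfulSMul (MvPolynomial (Fin h) k) S]
    {L : Type*} [Field L] [Algebra S L] [IsFractionRing S L] [Algebra k L] [IsScalarTower k S L]
    [Algebra (MvPolynomial (Fin h) k) L] [IsScalarTower (MvPolynomial (Fin h) k) S L]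
    [IsScalarTower k (MvPolynomial (Fin h) k) L]
    (i : Fin h) :
    ∃ c : S, c ≠ 0 ∧ ∃ D : Derivation k S S, ∀ p : MvPolynomial (Fin h) k,
      D (algebraMap _ S p) = c * algebraMap _ S (MvPolynomial.pderiv i p) := by
  haveI : FaithfulSMul (MvPolynomial (Fin h) k) L := by
    rw [faithfulSMul_iff_algebraMap_injective, IsScalarTower.algebraMap_eq _ S L]
    exact (IsFractionRing.injective S L).comp (FaithfulSMul.algebraMap_injective _ _)
  haveI : Algebra.EssFiniteType S L := Algebra.EssFiniteType.of_isLocalization _ (nonZeroDivisors S)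
  haveI : Algebra.EssFiniteType k L := Algebra.EssFiniteType.comp k S L
  haveI := formallySmooth_field (k := k) (h := h) (L := L)
  let D₀ : Derivation k (MvPolynomial (Fin h) k) L :=
    (Algebra.linearMap (MvPolynomial (Fin h) k) L).compDer (MvPolynomial.pderiv (R := k) i)
  obtain ⟨D, hD⟩ := Derivation.exists_extension (B := L) D₀
  obtain ⟨c, hc, D', hD'⟩ := D.exists_restrict (R := S)
  refine ⟨c, hc, D', fun p => IsFractionRing.injective S L ?_⟩
  rw [hD', map_mul, ← IsScalarTower.algebraMap_apply, ← IsScalarTower.algebraMap_apply, hD]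
  rfl

/-- `exists_derivation_pderiv_aux` for the standard fraction field. -/
theorem exists_derivation_pderiv {k S : Type*} [Field k] [CharZero k] {h : ℕ} [CommRing S]
    [IsDomain S] [Algebra k S] [Algebra.FiniteType k S] [Algebra (MvPolynomial (Fin h) k) S]
    [IsScalarTower k (MvPolynomial (Fin h) k) S] [FaithfulSMul (MvPolynomial (Fin h) k) S]
    (i : Fin h) :
    ∃ c : S, c ≠ 0 ∧ ∃ D : Derivation k S S, ∀ p : MvPolynomial (Fin h) k,
      D (algebraMap _ S p) = c * algebraMap _ S (MvPolynomial.pderiv i p) :=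
  exists_derivation_pderiv_aux (L := FractionRing S) i

/-- A power series whose truncations lie in ever higher symbolic powers of a prime ideal
is zero: such power series form a proper ideal stable under all partial derivatives. -/
theorem eq_zero_of_truncTotal_mem_symb {k S : Type*} [Field k] [CharZero k] {h : ℕ} [CommRing S]
    [IsDomain S] [Algebra k S] [Algebra.FiniteType k S] [Algebra (MvPolynomial (Fin h) k) S]
    [IsScalarTower k (MvPolynomial (Fin h) k) S] [FaithfulSMul (MvPolynomial (Fin h) k) S]
    (Q : Ideal S) [hQ : Q.IsPrime] (hX : ∀ (j : ℕ), ∀ a ∈ MvPolynomial.idealOfVars (Fin h) k ^ j,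
      algebraMap (MvPolynomial (Fin h) k) S a ∈ Q.symb j)
    (α : MvPowerSeries (Fin h) k) (hα : ∀ j, algebraMap (MvPolynomial (Fin h) k) S
      (MvPowerSeries.truncTotal j α) ∈ Q.symb j) : α = 0 := by
  haveI : IsNoetherianRing S := Algebra.FiniteType.isNoetherianRing k S
  let J : Ideal (MvPowerSeries (Fin h) k) :=
    { carrier := {f | ∀ j, algebraMap (MvPolynomial (Fin h) k) S
        (MvPowerSeries.truncTotal j f) ∈ Q.symb j}
      add_mem' := fun {f g} hf hg j => by
        rw [map_add, map_add]; exact add_mem (hf j) (hg j)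
      zero_mem' := fun j => by simp
      smul_mem' := fun c f hf j => by
        have h1 := hX j _
          (MvPowerSeries.truncTotal_mul_sub_mul_truncTotal_mem_pow_idealOfVars (n := j) c f)
        rw [map_sub, map_mul (algebraMap (MvPolynomial (Fin h) k) S)] at h1
        have h2 := add_mem h1 (Ideal.mul_mem_left _ (algebraMap (MvPolynomial (Fin h) k) S
          (MvPowerSeries.truncTotal j c)) (hf j))
        rwa [sub_add_cancel] at h2 }
  by_contra hα0
  have htop : J = ⊤ := by
    refine MvPowerSeries.eq_top_of_pderiv_mem J ?_ ?_
    · intro i f hf j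
      obtain ⟨c, hc, D, hD⟩ := exists_derivation_pderiv (k := k) (S := S) i
      obtain ⟨n, hn⟩ := Ideal.exists_mem_symb_of_mul_mem (Q := Q) hc j
      -- the derivative of a long truncation agrees with the truncation of the derivative
      have h1 : MvPowerSeries.truncTotal j (MvPowerSeries.pderiv k i f) -
          MvPolynomial.pderiv i (MvPowerSeries.truncTotal (n + j + 1) f) ∈
            MvPolynomial.idealOfVars (Fin h) k ^ j := by
        rw [MvPolynomial.mem_pow_idealOfVars_iff']
        intro x hx
        rw [MvPolynomial.coeff_sub, sub_eq_zero, MvPowerSeries.coeff_truncTotal _ hx,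
          MvPowerSeries.coeff_pderiv, ← MvPolynomial.coeff_coe, ← MvPowerSeries.pderiv_coe,
          MvPowerSeries.coeff_pderiv, MvPolynomial.coeff_coe, MvPowerSeries.coeff_truncTotal]
        rw [map_add, Finsupp.degree_single]
        omega
      have h2 : algebraMap (MvPolynomial (Fin h) k) S
          (MvPolynomial.pderiv i (MvPowerSeries.truncTotal (n + j + 1) f)) ∈ Q.symb j := by
        apply hn
        rw [← hD]
        exact Ideal.symb_anti (by omega) (D.apply_mem_symb (n + j) (hf (n + j + 1)))
      have h3 := hX j _ h1
      rw [map_sub] at h3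
      have h4 := add_mem h3 h2
      rwa [sub_add_cancel] at h4
    · intro hbot
      have : α ∈ J := hα
      rw [hbot] at this
      exact hα0 this
  have h1 : (1 : MvPowerSeries (Fin h) k) ∈ J := htop ▸ Submodule.mem_top
  have h2 := h1 1
  rw [MvPowerSeries.truncTotal_one one_ne_zero, map_one] at h2
  exact hQ.ne_top ((Ideal.eq_top_iff_one _).2 (Ideal.symb_le one_ne_zero h2))

/-! ### Completeness of `k[[x]] ⊗ R` and Chevalley's lemma -/

section Trunc

variable {k R C C' : Type*} [Field k] {h : ℕ} [CommRing R] [CommRing C] [CommRing C']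
  [Algebra (MvPolynomial (Fin h) k) R] [Algebra (MvPolynomial (Fin h) k) C]
  [Algebra (MvPolynomial (Fin h) k) C']

/-- Compatibility of truncated evaluations of different orders. -/
theorem truncEval_comp (φ : R →ₐ[MvPolynomial (Fin h) k] C) {i j : ℕ} (hij : i ≤ j)
    (hj : ∀ a ∈ MvPolynomial.idealOfVars (Fin h) k ^ j, algebraMap (MvPolynomial (Fin h) k) C a = 0)
    (ψ : C →ₐ[MvPolynomial (Fin h) k] C')
    (hi : ∀ a ∈ MvPolynomial.idealOfVars (Fin h) k ^ i, algebraMap (MvPolynomial (Fin h) k) C' a = 0)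
    (z : MvPowerSeries (Fin h) k ⊗[MvPolynomial (Fin h) k] R) :
    ψ (truncEval φ j hj z) = truncEval (ψ.comp φ) i hi z := by
  induction z with
  | zero => simp
  | add x y hx hy => rw [map_add, map_add, map_add, hx, hy]
  | tmul f r =>
    rw [truncEval_tmul, truncEval_tmul, map_mul, AlgHom.commutes]
    congr 1
    rw [← sub_eq_zero, ← map_sub]
    exact hi _ (MvPowerSeries.truncTotal_sub_truncTotal_mem_pow_idealOfVars hij le_rfl f)

/-- `k[[x]] ⊗ R` is complete for a finite `k[x]`-algebra `R`: compatible sequences converge. -/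
theorem exists_truncEval_eq [Module.Finite (MvPolynomial (Fin h) k) R] (w : ℕ → R)
    (hw : ∀ j, w (j + 1) - w j ∈ Ideal.map (algebraMap (MvPolynomial (Fin h) k) R)
      (MvPolynomial.idealOfVars (Fin h) k ^ j)) :
    ∃ z : MvPowerSeries (Fin h) k ⊗[MvPolynomial (Fin h) k] R,
      ∀ (C : Type _) [CommRing C] [Algebra (MvPolynomial (Fin h) k) C]
        (φ : R →ₐ[MvPolynomial (Fin h) k] C) (j : ℕ)
        (hj : ∀ a ∈ MvPolynomial.idealOfVars (Fin h) k ^ j,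
          algebraMap (MvPolynomial (Fin h) k) C a = 0),
        truncEval φ j hj z = φ (w j) := by
  obtain ⟨m, b, hb⟩ := Module.Finite.exists_fin (R := MvPolynomial (Fin h) k) (M := R)
  have hex : ∀ (I : Ideal (MvPolynomial (Fin h) k)) (x : R),
      x ∈ Ideal.map (algebraMap (MvPolynomial (Fin h) k) R) I →
      ∃ a : Fin m → MvPolynomial (Fin h) k, (∀ i, a i ∈ I) ∧ ∑ i, a i • b i = x := by
    intro I x hx
    have h1 : x ∈ I • (Submodule.span (MvPolynomial (Fin h) k) (Set.range b)) := by
      rw [hb, Ideal.smul_top_eq_map]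
      exact hx
    obtain ⟨a, ha, hsum⟩ := (Submodule.mem_ideal_smul_span_iff_exists_sum I b x).1 h1
    refine ⟨a, ha, ?_⟩
    rw [← hsum, Finsupp.sum_fintype]
    simp
  choose a ha hsum using fun j => hex _ _ (hw j)
  obtain ⟨c, -, hc⟩ := hex ⊤ (w 0) (by
    rw [Ideal.map_top]; exact Submodule.mem_top)
  let g : ℕ → Fin m → MvPolynomial (Fin h) k := fun j i => c i + ∑ n ∈ Finset.range j, a n i
  have hg : ∀ j, ∑ i, g j i • b i = w j := by
    intro j
    induction j with
    | zero => simpa [g] using hc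
    | succ j ih =>
      have : ∀ i, g (j + 1) i = g j i + a j i := fun i => by
        simp only [g]; rw [Finset.sum_range_succ, add_assoc]
      simp only [this, add_smul, Finset.sum_add_distrib]
      rw [ih, hsum, add_sub_cancel]
  have hgd : ∀ i j n, g (j + n) i - g j i ∈ MvPolynomial.idealOfVars (Fin h) k ^ j := by
    intro i j n
    induction n with
    | zero => simp
    | succ n ih =>
      have : g (j + (n + 1)) i = g (j + n) i + a (j + n) i := by
        simp only [g]; rw [← add_assoc, Finset.sum_range_succ, add_assoc]
      rw [this, add_sub_right_comm]
      exact add_mem ih (Ideal.pow_le_pow_right (by omega) (ha (j + n) i))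
  let f : Fin m → MvPowerSeries (Fin h) k := fun i d => MvPolynomial.coeff d (g (d.degree + 1) i)
  refine ⟨∑ i, f i ⊗ₜ b i, ?_⟩
  intro C _ _ φ j hj
  rw [map_sum, ← hg, map_sum]
  refine Finset.sum_congr rfl fun i _ => ?_
  rw [truncEval_tmul, map_smul, Algebra.smul_def]
  congr 1
  rw [← sub_eq_zero, ← map_sub]
  apply hj
  rw [MvPolynomial.mem_pow_idealOfVars_iff']
  intro x hx
  rw [MvPolynomial.coeff_sub, sub_eq_zero, MvPowerSeries.coeff_truncTotal _ hx]
  have h1 := hgd i (x.degree + 1) (j - (x.degree + 1))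
  rw [Nat.add_sub_cancel' hx, MvPolynomial.mem_pow_idealOfVars_iff'] at h1
  have h2 := h1 x (by omega)
  rw [MvPolynomial.coeff_sub, sub_eq_zero] at h2
  rw [h2]
  rfl

theorem isArtinianRing_quotient_idealOfVars (j : ℕ) :
    IsArtinianRing (MvPolynomial (Fin h) k ⧸ MvPolynomial.idealOfVars (Fin h) k ^ j) := by
  have hfin : {d : Fin h →₀ ℕ | d.degree ≤ j}.Finite := Finsupp.finite_of_degree_le j
  haveI := hfin.fintype
  let ψ : ({d : Fin h →₀ ℕ | d.degree ≤ j} → k) →ₗ[k]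
      (MvPolynomial (Fin h) k ⧸ MvPolynomial.idealOfVars (Fin h) k ^ j) :=
    (Ideal.Quotient.mkₐ k (MvPolynomial.idealOfVars (Fin h) k ^ j)).toLinearMap ∘ₗ
      ∑ d, (MvPolynomial.monomial d.1) ∘ₗ LinearMap.proj d
  have hψ : Function.Surjective ψ := by
    intro y
    obtain ⟨p, rfl⟩ := Ideal.Quotient.mk_surjective y
    refine ⟨fun d => p.coeff d.1, ?_⟩
    change Ideal.Quotient.mk _ _ = Ideal.Quotient.mk _ _
    rw [Ideal.Quotient.eq, MvPolynomial.mem_pow_idealOfVars_iff']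
    intro x hx
    rw [MvPolynomial.coeff_sub, sub_eq_zero, LinearMap.sum_apply, MvPolynomial.coeff_sum]
    rw [Finset.sum_eq_single ⟨x, hx.le⟩]
    · simp
    · intro b _ hb
      simp only [LinearMap.comp_apply, LinearMap.proj_apply]
      rw [MvPolynomial.coeff_monomial, if_neg]
      rintro rfl
      exact hb rfl
    · simp
  haveI : Module.Finite k (MvPolynomial (Fin h) k ⧸ MvPolynomial.idealOfVars (Fin h) k ^ j) :=
    Module.Finite.of_surjective ψ hψ
  exact IsArtinianRing.of_finite k _

/-- Chevalley's lemma, in the form of a Mittag-Leffler argument. -/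
theorem exists_seq_of_not_le [Module.Finite (MvPolynomial (Fin h) k) R] (𝔞 : ℕ → Ideal R)
    (hanti : Antitone 𝔞) (I : Ideal R) (l : ℕ) (hI : ∀ i, ¬ 𝔞 i ≤ I) :
    ∃ w : ℕ → R, (∀ j, w (j + 1) - w j ∈ Ideal.map (algebraMap (MvPolynomial (Fin h) k) R)
        (MvPolynomial.idealOfVars (Fin h) k ^ j)) ∧
      (∀ j, w j ∈ 𝔞 j ⊔ Ideal.map (algebraMap (MvPolynomial (Fin h) k) R)
        (MvPolynomial.idealOfVars (Fin h) k ^ j)) ∧ w l ∉ I := by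
  set N : ℕ → Ideal R := fun j => Ideal.map (algebraMap (MvPolynomial (Fin h) k) R)
        (MvPolynomial.idealOfVars (Fin h) k ^ j) with hN
  have hNanti : Antitone N := fun i j hij => Ideal.map_mono (Ideal.pow_le_pow_right hij)
  have hstab : ∀ j, ∃ n, ∀ i, n ≤ i → 𝔞 n ≤ 𝔞 i ⊔ N j := by
    intro j
    haveI := isArtinianRing_quotient_idealOfVars (k := k) (h := h) j
    let q : (MvPolynomial (Fin h) k ⧸ MvPolynomial.idealOfVars (Fin h) k ^ j) →+* (R ⧸ N j) :=
      Ideal.quotientMap (N j) (algebraMap (MvPolynomial (Fin h) k) R) Ideal.le_comap_map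
    have hq : q.Finite := by
      refine RingHom.Finite.of_comp_finite
        (f := Ideal.Quotient.mk (MvPolynomial.idealOfVars (Fin h) k ^ j)) ?_
      have hqc : q.comp (Ideal.Quotient.mk (MvPolynomial.idealOfVars (Fin h) k ^ j)) =
          (Ideal.Quotient.mk (N j)).comp (algebraMap (MvPolynomial (Fin h) k) R) :=
        Ideal.quotientMap_comp_mk Ideal.le_comap_map
      rw [hqc]
      exact RingHom.Finite.comp
        (RingHom.Finite.of_surjective _ Ideal.Quotient.mk_surjective)
        (RingHom.finite_algebraMap.2 inferInstance)
    letI := q.toAlgebra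
    haveI : Module.Finite (MvPolynomial (Fin h) k ⧸ MvPolynomial.idealOfVars (Fin h) k ^ j)
        (R ⧸ N j) := hq
    haveI : IsArtinianRing (R ⧸ N j) := IsArtinianRing.of_finite
      (MvPolynomial (Fin h) k ⧸ MvPolynomial.idealOfVars (Fin h) k ^ j) _
    obtain ⟨n, hn⟩ := IsArtinian.monotone_stabilizes (R := R ⧸ N j) (M := R ⧸ N j)
      ⟨fun i => OrderDual.toDual (Ideal.map (Ideal.Quotient.mk (N j)) (𝔞 i)),
        fun a b hab => Ideal.map_mono (hanti hab)⟩
    refine ⟨n, fun i hi => ?_⟩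
    have h1 : Ideal.map (Ideal.Quotient.mk (N j)) (𝔞 n) = Ideal.map (Ideal.Quotient.mk (N j)) (𝔞 i) :=
      hn i hi
    have h2 := Ideal.le_comap_map (f := Ideal.Quotient.mk (N j)) (I := 𝔞 n)
    rw [h1, Ideal.comap_map_of_surjective _ Ideal.Quotient.mk_surjective] at h2
    refine h2.trans (sup_le_sup_left ?_ _)
    rw [← RingHom.ker_eq_comap_bot, Ideal.mk_ker]
  choose n hn using hstab
  -- `E j` consists of the elements lying in all `𝔞 i + N j`
  let E : ℕ → Set R := fun j => {x | ∀ i, x ∈ 𝔞 i ⊔ N j}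
  have hE : ∀ j, ∀ x ∈ 𝔞 (n j), x ∈ E j := by
    intro j x hx i
    rcases le_total (n j) i with hi | hi
    · exact hn j i hi hx
    · exact le_sup_left (α := Ideal R) (hanti hi hx)
  have hstep : ∀ j, ∀ x ∈ E j, ∃ y ∈ E (j + 1), y - x ∈ N j := by
    intro j x hx
    obtain ⟨a, ha, ν, hν, rfl⟩ := Submodule.mem_sup.1 (hx (n (j + 1)))
    exact ⟨a, hE _ _ ha, by simpa using hν⟩
  obtain ⟨a, ha, haI⟩ := Set.not_subset.1 (hI (n l))
  choose! nxt hnxt hnxt' using hstep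
  let v : ℕ → R := fun m => Nat.rec a (fun m x => nxt (l + m) x) m
  have hv : ∀ m, v m ∈ E (l + m) := by
    intro m
    induction m with
    | zero => exact hE l a ha
    | succ m ih => exact hnxt (l + m) _ ih
  refine ⟨fun j => v (j - l), ?_, ?_, ?_⟩
  · intro j
    rcases lt_or_ge j l with hj | hj
    · have h1 : j + 1 - l = 0 := by omega
      have h2 : j - l = 0 := by omega
      simp only [h1, h2, sub_self]
      exact zero_mem _
    · have h1 : j + 1 - l = (j - l) + 1 := by omega
      have h2 : l + (j - l) = j := by omega
      have h3 := hnxt' (l + (j - l)) _ (hv (j - l))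
      rw [h2] at h3
      simp only [h1]
      change nxt (l + (j - l)) (v (j - l)) - v (j - l) ∈ _
      rw [h2]
      exact h3
  · intro j
    exact sup_le_sup_left (hNanti (by omega : j ≤ l + (j - l))) (𝔞 j) (hv (j - l) j)
  · simp only [Nat.sub_self]
    exact haI

end Trunc

/-! ### The topology induced on a normal ring by symbolic powers -/

/-- A linear form of Zariski's main lemma on holomorphic functions for an inclusion `R ⊆ S` of
affine domains with `R` normal: at a maximal ideal `P` of `R` lying under a prime `Q` of `S`, the
symbolic powers of `Q` induce a topology on `R` at least as fine as the `P`-adic one. -/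
theorem exists_symb_le_pow_of_finite.{u} {k : Type*} {R S : Type u} [Field k] [CharZero k] {h : ℕ}
    [CommRing R] [IsDomain R] [IsIntegrallyClosed R] [Algebra k R]
    [Algebra (MvPolynomial (Fin h) k) R] [IsScalarTower k (MvPolynomial (Fin h) k) R]
    [Module.Finite (MvPolynomial (Fin h) k) R] [FaithfulSMul (MvPolynomial (Fin h) k) R]
    [CommRing S] [IsDomain S] [Algebra k S] [Algebra.FiniteType k S]
    [Algebra (MvPolynomial (Fin h) k) S] [IsScalarTower k (MvPolynomial (Fin h) k) S]
    [FaithfulSMul (MvPolynomial (Fin h) k) S]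
    [Algebra R S] [IsScalarTower (MvPolynomial (Fin h) k) R S]
    (Q : Ideal S) [hQ : Q.IsPrime] (P : Ideal R) [hP : P.IsMaximal]
    (hPQ : P = Q.comap (algebraMap R S))
    (hXP : ∀ i, algebraMap (MvPolynomial (Fin h) k) R (MvPolynomial.X i) ∈ P) (l : ℕ) :
    ∃ j, ∀ a : R, algebraMap R S a ∈ Q.symb j → a ∈ P ^ l := by
  by_contra hcon
  -- the ideals of the variables land in `P` and `Q`
  have hvP : Ideal.map (algebraMap (MvPolynomial (Fin h) k) R)
      (MvPolynomial.idealOfVars (Fin h) k) ≤ P := by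
    rw [MvPolynomial.idealOfVars, Ideal.map_span, Ideal.span_le]
    rintro _ ⟨_, ⟨i, rfl⟩, rfl⟩
    exact hXP i
  have hvPj : ∀ j, Ideal.map (algebraMap (MvPolynomial (Fin h) k) R)
      (MvPolynomial.idealOfVars (Fin h) k ^ j) ≤ P ^ j := fun j => by
    rw [Ideal.map_pow]
    exact Ideal.pow_right_mono hvP j
  have hPS : ∀ j, P ^ j ≤ (Q.symb j).comap (algebraMap R S) := fun j => by
    refine le_trans ?_ (Ideal.comap_mono (Ideal.pow_le_symb j))
    rw [← Ideal.map_le_iff_le_comap, Ideal.map_pow]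
    exact Ideal.pow_right_mono (Ideal.map_le_iff_le_comap.2 hPQ.le) j
  have hXQ : ∀ (j : ℕ), ∀ a ∈ MvPolynomial.idealOfVars (Fin h) k ^ j,
      algebraMap (MvPolynomial (Fin h) k) S a ∈ Q.symb j := fun j a ha => by
    rw [IsScalarTower.algebraMap_apply _ R S]
    exact hPS j (hvPj j (Ideal.mem_map_of_mem _ ha))
  -- a limit `z` of elements of ever higher `Q`-order that is not in `P ^ l`
  obtain ⟨w, hw1, hw2, hw3⟩ := exists_seq_of_not_le (k := k) (h := h)
    (fun i => (Q.symb i).comap (algebraMap R S))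
    (fun i j hij => Ideal.comap_mono (Ideal.symb_anti hij)) (P ^ l) l (by
      intro i hi
      exact hcon ⟨i, fun a ha => hi ha⟩)
  obtain ⟨z, hz⟩ := exists_truncEval_eq w hw1
  have hj : ∀ (j : ℕ), ∀ a ∈ MvPolynomial.idealOfVars (Fin h) k ^ j,
      algebraMap (MvPolynomial (Fin h) k) (S ⧸ Q.symb j) a = 0 := fun j a ha =>
    Ideal.Quotient.eq_zero_iff_mem.2 (hXQ j a ha)
  have hjR : ∀ (j : ℕ), ∀ a ∈ MvPolynomial.idealOfVars (Fin h) k ^ j,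
      algebraMap (MvPolynomial (Fin h) k) (R ⧸ P ^ j) a = 0 := fun j a ha =>
    Ideal.Quotient.eq_zero_iff_mem.2 (hvPj j (Ideal.mem_map_of_mem _ ha))
  have hPv : ∀ a ∈ MvPolynomial.idealOfVars (Fin h) k ^ 1,
      algebraMap (MvPolynomial (Fin h) k) (R ⧸ P) a = 0 := fun a ha =>
    Ideal.Quotient.eq_zero_iff_mem.2 (hvP (Ideal.mem_map_of_mem _ (by simpa using ha)))
  have hQv : ∀ a ∈ MvPolynomial.idealOfVars (Fin h) k ^ 1,
      algebraMap (MvPolynomial (Fin h) k) (S ⧸ Q) a = 0 := fun a ha =>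
    Ideal.Quotient.eq_zero_iff_mem.2 (Ideal.symb_le one_ne_zero (hXQ 1 a ha))
  let φ : ∀ j, R →ₐ[MvPolynomial (Fin h) k] S ⧸ Q.symb j := fun j =>
    (Ideal.Quotient.mkₐ _ (Q.symb j)).comp (IsScalarTower.toAlgHom (MvPolynomial (Fin h) k) R S)
  let θ : ∀ j, R →ₐ[MvPolynomial (Fin h) k] R ⧸ P ^ j := fun j => Ideal.Quotient.mkₐ _ (P ^ j)
  let π : R →ₐ[MvPolynomial (Fin h) k] R ⧸ P := Ideal.Quotient.mkₐ _ P
  have hρz : ∀ j, truncEval (φ j) j (hj j) z = 0 := by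
    intro j
    rw [hz]
    refine Ideal.Quotient.eq_zero_iff_mem.2 ?_
    have : w j ∈ (Q.symb j).comap (algebraMap R S) :=
      sup_le le_rfl ((hvPj j).trans (hPS j)) (hw2 j)
    exact this
  obtain ⟨e, v, α, he, hez, hα, hαe⟩ := exists_idempotent_tensor z
  have hidem : truncEval π 1 hPv e = 0 ∨ truncEval π 1 hPv e = 1 := by
    have h1 := congrArg (truncEval π 1 hPv) he
    rw [map_mul] at h1
    letI := Ideal.Quotient.field P
    rcases eq_or_ne (truncEval π 1 hPv e) 0 with h0 | h0
    · exact Or.inl h0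
    · exact Or.inr (mul_left_cancel₀ h0 (by rw [h1, mul_one]))
  rcases hidem with h0 | h1
  · -- `e` vanishes modulo `P`, hence modulo `P ^ l`
    have hl : l ≠ 0 := by
      rintro rfl
      exact hw3 (by simp)
    let ψ : R ⧸ P ^ l →ₐ[MvPolynomial (Fin h) k] R ⧸ P :=
      Ideal.Quotient.factorₐ _ (Ideal.pow_le_self hl)
    have h2 := truncEval_comp (θ l) (Nat.one_le_iff_ne_zero.2 hl) (hjR l) ψ hPv e
    have h3 : ψ.comp (θ l) = π := AlgHom.ext fun x => rfl
    rw [h3, h0] at h2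
    have h4 : (truncEval (θ l) l (hjR l) e) ^ l = 0 := by
      obtain ⟨y, hy⟩ := Ideal.Quotient.mk_surjective (truncEval (θ l) l (hjR l) e)
      rw [← hy] at h2 ⊢
      rw [← map_pow]
      exact Ideal.Quotient.eq_zero_iff_mem.2
        (Ideal.pow_mem_pow (Ideal.Quotient.eq_zero_iff_mem.1 h2) l)
    have h5 : ∀ n : ℕ, e ^ (n + 1) = e := by
      intro n
      induction n with
      | zero => simp
      | succ n ih => rw [pow_succ, ih, he]
    obtain ⟨n, rfl⟩ := Nat.exists_eq_succ_of_ne_zero hl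
    rw [← map_pow, h5] at h4
    have h6 := congrArg (truncEval (θ (n + 1)) (n + 1) (hjR (n + 1))) hez
    rw [map_mul, h4, zero_mul, hz] at h6
    exact hw3 (Ideal.Quotient.eq_zero_iff_mem.1 h6.symm)
  · -- `e` is a unit modulo `Q`, and `α e` has infinite order along `Q`, so `α = 0`
    apply hα
    refine eq_zero_of_truncTotal_mem_symb Q hXQ α fun j => ?_
    rcases Nat.eq_zero_or_pos j with rfl | hjpos
    · exact Ideal.pow_le_symb 0 (by simp)
    let ψ : S ⧸ Q.symb j →ₐ[MvPolynomial (Fin h) k] S ⧸ Q :=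
      Ideal.Quotient.factorₐ _ (Ideal.symb_le hjpos.ne')
    let χ : R ⧸ P →ₐ[MvPolynomial (Fin h) k] S ⧸ Q :=
      Ideal.quotientMapₐ Q (IsScalarTower.toAlgHom (MvPolynomial (Fin h) k) R S) hPQ.le
    have h2 := truncEval_comp (φ j) hjpos (hj j) ψ hQv e
    have h3 := truncEval_comp π le_rfl hPv χ hQv e
    have h4 : ψ.comp (φ j) = χ.comp π := AlgHom.ext fun x => rfl
    rw [h1, map_one] at h3
    rw [h4, ← h3] at h2
    have h5 := congrArg (truncEval (φ j) j (hj j)) hαe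
    have h6 : ∀ y : MvPowerSeries (Fin h) k ⊗[MvPolynomial (Fin h) k] R,
        α • y = (α ⊗ₜ[MvPolynomial (Fin h) k] (1 : R)) * y := by
      intro y
      induction y with
      | zero => rw [smul_zero, mul_zero]
      | tmul f r =>
        rw [TensorProduct.smul_tmul', Algebra.TensorProduct.tmul_mul_tmul, one_mul, smul_eq_mul]
      | add x y hx hy => rw [smul_add, mul_add, hx, hy]
    rw [map_mul, hρz, zero_mul, h6, map_mul, truncEval_tmul, map_one, mul_one] at h5
    obtain ⟨y, hy⟩ := Ideal.Quotient.mk_surjective (truncEval (φ j) j (hj j) e)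
    rw [← hy] at h2 h5
    have h7 : y ∉ Q := by
      intro hyQ
      have : ψ (Ideal.Quotient.mk _ y) = 0 := Ideal.Quotient.eq_zero_iff_mem.2 hyQ
      rw [this] at h2
      exact zero_ne_one h2
    refine Ideal.mem_symb_of_mul_mem h7 ?_
    rw [mul_comm]
    exact Ideal.Quotient.eq_zero_iff_mem.1 h5

/-- Noether normalization with all variables inside a given maximal ideal. -/
theorem exists_noether_normalization {k R : Type*} [Field k] [CommRing R] [IsDomain R] [Algebra k R]
    [Algebra.FiniteType k R] (P : Ideal R) [hP : P.IsMaximal] :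
    ∃ (h : ℕ) (g : MvPolynomial (Fin h) k →ₐ[k] R), Function.Injective g ∧ g.toRingHom.Finite ∧
      ∀ i, g (MvPolynomial.X i) ∈ P := by
  obtain ⟨h, g, hg, hfin⟩ := exists_finite_inj_algHom_of_fg k R
  letI := Ideal.Quotient.field P
  haveI : Module.Finite k (R ⧸ P) := finite_of_finite_type_of_isJacobsonRing k (R ⧸ P)
  have hinteg : ∀ r : R, IsIntegral k (Ideal.Quotient.mk P r) := fun r => IsIntegral.of_finite k _
  let f : Fin h → Polynomial k := fun i => minpoly k (Ideal.Quotient.mk P (g (MvPolynomial.X i)))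
  have hmon : ∀ i, (f i).Monic := fun i => minpoly.monic (hinteg _)
  have hdeg : ∀ i, (f i).natDegree ≠ 0 := fun i => (minpoly.natDegree_pos (hinteg _)).ne'
  let x : Fin h → R := fun i => Polynomial.aeval (g (MvPolynomial.X i)) (f i)
  have hx : AlgebraicIndependent k x := by
    refine AlgebraicIndependent.polynomial_aeval_of_transcendental ?_ fun i => ?_
    · change Function.Injective _
      have : (MvPolynomial.aeval fun i => g (MvPolynomial.X i)) = g := by ext; simp
      rw [this]
      exact hg
    · exact Polynomial.transcendental (f i) (hdeg i) (by rw [(hmon i).leadingCoeff]; exact one_mem _)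
  refine ⟨h, MvPolynomial.aeval x, hx, ?_, ?_⟩
  · let g₁ : MvPolynomial (Fin h) k →ₐ[k] MvPolynomial (Fin h) k :=
      MvPolynomial.aeval fun i => Polynomial.aeval (MvPolynomial.X i) (f i)
    have hcomp : (MvPolynomial.aeval x : MvPolynomial (Fin h) k →ₐ[k] R) = g.comp g₁ := by
      ext i
      simp [g₁, x, Polynomial.aeval_algHom_apply]
    have hg₁ : g₁.toRingHom.Finite := by
      refine RingHom.IsIntegral.to_finite ?_ ?_
      · intro p
        induction p using MvPolynomial.induction_on with
        | C a =>
          have : (MvPolynomial.C a : MvPolynomial (Fin h) k) = g₁.toRingHom (MvPolynomial.C a) :=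
            (g₁.commutes a).symm
          rw [this]
          exact RingHom.isIntegralElem_map _
        | add p q hp hq => exact RingHom.IsIntegralElem.add _ hp hq
        | mul_X p i hp =>
          refine RingHom.IsIntegralElem.mul _ hp ?_
          refine ⟨(f i).map MvPolynomial.C - Polynomial.C (MvPolynomial.X i), ?_, ?_⟩
          · refine ((hmon i).map _).sub_of_left ?_
            rw [(hmon i).degree_map]
            refine lt_of_le_of_lt Polynomial.degree_C_le ?_
            exact Polynomial.natDegree_pos_iff_degree_pos.1 (Nat.pos_of_ne_zero (hdeg i))
          · rw [Polynomial.eval₂_sub, Polynomial.eval₂_map, Polynomial.eval₂_C, sub_eq_zero]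
            have h1 : g₁.toRingHom.comp MvPolynomial.C = algebraMap k (MvPolynomial (Fin h) k) :=
              g₁.comp_algebraMap
            rw [h1]
            have h2 := MvPolynomial.aeval_X (R := k) (fun i =>
              Polynomial.aeval (MvPolynomial.X i : MvPolynomial (Fin h) k) (f i)) i
            exact h2.symm
      · refine RingHom.FiniteType.of_comp_finiteType (f := algebraMap k (MvPolynomial (Fin h) k)) ?_
        have h1 : g₁.toRingHom.comp (algebraMap k (MvPolynomial (Fin h) k)) =
          algebraMap k (MvPolynomial (Fin h) k) := g₁.comp_algebraMap
        rw [h1]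
        exact RingHom.finiteType_algebraMap.2 inferInstance
    rw [hcomp]
    exact RingHom.Finite.comp hfin hg₁
  · intro i
    rw [MvPolynomial.aeval_X, ← Ideal.Quotient.eq_zero_iff_mem]
    have := minpoly.aeval k (Ideal.Quotient.mk P (g (MvPolynomial.X i)))
    rw [← Ideal.Quotient.mkₐ_eq_mk k, Polynomial.aeval_algHom_apply] at this
    exact this

/-- The statement of `exists_symb_le_pow_of_finite` without a given Noether normalization. -/
theorem exists_symb_le_pow_of_isMaximal.{u} {k : Type*} {R S : Type u} [Field k] [CharZero k]
    [CommRing R] [IsDomain R] [IsIntegrallyClosed R] [Algebra k R] [Algebra.FiniteType k R]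
    [CommRing S] [IsDomain S] [Algebra k S] [Algebra.FiniteType k S]
    [Algebra R S] [IsScalarTower k R S] [FaithfulSMul R S]
    (Q : Ideal S) [hQ : Q.IsPrime] (P : Ideal R) [hP : P.IsMaximal]
    (hPQ : P = Q.comap (algebraMap R S)) (l : ℕ) :
    ∃ j, ∀ a : R, algebraMap R S a ∈ Q.symb j → a ∈ P ^ l := by
  obtain ⟨h, g, hg, hfin, hX⟩ := exists_noether_normalization (k := k) P
  letI : Algebra (MvPolynomial (Fin h) k) R := g.toRingHom.toAlgebra
  letI : Algebra (MvPolynomial (Fin h) k) S := ((algebraMap R S).comp g.toRingHom).toAlgebra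
  haveI : IsScalarTower k (MvPolynomial (Fin h) k) R :=
    IsScalarTower.of_algebraMap_eq fun r => (g.commutes r).symm
  haveI : IsScalarTower (MvPolynomial (Fin h) k) R S := IsScalarTower.of_algebraMap_eq fun r => rfl
  haveI : IsScalarTower k (MvPolynomial (Fin h) k) S :=
    IsScalarTower.of_algebraMap_eq fun r => by
      rw [IsScalarTower.algebraMap_apply k R S,
        IsScalarTower.algebraMap_apply (MvPolynomial (Fin h) k) R S,
        ← IsScalarTower.algebraMap_apply k _ R]
  haveI : Module.Finite (MvPolynomial (Fin h) k) R := hfin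
  haveI : FaithfulSMul (MvPolynomial (Fin h) k) R := (faithfulSMul_iff_algebraMap_injective _ _).2 hg
  haveI : FaithfulSMul (MvPolynomial (Fin h) k) S :=
    (faithfulSMul_iff_algebraMap_injective _ _).2
      ((FaithfulSMul.algebraMap_injective R S).comp hg)
  exact exists_symb_le_pow_of_finite (k := k) (h := h) Q P hPQ hX l

/-- Inverting the nonzero elements of a subring `A` of a finitely generated `k`-algebra gives a
finitely generated algebra over the fraction field of `A`. -/
theorem finiteType_of_isLocalization {k k' A R R' : Type*} [Field k] [CommRing A] [Field k']
    [CommRing R] [CommRing R'] [Algebra A k'] [IsFractionRing A k'] [Algebra A R] [Algebra R R']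
    [Algebra k' R'] [Algebra k R] [Algebra.FiniteType k R] [Algebra k A]
    [IsScalarTower k A R] [Algebra A R'] [IsScalarTower A R R'] [IsScalarTower A k' R']
    [IsDomain A]
    [IsLocalization (Algebra.algebraMapSubmonoid R (nonZeroDivisors A)) R'] :
    Algebra.FiniteType k' R' := by
  classical
  obtain ⟨s, hs⟩ := (‹Algebra.FiniteType k R›).out
  refine ⟨⟨s.image (algebraMap R R'), ?_⟩⟩
  have key : ∀ r : R, algebraMap R R' r ∈
      Algebra.adjoin k' ((s.image (algebraMap R R') : Finset R') : Set R') := by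
    intro r
    have hr : r ∈ Algebra.adjoin k (s : Set R) := hs ▸ Algebra.mem_top
    induction hr using Algebra.adjoin_induction with
    | mem x hx => exact Algebra.subset_adjoin (by simpa using ⟨x, hx, rfl⟩)
    | algebraMap a =>
      rw [IsScalarTower.algebraMap_apply k A R, ← IsScalarTower.algebraMap_apply A R R',
        IsScalarTower.algebraMap_apply A k' R']
      exact Subalgebra.algebraMap_mem _ _
    | add x y _ _ hx hy => rw [map_add]; exact add_mem hx hy
    | mul x y _ _ hx hy => rw [map_mul]; exact mul_mem hx hy
  rw [eq_top_iff]
  rintro x -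
  obtain ⟨⟨r, ⟨_, a, ha, rfl⟩⟩, hx⟩ := IsLocalization.surj
    (Algebra.algebraMapSubmonoid R (nonZeroDivisors A)) x
  have ha0 : algebraMap A k' a ≠ 0 := by
    simpa using nonZeroDivisors.ne_zero ha
  have hx' : x = (algebraMap A k' a)⁻¹ • algebraMap R R' r := by
    rw [eq_comm, inv_smul_eq_iff₀ ha0, ← hx, Algebra.smul_def, mul_comm]
    rw [← IsScalarTower.algebraMap_apply A k' R', IsScalarTower.algebraMap_apply A R R']
  rw [hx']
  exact Subalgebra.smul_mem _ (key r) _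

/-- For affine domains `R ⊆ S` with `R` normal, and a prime `Q` of `S` lying over `P`, the symbolic
powers of `Q` induce a topology on `R` at least as fine as that of the symbolic powers of `P`. The
case of a maximal ideal `P` applies after inverting the nonzero polynomials in lifts of a
transcendence basis of `R ⧸ P`, which makes `P` maximal over the enlarged base field. -/
theorem exists_symb_le_symb.{u} {k : Type*} {R S : Type u} [Field k] [CharZero k]
    [CommRing R] [IsDomain R] [IsIntegrallyClosed R] [Algebra k R] [Algebra.FiniteType k R]
    [CommRing S] [IsDomain S] [Algebra k S] [Algebra.FiniteType k S]
    [Algebra R S] [IsScalarTower k R S] [FaithfulSMul R S]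
    (Q : Ideal S) [hQ : Q.IsPrime] (P : Ideal R) [hP : P.IsPrime]
    (hPQ : P = Q.comap (algebraMap R S)) (l : ℕ) :
    ∃ j, ∀ a : R, algebraMap R S a ∈ Q.symb j → a ∈ P.symb l := by
  obtain ⟨ι, Y₀, hY₀⟩ := exists_isTranscendenceBasis' k (R ⧸ P)
  choose Y hY using fun i => Ideal.Quotient.mk_surjective (Y₀ i)
  let A := MvPolynomial ι k
  let f : A →ₐ[k] R := MvPolynomial.aeval Y
  have hfmk : ∀ a : A, Ideal.Quotient.mk P (f a) = MvPolynomial.aeval Y₀ a := by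
    intro a
    have : (Ideal.Quotient.mkₐ k P).comp f = MvPolynomial.aeval Y₀ := by
      ext i; simp [f, hY]
    exact DFunLike.congr_fun this a
  have hfP : ∀ a : A, a ≠ 0 → f a ∉ P := by
    intro a ha h
    rw [← Ideal.Quotient.eq_zero_iff_mem, hfmk] at h
    exact ha ((injective_iff_map_eq_zero _).1 hY₀.1 a h)
  letI : Algebra A R := f.toRingHom.toAlgebra
  letI : Algebra A S := ((algebraMap R S).comp f.toRingHom).toAlgebra
  haveI : IsScalarTower A R S := IsScalarTower.of_algebraMap_eq fun r => rfl
  haveI : IsScalarTower k A R := IsScalarTower.of_algebraMap_eq fun r => (f.commutes r).symm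
  haveI : IsScalarTower k A S :=
    IsScalarTower.of_algebraMap_eq fun r => by
      rw [IsScalarTower.algebraMap_apply k R S, IsScalarTower.algebraMap_apply A R S,
        ← IsScalarTower.algebraMap_apply k A R]
  have hRS := FaithfulSMul.algebraMap_injective R S
  let MR := Algebra.algebraMapSubmonoid R (nonZeroDivisors A)
  let MS := Algebra.algebraMapSubmonoid S (nonZeroDivisors A)
  have hMR : ∀ m ∈ MR, m ∉ P := by
    rintro _ ⟨a, ha, rfl⟩
    exact hfP a (nonZeroDivisors.ne_zero ha)
  have hMS : ∀ m ∈ MS, m ∉ Q := by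
    rintro _ ⟨a, ha, rfl⟩ h
    refine hfP a (nonZeroDivisors.ne_zero ha) ?_
    rw [hPQ]
    exact h
  have hMR0 : MR ≤ nonZeroDivisors R :=
    le_nonZeroDivisors_of_noZeroDivisors fun h => hMR _ h P.zero_mem
  have hMS0 : MS ≤ nonZeroDivisors S :=
    le_nonZeroDivisors_of_noZeroDivisors fun h => hMS _ h Q.zero_mem
  let k' := FractionRing A
  let R' := Localization MR
  let S' := Localization MS
  have hle : MR ≤ MS.comap (algebraMap R S) := by
    rintro _ ⟨a, ha, rfl⟩
    exact ⟨a, ha, rfl⟩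
  have hleA : nonZeroDivisors A ≤ MR.comap (algebraMap A R) := fun a ha => ⟨a, ha, rfl⟩
  letI : Algebra k' R' := (IsLocalization.map R' (algebraMap A R) hleA : k' →+* R').toAlgebra
  letI : Algebra R' S' := (IsLocalization.map S' (algebraMap R S) hle : R' →+* S').toAlgebra
  letI : Algebra k' S' := ((algebraMap R' S').comp (algebraMap k' R')).toAlgebra
  haveI : IsScalarTower k' R' S' := IsScalarTower.of_algebraMap_eq fun r => rfl
  have hcompR : ∀ r : R, algebraMap R' S' (algebraMap R R' r) = algebraMap S S' (algebraMap R S r) :=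
    fun r => IsLocalization.map_eq hle r
  have hcompk : ∀ a : A, algebraMap k' R' (algebraMap A k' a) = algebraMap R R' (algebraMap A R a) :=
    fun r => IsLocalization.map_eq hleA r
  haveI : IsScalarTower A k' R' := IsScalarTower.of_algebraMap_eq fun r => by
    rw [hcompk, IsScalarTower.algebraMap_apply A R R']
  haveI : IsScalarTower A k' S' := IsScalarTower.of_algebraMap_eq fun r => by
    change _ = algebraMap R' S' (algebraMap k' R' (algebraMap A k' r))
    rw [hcompk, hcompR, IsScalarTower.algebraMap_apply A S S']
    rfl
  haveI : Algebra.FiniteType k' R' := finiteType_of_isLocalization (k := k) (A := A) (R := R)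
  haveI : Algebra.FiniteType k' S' := finiteType_of_isLocalization (k := k) (A := A) (R := S)
  haveI : IsDomain R' := IsLocalization.isDomain_of_le_nonZeroDivisors R' hMR0
  haveI : IsDomain S' := IsLocalization.isDomain_of_le_nonZeroDivisors S' hMS0
  haveI : IsIntegrallyClosed R' := isIntegrallyClosed_of_isLocalization R' MR hMR0
  haveI : CharZero k' := charZero_of_injective_algebraMap (IsFractionRing.injective A k')
  haveI : FaithfulSMul R' S' := (faithfulSMul_iff_algebraMap_injective _ _).2 <| by
    refine (injective_iff_map_eq_zero _).2 fun x hx => ?_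
    obtain ⟨⟨r, m⟩, h⟩ := IsLocalization.surj MR x
    have h2 := congrArg (algebraMap R' S') h
    simp only [map_mul, hx, zero_mul] at h2
    rw [hcompR, eq_comm, map_eq_zero_iff _ (IsLocalization.injective S' hMS0),
      map_eq_zero_iff _ hRS] at h2
    simp only [h2, map_zero] at h
    exact (mul_eq_zero.1 h).resolve_right
      (IsLocalization.map_units R' m).ne_zero
  have hdisS : Disjoint (MS : Set S) (Q : Set S) := Set.disjoint_left.2 hMS
  let Q' : Ideal S' := Q.map (algebraMap S S')
  haveI hQ' : Q'.IsPrime := IsLocalization.isPrime_of_isPrime_disjoint MS S' Q hQ hdisS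
  have hQc : ∀ s : S, algebraMap S S' s ∈ Q' ↔ s ∈ Q := by
    intro s
    have := IsLocalization.under_map_of_isPrime_disjoint MS S' hQ hdisS
    rw [← Ideal.mem_comap]
    exact iff_of_eq (congrArg (s ∈ ·) this)
  let P' : Ideal R' := Q'.comap (algebraMap R' S')
  have hPc : ∀ r : R, algebraMap R R' r ∈ P' ↔ r ∈ P := by
    intro r
    rw [Ideal.mem_comap, hcompR, hQc, hPQ, Ideal.mem_comap]
  have hP'mk : ∀ x ∈ P', ∃ r ∈ P, ∃ m ∈ MR, x * algebraMap R R' m = algebraMap R R' r := by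
    intro x hx
    obtain ⟨⟨r, m⟩, h⟩ := IsLocalization.surj MR x
    refine ⟨r, ?_, m, m.2, h⟩
    rw [← hPc, ← h]
    exact P'.mul_mem_right _ hx
  have hP'map : P' = P.map (algebraMap R R') := by
    refine le_antisymm (fun x hx => ?_) (Ideal.map_le_iff_le_comap.2 fun r hr => (hPc r).2 hr)
    obtain ⟨r, hr, m, hm, h⟩ := hP'mk x hx
    rw [IsLocalization.mem_map_algebraMap_iff MR]
    exact ⟨⟨⟨r, hr⟩, ⟨m, hm⟩⟩, h⟩
  haveI hP' : P'.IsPrime := Ideal.IsPrime.comap _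
  haveI : P'.IsMaximal := by
    refine Ideal.isMaximal_iff.2 ⟨fun h => hP'.ne_top ((Ideal.eq_top_iff_one _).2 h), ?_⟩
    intro J x hJ hx hxJ
    obtain ⟨⟨r, m⟩, h⟩ := IsLocalization.surj MR x
    have hr : r ∉ P := by
      rw [← hPc, ← h]
      intro h'
      rcases hP'.mem_or_mem h' with h' | h'
      · exact hx h'
      · exact hMR _ m.2 ((hPc _).1 h')
    letI : Algebra A (R ⧸ P) := ((Ideal.Quotient.mk P).comp (algebraMap A R)).toAlgebra
    have halg : IsAlgebraic A (Ideal.Quotient.mk P r) := by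
      obtain ⟨p, hp0, hp⟩ := hY₀.isAlgebraic.isAlgebraic (Ideal.Quotient.mk P r)
      refine ⟨p.map hY₀.1.aevalEquiv.symm.toRingEquiv.toRingHom, ?_, ?_⟩
      · exact (Polynomial.map_ne_zero_iff hY₀.1.aevalEquiv.symm.toRingEquiv.injective).2 hp0
      · rw [Polynomial.aeval_def, Polynomial.eval₂_map]
        rw [Polynomial.aeval_def] at hp
        have he : (algebraMap A (R ⧸ P)).comp hY₀.1.aevalEquiv.symm.toRingEquiv.toRingHom =
          algebraMap (Algebra.adjoin k (Set.range Y₀)) (R ⧸ P) := ?_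
        · rw [he]
          exact hp
        refine RingHom.ext fun x => ?_
        obtain ⟨y, rfl⟩ := hY₀.1.aevalEquiv.surjective x
        change Ideal.Quotient.mk P (f (hY₀.1.aevalEquiv.symm (hY₀.1.aevalEquiv y))) = _
        rw [AlgEquiv.symm_apply_apply, hfmk]
        exact (hY₀.1.algebraMap_aevalEquiv y).symm
    obtain ⟨a, ha, y, hy⟩ := halg.exists_nonzero_dvd
      (mem_nonZeroDivisors_of_ne_zero (by rwa [Ne, Ideal.Quotient.eq_zero_iff_mem]))
    obtain ⟨y, rfl⟩ := Ideal.Quotient.mk_surjective y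
    have hmem : f a - r * y ∈ P := by
      rw [← Ideal.Quotient.eq_zero_iff_mem, map_sub, map_mul, ← hy, sub_eq_zero]; rfl
    have hJ1 : algebraMap R R' (f a) ∈ J := by
      have h1 : algebraMap R R' (f a - r * y) ∈ J := hJ ((hPc _).2 hmem)
      have h2 : algebraMap R R' (r * y) ∈ J := by
        rw [map_mul, ← h, mul_assoc]
        exact J.mul_mem_right _ hxJ
      have := add_mem h1 h2
      rwa [← map_add, sub_add_cancel] at this
    have hu : IsUnit (algebraMap R R' (f a)) :=
      IsLocalization.map_units R' (⟨f a, a, mem_nonZeroDivisors_of_ne_zero ha, rfl⟩ : MR)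
    rw [← Ideal.eq_top_iff_one]
    exact Ideal.eq_top_of_isUnit_mem _ hJ1 hu
  obtain ⟨j, hj⟩ := exists_symb_le_pow_of_isMaximal (k := k') Q' P' rfl l
  refine ⟨j, fun a ha => ?_⟩
  have h1 : algebraMap R' S' (algebraMap R R' a) ∈ Q'.symb j := by
    rw [hcompR]
    obtain ⟨u, hu, hua⟩ := Ideal.mem_symb.1 ha
    refine Ideal.mem_symb.2 ⟨algebraMap S S' u, fun h => hu ((hQc u).1 h), ?_⟩
    rw [← map_mul, ← Ideal.map_pow]
    exact Ideal.mem_map_of_mem _ hua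
  have h2 := hj _ h1
  rw [hP'map, ← Ideal.map_pow, IsLocalization.mem_map_algebraMap_iff MR] at h2
  obtain ⟨⟨⟨x, hx⟩, ⟨m, hm⟩⟩, h3⟩ := h2
  refine Ideal.mem_symb.2 ⟨m, hMR m hm, ?_⟩
  have h3' : algebraMap R R' a * algebraMap R R' m = algebraMap R R' x := h3
  rw [← map_mul] at h3'
  rw [mul_comm, IsLocalization.injective R' hMR0 h3']
  exact hx

/-! ### Lengths over local Artinian rings -/

/-- Restriction of scalars along a homomorphism onto the residue field does not increase lengths. -/
theorem length_le_length_of_residue {A B : Type*} [CommRing A] [CommRing B] [IsLocalRing B]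
    [Algebra A B] (hres : ∀ x : B, ∃ y : A, x - algebraMap A B y ∈ IsLocalRing.maximalIdeal B)
    (M : Type*) [AddCommGroup M] [Module B M] (hM : IsFiniteLength B M) :
    ∀ [Module A M] [IsScalarTower A B M], Module.length A M ≤ Module.length B M := by
  induction hM with
  | of_subsingleton => intros; simp
  | @of_simple_quotient M _ _ N hs hN ih =>
    intro _ _
    have hA : Module.length A M = Module.length A N + Module.length A (M ⧸ N) :=
      Module.length_eq_add_of_exact (N.subtype.restrictScalars A) (N.mkQ.restrictScalars A)
        N.injective_subtype N.mkQ_surjective (LinearMap.exact_subtype_mkQ N)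
    have hB : Module.length B M = Module.length B N + Module.length B (M ⧸ N) :=
      Module.length_eq_add_of_exact N.subtype N.mkQ
        N.injective_subtype N.mkQ_surjective (LinearMap.exact_subtype_mkQ N)
    have hmax : IsLocalRing.maximalIdeal B ≤ Module.annihilator B (M ⧸ N) := by
      have := IsSimpleModule.annihilator_isMaximal (R := B) (M := M ⧸ N)
      rw [IsLocalRing.eq_maximalIdeal this]
    haveI : IsSimpleModule A (M ⧸ N) := by
      refine isSimpleModule_iff_toSpanSingleton_surjective.2
        ⟨(IsSimpleModule.nontrivial B (M ⧸ N)), fun v hv w => ?_⟩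
      obtain ⟨x, hx⟩ := IsSimpleModule.toSpanSingleton_surjective B hv w
      obtain ⟨y, hy⟩ := hres x
      refine ⟨y, ?_⟩
      have h0 := Module.mem_annihilator.1 (hmax hy) v
      rw [sub_smul, sub_eq_zero, algebraMap_smul] at h0
      simp only [LinearMap.toSpanSingleton_apply] at hx ⊢
      rw [← h0, hx]
    rw [hA, hB, Module.length_eq_one A (M ⧸ N), Module.length_eq_one B (M ⧸ N)]
    gcongr
    exact ih

/-- An injective ring homomorphism onto the residue field between local Artinian rings is
surjective as soon as the target is not longer than the source. -/
theorem surjective_of_length_le {A B : Type*} [CommRing A] [CommRing B] [IsLocalRing B]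
    [IsArtinianRing A] [IsArtinianRing B] (f : A →+* B) (hf : Function.Injective f)
    (hres : ∀ x : B, ∃ y : A, x - f y ∈ IsLocalRing.maximalIdeal B)
    (hlen : Module.length B B ≤ Module.length A A) : Function.Surjective f := by
  letI := f.toAlgebra
  have hfin : IsFiniteLength B B := (isArtinianRing_iff_isFiniteLength B).1 inferInstance
  have h1 : Module.length A B ≤ Module.length B B := length_le_length_of_residue hres B hfin
  have hAfin : Module.length A A ≠ ⊤ :=
    Module.length_ne_top_iff.2 ((isArtinianRing_iff_isFiniteLength A).1 inferInstance)
  have h2 : Module.length A B ≠ ⊤ := fun h => hAfin (top_le_iff.1 (h ▸ h1.trans hlen))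
  have h3 := isFiniteLength_iff_isNoetherian_isArtinian.1 (Module.length_ne_top_iff.1 h2)
  haveI := h3.1
  haveI := h3.2
  let g : A →ₗ[A] B := Algebra.linearMap A B
  by_contra hsur
  have hg : LinearMap.range g ≠ ⊤ := fun h => hsur (LinearMap.range_eq_top.1 h)
  have h4 := Submodule.length_lt hg
  rw [← (LinearEquiv.ofInjective g hf).length_eq] at h4
  exact absurd (h1.trans hlen) (not_le.2 h4)

/-- An injective endomorphism of a local Artinian ring that is onto the residue field is surjective. -/
theorem surjective_of_injective_of_residue {A : Type*} [CommRing A] [IsLocalRing A]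
    [IsArtinianRing A] (f : A →+* A) (hf : Function.Injective f)
    (hres : ∀ x : A, ∃ y : A, x - f y ∈ IsLocalRing.maximalIdeal A) : Function.Surjective f :=
  surjective_of_length_le f hf hres le_rfl

/-! ### Residue fields via diagonal ideals -/

/-- If `x ⊗ 1 - 1 ⊗ x` lies in the ideal generated by the differences `r ⊗ 1 - 1 ⊗ r` with `r ∈ R`,
then the residue of `x` at every prime `Q` lies in the subfield generated by `R`: over that subfield
`κ`, it satisfies `x ⊗ 1 = 1 ⊗ x` in the tensor square of the residue field of `Q`. -/
theorem exists_sub_mem_of_diagonal {k R S : Type*} [Field k] [CommRing R] [Algebra k R]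
    [CommRing S] [Algebra k S] [Algebra R S] [IsScalarTower k R S]
    (Q : Ideal S) [hQ : Q.IsPrime] (x : S)
    (hx : x ⊗ₜ[k] (1 : S) - (1 : S) ⊗ₜ[k] x ∈ Ideal.span
      {z : S ⊗[k] S | ∃ r : R, z = algebraMap R S r ⊗ₜ[k] (1 : S) - (1 : S) ⊗ₜ[k] algebraMap R S r}) :
    ∃ a s : R, algebraMap R S s ∉ Q ∧ algebraMap R S s * x - algebraMap R S a ∈ Q := by
  let L := FractionRing (S ⧸ Q)
  let g : S →ₐ[k] L := (IsScalarTower.toAlgHom k (S ⧸ Q) L).comp (Ideal.Quotient.mkₐ k Q)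
  have hg : ∀ y : S, g y = 0 ↔ y ∈ Q := by
    intro y
    rw [← Ideal.Quotient.eq_zero_iff_mem]
    exact map_eq_zero_iff _ (IsFractionRing.injective (S ⧸ Q) L)
  let h : R →+* L := g.toRingHom.comp (algebraMap R S)
  let K : Subfield L := Subfield.closure (h.range : Set L)
  have hhK : ∀ r, h r ∈ K := fun r => Subfield.subset_closure ⟨r, rfl⟩
  by_cases hxK : g x ∈ K
  · obtain ⟨y, hy, z, hz, hyz⟩ := Subfield.mem_closure_iff.1 hxK
    rw [Subring.closure_eq] at hy hz
    obtain ⟨a, rfl⟩ := hy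
    obtain ⟨s, rfl⟩ := hz
    by_cases hs : h s = 0
    · refine ⟨0, 1, ?_, ?_⟩
      · rw [map_one]
        exact fun h => hQ.ne_top ((Ideal.eq_top_iff_one _).2 h)
      · rw [map_one, one_mul, map_zero, sub_zero, ← hg, ← hyz, hs, div_zero]
    · refine ⟨a, s, fun h' => hs ((hg _).2 h'), ?_⟩
      rw [← hg, map_sub, map_mul, ← hyz, sub_eq_zero]
      exact mul_div_cancel₀ _ hs
  · exfalso
    have hnot : g x ∉ Submodule.span K {(1 : L)} := by
      rw [Submodule.mem_span_singleton]
      rintro ⟨c, hc⟩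
      apply hxK
      rw [← hc, Algebra.smul_def, mul_one]
      exact c.2
    obtain ⟨φ, hφx, hφ⟩ := Submodule.exists_le_ker_of_notMem hnot
    have hφ1 : φ 1 = 0 := hφ (Submodule.subset_span rfl)
    have hφr : ∀ (r : R) (y : L), (φ (h r * y) : L) = h r * (φ y : L) := by
      intro r y
      have := φ.map_smul ⟨h r, hhK r⟩ y
      rw [Algebra.smul_def] at this
      exact congrArg Subtype.val this
    have hk : ∀ c : k, algebraMap k L c = h (algebraMap k R c) := by
      intro c
      change _ = g (algebraMap R S (algebraMap k R c))
      rw [← IsScalarTower.algebraMap_apply, AlgHom.commutes]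
    let ψ : S ⊗[k] S →ₗ[k] L := TensorProduct.lift (LinearMap.mk₂ k (fun s t => (φ (g s) : L) * g t)
      (by intros; simp [add_mul])
      (by
        intro c s t
        rw [map_smul, Algebra.smul_def, Algebra.smul_def, hk, hφr, mul_assoc])
      (by intros; simp [mul_add])
      (by
        intro c s t
        rw [map_smul, mul_smul_comm]))
    have hψ : ∀ s t, ψ (s ⊗ₜ t) = (φ (g s) : L) * g t := fun s t => by simp [ψ]
    have hzero : ∀ z ∈ Ideal.span {z : S ⊗[k] S | ∃ r : R,
        z = algebraMap R S r ⊗ₜ[k] (1 : S) - (1 : S) ⊗ₜ[k] algebraMap R S r}, ψ z = 0 := by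
      intro z hz
      suffices ∀ w, ψ (w * z) = 0 by simpa using this 1
      induction hz using Submodule.span_induction with
      | zero => simp
      | add x y _ _ hx hy => intro w; rw [mul_add, map_add, hx, hy, add_zero]
      | mem z hz =>
        obtain ⟨r, rfl⟩ := hz
        intro w
        induction w using TensorProduct.induction_on with
        | zero => simp
        | add x y hx hy => rw [add_mul, map_add, hx, hy, add_zero]
        | tmul s t =>
          rw [mul_sub, Algebra.TensorProduct.tmul_mul_tmul, Algebra.TensorProduct.tmul_mul_tmul,
            map_sub, hψ, hψ, sub_eq_zero, mul_one, mul_one, map_mul g, map_mul g, mul_comm (g s)]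
          refine (congrArg (· * g t) (hφr r (g s))).trans ?_
          change g (algebraMap R S r) * _ * _ = _
          ring
      | smul a z _ hz => intro w; rw [smul_eq_mul, ← mul_assoc]; exact hz _
    have := hzero _ hx
    rw [map_sub, hψ, hψ, map_one, hφ1] at this
    simp at this
    exact hφx this

/-- The ideals of `S ⊗ S` generated by the differences `r ⊗ 1 - 1 ⊗ r`, `r ∈ F⁻ⁿ(R)`, form an
ascending chain whose members are permuted by `F ⊗ F`; hence they all agree. -/
theorem exists_sub_mem {k R S : Type*} [Field k] [CommRing R] [Algebra k R]
    [CommRing S] [Algebra k S] [Algebra.FiniteType k S] [Algebra R S] [IsScalarTower k R S]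
    (F : S ≃ₐ[k] S) (hF : ∀ r : R, F (algebraMap R S r) ∈ (algebraMap R S).range)
    (Q : Ideal S) [hQ : Q.IsPrime] (x : S) (hx : F x ∈ (algebraMap R S).range) :
    ∃ a s : R, algebraMap R S s ∉ Q ∧ algebraMap R S s * x - algebraMap R S a ∈ Q := by
  apply exists_sub_mem_of_diagonal (k := k) Q x
  let I : ℕ → Ideal (S ⊗[k] S) := fun n => Ideal.span
    {z | ∃ y : S, (F ^ n) y ∈ (algebraMap R S).range ∧ z = y ⊗ₜ[k] (1 : S) - (1 : S) ⊗ₜ[k] y}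
  have hI : Monotone I := by
    refine monotone_nat_of_le_succ fun n => Ideal.span_mono ?_
    rintro z ⟨y, ⟨r, hr⟩, rfl⟩
    refine ⟨y, ?_, rfl⟩
    rw [pow_succ', AlgEquiv.mul_apply, ← hr]
    exact hF r
  haveI : IsNoetherianRing S := Algebra.FiniteType.isNoetherianRing k S
  haveI : IsNoetherianRing (S ⊗[k] S) := Algebra.FiniteType.isNoetherianRing S _
  obtain ⟨n, hn⟩ := monotone_stabilizes_iff_noetherian.2 (inferInstance : IsNoetherian (S ⊗[k] S) _)
    ⟨I, hI⟩
  have hn1 : I (n + 1) ≤ I n := (hn (n + 1) (Nat.le_succ n)).ge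
  let Φ : S ⊗[k] S →ₐ[k] S ⊗[k] S :=
    Algebra.TensorProduct.map ((F ^ n : S ≃ₐ[k] S) : S →ₐ[k] S) ((F ^ n : S ≃ₐ[k] S) : S →ₐ[k] S)
  have hmem : ((F ^ n).symm x) ⊗ₜ[k] (1 : S) - (1 : S) ⊗ₜ[k] ((F ^ n).symm x) ∈ I n := by
    refine hn1 (Ideal.subset_span ⟨_, ?_, rfl⟩)
    rw [pow_succ', AlgEquiv.mul_apply, AlgEquiv.apply_symm_apply]
    exact hx
  have hle : I n ≤ Ideal.comap Φ (Ideal.span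
      {z : S ⊗[k] S | ∃ r : R, z = algebraMap R S r ⊗ₜ[k] (1 : S) - (1 : S) ⊗ₜ[k] algebraMap R S r}) := by
    refine Ideal.span_le.2 ?_
    rintro z ⟨y, ⟨r, hr⟩, rfl⟩
    refine Ideal.subset_span ⟨r, ?_⟩
    rw [hr]
    simp [Φ]
  have := hle hmem
  rw [Ideal.mem_comap] at this
  simpa [Φ] using this

/-! ### Denominators of fractions -/

/-- Elements of `S` that are fractions of `R` have bounded denominators: some nonzero `c : R`
has, for each of them, a power clearing its denominator.  They are tested in a residue field of
the generic fibre of `R → S`, which is finite over the fraction field of `R`. -/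
theorem exists_pow_mul_mem {k R S : Type*} [Field k] [CommRing R] [IsDomain R]
    [IsIntegrallyClosed R] [Algebra k R] [CommRing S] [IsDomain S] [Algebra k S]
    [Algebra.FiniteType k S] [Algebra R S] [IsScalarTower k R S] [FaithfulSMul R S] :
    ∃ c : R, c ≠ 0 ∧ ∀ (x : S) (a b : R), b ≠ 0 → algebraMap R S b * x = algebraMap R S a →
      ∃ (n : ℕ) (r : R), algebraMap R S (c ^ n) * x = algebraMap R S r := by
  have hRS := FaithfulSMul.algebraMap_injective R S
  let K := FractionRing R
  let M := Algebra.algebraMapSubmonoid S (nonZeroDivisors R)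
  have hM : M ≤ nonZeroDivisors S := by
    refine le_nonZeroDivisors_of_noZeroDivisors ?_
    rintro ⟨a, ha, h⟩
    exact nonZeroDivisors.ne_zero ha (hRS (h.trans (map_zero _).symm))
  let S' := Localization M
  have hle : nonZeroDivisors R ≤ M.comap (algebraMap R S) := fun a ha => ⟨a, ha, rfl⟩
  letI : Algebra K S' := (IsLocalization.map S' (algebraMap R S) hle : K →+* S').toAlgebra
  have hcomp : ∀ a : R, algebraMap K S' (algebraMap R K a) = algebraMap S S' (algebraMap R S a) :=
    fun r => IsLocalization.map_eq hle r
  haveI : IsScalarTower R K S' := IsScalarTower.of_algebraMap_eq fun r => by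
    rw [hcomp, IsScalarTower.algebraMap_apply R S S']
  haveI : Algebra.FiniteType K S' := finiteType_of_isLocalization (k := k) (A := R) (R := S)
  haveI : IsDomain S' := IsLocalization.isDomain_of_le_nonZeroDivisors S' hM
  obtain ⟨m, hm⟩ := Ideal.exists_maximal S'
  letI := Ideal.Quotient.field m
  haveI : Module.Finite K (S' ⧸ m) := finite_of_finite_type_of_isJacobsonRing K (S' ⧸ m)
  let L := S' ⧸ m
  let g : S →+* L := (Ideal.Quotient.mk m).comp (algebraMap S S')
  have hgR : ∀ r : R, g (algebraMap R S r) = algebraMap R L r := by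
    intro r
    change Ideal.Quotient.mk m (algebraMap S S' (algebraMap R S r)) = _
    rw [← IsScalarTower.algebraMap_apply R S S']
    rfl
  have hgK : ∀ r : R, algebraMap K L (algebraMap R K r) = algebraMap R L r := fun r => by
    rw [← IsScalarTower.algebraMap_apply R K L]
  have hone : ∀ y : L, ∃ c : R, c ≠ 0 ∧ IsIntegral R (algebraMap R L c * y) := by
    intro y
    have h1 : IsAlgebraic R y := (IsFractionRing.isAlgebraic_iff R K L).2
      (Algebra.IsAlgebraic.isAlgebraic (R := K) y)
    obtain ⟨c, hc, h⟩ := h1.exists_integral_multiple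
    exact ⟨c, hc, by rwa [← Algebra.smul_def]⟩
  choose d hd0 hd using hone
  obtain ⟨s, hs⟩ := (‹Algebra.FiniteType k S›).out
  let c : R := ∏ y ∈ s, d (g y)
  have hc0 : c ≠ 0 := Finset.prod_ne_zero_iff.2 fun y _ => hd0 _
  have hinteg : ∀ x : S, ∃ n : ℕ, IsIntegral R (algebraMap R L (c ^ n) * g x) := by
    intro x
    have hx : x ∈ Algebra.adjoin k (s : Set S) := hs ▸ Algebra.mem_top
    induction hx using Algebra.adjoin_induction with
    | mem x hx =>
      refine ⟨1, ?_⟩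
      obtain ⟨e, he⟩ : d (g x) ∣ c := Finset.dvd_prod_of_mem _ hx
      rw [pow_one, he, mul_comm (d _), map_mul, mul_assoc]
      exact isIntegral_algebraMap.mul (hd _)
    | algebraMap a =>
      refine ⟨0, ?_⟩
      rw [IsScalarTower.algebraMap_apply k R S, hgR, ← map_mul]
      exact isIntegral_algebraMap
    | add x y _ _ hx hy =>
      obtain ⟨n, hn⟩ := hx
      obtain ⟨m, hm⟩ := hy
      refine ⟨n + m, ?_⟩
      have : algebraMap R L (c ^ (n + m)) * g (x + y) =
        algebraMap R L (c ^ m) * (algebraMap R L (c ^ n) * g x) +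
        algebraMap R L (c ^ n) * (algebraMap R L (c ^ m) * g y) := by
        simp only [map_add, map_pow]; ring
      rw [this]
      exact (isIntegral_algebraMap.mul hn).add (isIntegral_algebraMap.mul hm)
    | mul x y _ _ hx hy =>
      obtain ⟨n, hn⟩ := hx
      obtain ⟨m, hm⟩ := hy
      refine ⟨n + m, ?_⟩
      have : algebraMap R L (c ^ (n + m)) * g (x * y) =
        (algebraMap R L (c ^ n) * g x) * (algebraMap R L (c ^ m) * g y) := by
        simp only [map_mul, map_pow]; ring
      rw [this]
      exact hn.mul hm
  refine ⟨c, hc0, fun x a b hb hx => ?_⟩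
  obtain ⟨n, hn⟩ := hinteg x
  have hbK : algebraMap R K b ≠ 0 := by simpa using hb
  let z : K := algebraMap R K (c ^ n) * (algebraMap R K a / algebraMap R K b)
  have hz : algebraMap K L z = algebraMap R L (c ^ n) * g x := by
    have h1 : algebraMap K L (algebraMap R K b) ≠ 0 := by simpa using hb
    rw [map_mul, map_div₀, hgK]
    congr 1
    rw [div_eq_iff h1, hgK, hgK, ← hgR, ← hgR, ← map_mul, mul_comm x, hx]
  rw [← hz, isIntegral_algebraMap_iff (algebraMap K L).injective] at hn
  obtain ⟨r, hr⟩ := IsIntegrallyClosed.isIntegral_iff.1 hn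
  refine ⟨n, r, ?_⟩
  have h2 : b * r = c ^ n * a := by
    apply IsFractionRing.injective R K
    rw [map_mul, map_mul, hr]
    change algebraMap R K b * (algebraMap R K (c ^ n) * (algebraMap R K a / algebraMap R K b)) = _
    rw [mul_left_comm, mul_div_cancel₀ _ hbK]
  have hb' : algebraMap R S b ≠ 0 := fun h => hb (hRS (h.trans (map_zero _).symm))
  apply mul_left_cancel₀ hb'
  rw [← map_mul, h2, map_mul, ← hx]
  ring

/-- The ideal of elements of `R` multiplying `x : S` into `R`. -/
def denomIdeal (R : Type*) {S : Type*} [CommRing R] [CommRing S] [Algebra R S] (x : S) : Ideal R :=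
  (LinearMap.range (Algebra.linearMap R S)).comap (LinearMap.toSpanSingleton R S x)

theorem mem_denomIdeal {R S : Type*} [CommRing R] [CommRing S] [Algebra R S] {x : S} {c : R} :
    c ∈ denomIdeal R x ↔ algebraMap R S c * x ∈ (algebraMap R S).range := by
  simp [denomIdeal, Algebra.smul_def]

/-- A prime denominator ideal over a normal Noetherian domain is minimal among the nonzero
primes. -/
theorem denomIdeal_minimal {R S : Type*} [CommRing R] [IsDomain R] [IsNoetherianRing R]
    [IsIntegrallyClosed R] [CommRing S] [IsDomain S] [Algebra R S] [FaithfulSMul R S] {x : S}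
    (a b : R) (hb : b ≠ 0) (hab : algebraMap R S b * x = algebraMap R S a)
    (hp : (denomIdeal R x).IsPrime) :
    denomIdeal R x ≠ ⊥ ∧
      ∀ q : Ideal R, q.IsPrime → q ≤ denomIdeal R x → q ≠ ⊥ → q = denomIdeal R x := by
  have hRS := FaithfulSMul.algebraMap_injective R S
  have hbmem : b ∈ denomIdeal R x := mem_denomIdeal.2 ⟨a, hab.symm⟩
  have hne : denomIdeal R x ≠ ⊥ := fun h => hb (by rw [h] at hbmem; exact hbmem)
  refine ⟨hne, fun q hq hqp hq0 => ?_⟩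
  let K := FractionRing R
  have hbK : algebraMap R K b ≠ 0 := by simpa using hb
  have key : ∀ c r : R, algebraMap R S c * x = algebraMap R S r ↔
      algebraMap R K c * (algebraMap R K a / algebraMap R K b) = algebraMap R K r := by
    intro c r
    have hb' : algebraMap R S b ≠ 0 := fun h => hb (hRS (h.trans (map_zero _).symm))
    have h1 : algebraMap R S c * x = algebraMap R S r ↔ c * a = r * b := by
      rw [← hRS.eq_iff, ← (mul_right_injective₀ hb').eq_iff]
      simp only [map_mul]
      rw [mul_left_comm, hab, mul_comm (algebraMap R S r)]
    rw [h1, ← (IsFractionRing.injective R K).eq_iff, mul_div_assoc', div_eq_iff hbK, map_mul, map_mul]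
  obtain ⟨c, hc, u, hu, h⟩ := exists_mul_subset_span (R := R) (K := K) (p := denomIdeal R x)
    (x := algebraMap R K a / algebraMap R K b) (by
      rintro ⟨r, hr⟩
      apply hp.ne_top
      rw [Ideal.eq_top_iff_one, mem_denomIdeal]
      exact ⟨r, ((key 1 r).2 (by rw [map_one, one_mul, hr])).symm⟩)
    (fun c hc => by
      obtain ⟨r, hr⟩ := mem_denomIdeal.1 hc
      exact ⟨r, ((key c r).1 hr.symm).symm⟩)
  exact eq_of_le_of_ne_bot hc hu h hqp hq0

/-! ### Approximation modulo symbolic powers -/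

theorem apply_mem_symb_of_ringEquiv {S : Type*} [CommRing S] (Q : Ideal S) [hQ : Q.IsPrime]
    (σ : S ≃+* S) (hσ : ∀ x, σ x ∈ Q ↔ x ∈ Q) (j : ℕ) (x : S) (hx : x ∈ Q.symb j) :
    σ x ∈ Q.symb j := by
  have hle : Q.map (σ : S →+* S) ≤ Q := Ideal.map_le_iff_le_comap.2 fun y hy => (hσ y).2 hy
  have hpow : ∀ y ∈ Q ^ j, σ y ∈ Q ^ j := by
    intro y hy
    have h1 : (σ : S →+* S) y ∈ (Q ^ j).map (σ : S →+* S) := Ideal.mem_map_of_mem _ hy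
    rw [Ideal.map_pow] at h1
    exact Ideal.pow_right_mono hle j h1
  obtain ⟨u, hu, hux⟩ := Ideal.mem_symb.1 hx
  refine Ideal.mem_symb.2 ⟨σ u, fun h => hu ((hσ u).1 h), ?_⟩
  rw [← map_mul]
  exact hpow _ hux

/-- Approximation modulo symbolic powers: the local Artinian ring `R_P / (Q^(j) ∩ R)_P` has an
injective endomorphism induced by `σ`, which is onto the residue field, hence onto. -/
theorem exists_sub_mem_symb {R S : Type*} [CommRing R] [IsNoetherianRing R] [CommRing S]
    [Algebra R S] (Q : Ideal S) [hQ : Q.IsPrime] (σ : S ≃+* S) (hσ : ∀ x, σ x ∈ Q ↔ x ∈ Q)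
    (hσR : ∀ r : R, σ (algebraMap R S r) ∈ (algebraMap R S).range)
    (hinj : Function.Injective (algebraMap R S))
    (hres : ∀ x : S, σ x ∈ (algebraMap R S).range →
      ∃ a s : R, algebraMap R S s ∉ Q ∧ algebraMap R S s * x - algebraMap R S a ∈ Q)
    (j : ℕ) (x : S) (hx : σ x ∈ (algebraMap R S).range) :
    ∃ a s : R, algebraMap R S s ∉ Q ∧ algebraMap R S s * x - algebraMap R S a ∈ Q.symb (j + 1) := by
  have hsymb : ∀ y, σ y ∈ Q.symb (j + 1) ↔ y ∈ Q.symb (j + 1) := fun y =>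
    ⟨fun h => by
      have := apply_mem_symb_of_ringEquiv Q σ.symm (fun z => by
        rw [← hσ, σ.apply_symm_apply]) _ _ h
      rwa [σ.symm_apply_apply] at this, apply_mem_symb_of_ringEquiv Q σ hσ _ _⟩
  let i := algebraMap R S
  let P : Ideal R := Q.comap i
  haveI hP : P.IsPrime := Ideal.IsPrime.comap _
  obtain ⟨τ, hτ⟩ : ∃ τ : R →+* R, ∀ r, i (τ r) = σ (i r) := by
    choose t ht using hσR
    refine ⟨⟨⟨⟨t, ?_⟩, ?_⟩, ?_, ?_⟩, ht⟩
    · apply hinj; rw [ht, map_one, map_one]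
    · intro a b; apply hinj; simp only [ht, map_mul]
    · apply hinj; change algebraMap R S (t 0) = _; rw [ht, map_zero, map_zero]
    · intro a b; apply hinj; change algebraMap R S (t (a + b)) = algebraMap R S (t a + t b)
      simp only [ht, map_add]
  have hτP : P = P.comap τ := by
    ext r
    rw [Ideal.mem_comap, Ideal.mem_comap, Ideal.mem_comap, hτ, hσ]
  have hτnot : ∀ s, τ s ∉ P ↔ s ∉ P := by
    intro s
    rw [← Ideal.mem_comap, ← hτP]
  let I : Ideal R := (Q.symb (j + 1)).comap i
  have hIτ : ∀ r, τ r ∈ I ↔ r ∈ I := by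
    intro r
    rw [Ideal.mem_comap, Ideal.mem_comap, hτ, hsymb]
  have hIsat : ∀ u r : R, u ∉ P → u * r ∈ I → r ∈ I := by
    intro u r hu h
    rw [Ideal.mem_comap, map_mul] at h
    exact Ideal.mem_symb_of_mul_mem hu h
  have hIP : I ≤ P := Ideal.comap_mono (Ideal.symb_le (Nat.succ_ne_zero j))
  have hPI : P ^ (j + 1) ≤ I :=
    (Ideal.le_comap_pow i (j + 1)).trans (Ideal.comap_mono (Ideal.pow_le_symb _))
  let RP := Localization.AtPrime P
  let q : Ideal RP := I.map (algebraMap R RP)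
  have hq : ∀ (a : R) (s : P.primeCompl), IsLocalization.mk' RP a s ∈ q ↔ a ∈ I := by
    intro a s
    constructor
    · intro h
      obtain ⟨⟨⟨c, hc⟩, u⟩, h⟩ := (IsLocalization.mem_map_algebraMap_iff P.primeCompl RP).1 h
      have h' : IsLocalization.mk' RP a s * algebraMap R RP u = algebraMap R RP c := h
      rw [mul_comm, IsLocalization.mul_mk'_eq_mk'_of_mul, IsLocalization.mk'_eq_iff_eq_mul,
        ← map_mul] at h'
      obtain ⟨v, hv⟩ := (IsLocalization.eq_iff_exists P.primeCompl RP).1 h'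
      refine hIsat u a u.2 (hIsat v _ v.2 ?_)
      rw [hv]
      exact I.mul_mem_left _ (I.mul_mem_right _ hc)
    · intro h
      rw [IsLocalization.mk'_eq_mul_mk'_one]
      exact q.mul_mem_right _ (Ideal.mem_map_of_mem _ h)
  have hqne : q ≠ ⊤ := by
    intro h
    have h1 : IsLocalization.mk' RP (1 : R) (1 : P.primeCompl) ∈ q := h ▸ Submodule.mem_top
    exact hP.ne_top ((Ideal.eq_top_iff_one _).2 (hIP ((hq _ _).1 h1)))
  let A := RP ⧸ q
  haveI : Nontrivial A := Ideal.Quotient.nontrivial_iff.2 hqne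
  haveI : IsLocalRing A := IsLocalRing.of_surjective' (Ideal.Quotient.mk q)
    Ideal.Quotient.mk_surjective
  have hmax : IsLocalRing.maximalIdeal A = (IsLocalRing.maximalIdeal RP).map (Ideal.Quotient.mk q) := by
    refine (IsLocalRing.eq_maximalIdeal ?_).symm
    refine Ideal.IsMaximal.map_of_surjective_of_ker_le Ideal.Quotient.mk_surjective ?_
    rw [Ideal.mk_ker]
    exact IsLocalRing.le_maximalIdeal hqne
  haveI : IsArtinianRing A := by
    rw [isArtinianRing_iff_isNilpotent_maximalIdeal]
    refine ⟨j + 1, ?_⟩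
    rw [hmax, ← Ideal.map_pow, ← Localization.AtPrime.map_eq_maximalIdeal, ← Ideal.map_pow,
      Ideal.zero_eq_bot, Ideal.map_eq_bot_iff_le_ker, Ideal.mk_ker]
    exact Ideal.map_mono hPI
  let σP : RP →+* RP := Localization.localRingHom P P τ hτP
  have hσP : ∀ (a : R) (s : P.primeCompl), σP (IsLocalization.mk' RP a s) =
      IsLocalization.mk' RP (τ a) (⟨τ s, (hτnot s).2 s.2⟩ : P.primeCompl) := fun a s =>
    Localization.localRingHom_mk' P P τ hτP a s
  have hσq : ∀ z, σP z ∈ q ↔ z ∈ q := by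
    intro z
    obtain ⟨a, s, rfl⟩ := IsLocalization.exists_mk'_eq P.primeCompl z
    rw [hσP, hq, hq, hIτ]
  let f : A →+* A := Ideal.quotientMap q σP fun z hz => (hσq z).2 hz
  have hf : Function.Injective f := Ideal.quotientMap_injective' fun z hz => (hσq z).1 hz
  have hR : ∀ b : R, ∃ a s : R, s ∉ P ∧ τ s * b - τ a ∈ P := by
    intro b
    obtain ⟨a, s, hs, has⟩ := hres (σ.symm (i b)) ⟨b, (σ.apply_symm_apply _).symm⟩
    refine ⟨a, s, hs, ?_⟩
    rw [← hσ, map_sub, map_mul, σ.apply_symm_apply, ← hτ, ← hτ, ← map_mul, ← map_sub] at has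
    exact has
  have hsurj := surjective_of_injective_of_residue f hf (by
    intro z
    obtain ⟨z, rfl⟩ := Ideal.Quotient.mk_surjective z
    obtain ⟨b, t, rfl⟩ := IsLocalization.exists_mk'_eq P.primeCompl z
    obtain ⟨a, s, hs, hb⟩ := hR b
    obtain ⟨a', s', hs', ht⟩ := hR t
    have ha' : a' ∉ P := by
      rw [← hτnot]
      intro h
      rcases hP.mem_or_mem ((P.sub_mem_iff_left h).1 ht) with h | h
      · exact (hτnot _).2 hs' h
      · exact t.2 h
    refine ⟨Ideal.Quotient.mk q (IsLocalization.mk' RP (a * s') (⟨s, hs⟩ * ⟨a', ha'⟩ : P.primeCompl)), ?_⟩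
    change Ideal.Quotient.mk q _ - Ideal.Quotient.mk q (σP _) ∈ _
    rw [← map_sub, hσP, ← IsLocalization.mk'_sub, hmax]
    refine Ideal.mem_map_of_mem _ ((IsLocalization.AtPrime.mk'_mem_maximal_iff RP P _ _).2 ?_)
    have : b * τ (s * a') - τ (a * s') * t =
        τ a' * (τ s * b - τ a) - τ a * (τ s' * t - τ a') := by
      rw [map_mul, map_mul]; ring
    change b * τ (s * a') - τ (a * s') * t ∈ P
    rw [this]
    exact sub_mem (P.mul_mem_left _ hb) (P.mul_mem_left _ ht))
  obtain ⟨b, hb⟩ := hx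
  obtain ⟨y, hy⟩ := hsurj (Ideal.Quotient.mk q (algebraMap R RP b))
  obtain ⟨y, rfl⟩ := Ideal.Quotient.mk_surjective y
  obtain ⟨a, s, rfl⟩ := IsLocalization.exists_mk'_eq P.primeCompl y
  refine ⟨a, s, s.2, ?_⟩
  change Ideal.Quotient.mk q (σP _) = _ at hy
  rw [eq_comm, Ideal.Quotient.eq, hσP, ← IsLocalization.mk'_one (M := P.primeCompl) RP b,
    ← IsLocalization.mk'_sub, hq] at hy
  have h1 : b * τ s - τ a * 1 ∈ I := hy
  rw [mul_one, Ideal.mem_comap, map_sub, map_mul, hτ, hτ, hb, ← map_mul, ← map_sub, hsymb,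
    mul_comm] at h1
  exact h1

/-- If `x = a / b` is approximated by elements of `R_P` to every order along `Q`, then
`x ∈ R_P`. -/
theorem exists_mul_mem_of_approx {R S : Type*} [CommRing R] [IsNoetherianRing R] [CommRing S]
    [IsDomain S] [Algebra R S] (hinj : Function.Injective (algebraMap R S))
    (Q : Ideal S) [hQ : Q.IsPrime] (P : Ideal R) [hP : P.IsPrime]
    (hPQ : P = Q.comap (algebraMap R S))
    (hZ : ∀ l, ∃ j, ∀ a : R, algebraMap R S a ∈ Q.symb j → a ∈ P.symb l)
    (x : S) (a b : R) (hb : b ≠ 0) (hab : algebraMap R S b * x = algebraMap R S a)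
    (happ : ∀ j, ∃ y s : R, algebraMap R S s ∉ Q ∧
      algebraMap R S s * x - algebraMap R S y ∈ Q.symb (j + 1)) :
    ∃ u ∉ P, algebraMap R S u * x ∈ (algebraMap R S).range := by
  have h1 : ∀ l, ∃ y s : R, s ∉ P ∧ s * a - b * y ∈ P.symb l := by
    intro l
    obtain ⟨j, hj⟩ := hZ l
    obtain ⟨y, s, hs, h⟩ := happ j
    refine ⟨y, s, by rwa [hPQ], hj _ ?_⟩
    rw [map_sub, map_mul, map_mul, ← hab, mul_left_comm, ← mul_sub]
    exact Ideal.mul_mem_left _ _ (Ideal.symb_anti (Nat.le_succ j) h)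
  let RP := Localization.AtPrime P
  let I : Ideal RP := Ideal.span {algebraMap R RP b}
  have h2 : ∀ l, I.mkQ (algebraMap R RP a) ∈
      (IsLocalRing.maximalIdeal RP ^ l • ⊤ : Submodule RP (RP ⧸ I)) := by
    intro l
    obtain ⟨y, s, hs, h⟩ := h1 l
    obtain ⟨u, hu, h⟩ := Ideal.mem_symb.1 h
    have hun : IsUnit (algebraMap R RP (u * s)) :=
      IsLocalization.map_units RP (⟨u * s, fun h => (hP.mem_or_mem h).elim hu hs⟩ : P.primeCompl)
    have h3 : algebraMap R RP (u * (s * a - b * y)) ∈ IsLocalRing.maximalIdeal RP ^ l := by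
      rw [← Localization.AtPrime.map_eq_maximalIdeal, ← Ideal.map_pow]
      exact Ideal.mem_map_of_mem _ h
    have h4 : algebraMap R RP (u * s) • I.mkQ (algebraMap R RP a) =
        algebraMap R RP (u * (s * a - b * y)) • I.mkQ 1 := by
      rw [← map_smul I.mkQ, ← map_smul I.mkQ, ← sub_eq_zero, ← map_sub I.mkQ, Submodule.mkQ_apply,
        Submodule.Quotient.mk_eq_zero]
      have : algebraMap R RP (u * s) • algebraMap R RP a -
          algebraMap R RP (u * (s * a - b * y)) • 1 = algebraMap R RP (u * y) * algebraMap R RP b := by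
        simp only [smul_eq_mul, mul_one, ← map_mul, ← map_sub]
        congr 1
        ring
      rw [this]
      exact Ideal.mul_mem_left _ _ (Ideal.subset_span rfl)
    have h5 : algebraMap R RP (u * s) • I.mkQ (algebraMap R RP a) ∈
        (IsLocalRing.maximalIdeal RP ^ l • ⊤ : Submodule RP (RP ⧸ I)) := by
      rw [h4]
      exact Submodule.smul_mem_smul h3 Submodule.mem_top
    obtain ⟨v, hv⟩ := hun
    rw [← hv] at h5
    have h6 := Submodule.smul_mem _ (↑v⁻¹ : RP) h5
    rwa [smul_smul, Units.inv_mul, one_smul] at h6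
  have h3 : I.mkQ (algebraMap R RP a) ∈
      (⨅ l : ℕ, IsLocalRing.maximalIdeal RP ^ l • ⊤ : Submodule RP (RP ⧸ I)) :=
    Submodule.mem_iInf _ |>.2 h2
  rw [Ideal.iInf_pow_smul_eq_bot_of_isLocalRing _ (IsLocalRing.maximalIdeal.isMaximal RP).ne_top,
    Submodule.mem_bot, Submodule.mkQ_apply, Submodule.Quotient.mk_eq_zero,
    Ideal.mem_span_singleton] at h3
  obtain ⟨z, hz⟩ := h3
  obtain ⟨c, s, rfl⟩ := IsLocalization.exists_mk'_eq P.primeCompl z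
  rw [IsLocalization.mul_mk'_eq_mk'_of_mul, IsLocalization.eq_mk'_iff_mul_eq, ← map_mul] at hz
  obtain ⟨v, hv⟩ := (IsLocalization.eq_iff_exists P.primeCompl RP).1 hz
  refine ⟨v * s, (v * s).2, v * c, ?_⟩
  have hb' : algebraMap R S b ≠ 0 := fun h => hb (hinj (h.trans (map_zero _).symm))
  apply mul_left_cancel₀ hb'
  rw [mul_left_comm, hab, ← map_mul, ← map_mul]
  congr 1
  linear_combination -hv

/-! ### Minimal primes and automorphisms -/

/-- Every prime containing the denominator ideal of a fraction contains a minimal nonzero prime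
containing it. -/
theorem exists_minimal_prime_denomIdeal {R S : Type*} [CommRing R] [IsDomain R]
    [IsNoetherianRing R] [IsIntegrallyClosed R] [CommRing S] [IsDomain S] [Algebra R S]
    [FaithfulSMul R S] {x : S} (a b : R) (hb : b ≠ 0)
    (hab : algebraMap R S b * x = algebraMap R S a) (p' : Ideal R) [p'.IsPrime]
    (hp' : denomIdeal R x ≤ p') :
    ∃ p : Ideal R, p.IsPrime ∧ p ≤ p' ∧ denomIdeal R x ≤ p ∧ p ≠ ⊥ ∧
      ∀ q : Ideal R, q.IsPrime → q ≤ p → q ≠ ⊥ → q = p := by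
  obtain ⟨p, hp, hpp'⟩ := Ideal.exists_minimalPrimes_le hp'
  have h1 : (denomIdeal R x).colon {(1 : R)} = denomIdeal R x := by
    ext c
    rw [Submodule.mem_colon_singleton, smul_eq_mul, mul_one]
  have hp2 : p ∈ ((denomIdeal R x).colon {(1 : R)}).minimalPrimes := by rwa [h1]
  obtain ⟨s, hs⟩ := Submodule.exists_eq_colon_of_mem_minimalPrimes hp2
  have hps : p = denomIdeal R (algebraMap R S s * x) := by
    rw [hs]
    ext c
    rw [Submodule.mem_colon_singleton, smul_eq_mul, mem_denomIdeal, mem_denomIdeal, map_mul,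
      mul_assoc]
  have hpr : p.IsPrime := hp.1.1
  have hab' : algebraMap R S b * (algebraMap R S s * x) = algebraMap R S (s * a) := by
    rw [mul_left_comm, hab, map_mul]
  have := denomIdeal_minimal (s * a) b hb hab' (hps ▸ hpr)
  rw [← hps] at this
  exact ⟨p, hpr, hpp', hp.1.2, this⟩

/-- In a Noetherian ring, an ideal mapped into itself by an automorphism is also mapped onto itself. -/
theorem comap_eq_of_le_comap {S : Type*} [CommRing S] [IsNoetherianRing S] (F : S ≃+* S)
    (J : Ideal S) (h : ∀ x ∈ J, F x ∈ J) (x : S) : F x ∈ J ↔ x ∈ J := by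
  refine ⟨fun hx => ?_, h x⟩
  let I : ℕ → Ideal S := fun n => J.comap ((F ^ n : S ≃+* S) : S →+* S)
  have hI : Monotone I := by
    refine monotone_nat_of_le_succ fun n x hx => ?_
    change (F ^ (n + 1)) x ∈ J
    rw [pow_succ', RingAut.mul_apply]
    exact h _ hx
  obtain ⟨n, hn⟩ := monotone_stabilizes_iff_noetherian.2 (inferInstance : IsNoetherian S S) ⟨I, hI⟩
  have h1 : (F ^ n).symm x ∈ I (n + 1) := by
    change (F ^ (n + 1)) _ ∈ J
    rw [pow_succ', RingAut.mul_apply, RingEquiv.apply_symm_apply]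
    exact hx
  have h2 : (F ^ n).symm x ∈ I n := (hn (n + 1) (Nat.le_succ n)).ge h1
  change (F ^ n) _ ∈ J at h2
  rwa [RingEquiv.apply_symm_apply] at h2

/-- Some power of an automorphism preserving `J` fixes a minimal prime of `J`. -/
theorem exists_pow_fixes_minimalPrime {S : Type*} [CommRing S] [IsNoetherianRing S] (F : S ≃+* S)
    (J : Ideal S) (hJ : J ≠ ⊤) (h : ∀ x, F x ∈ J ↔ x ∈ J) :
    ∃ (Q : Ideal S) (N : ℕ), Q.IsPrime ∧ J ≤ Q ∧ 0 < N ∧ ∀ x, (F ^ N) x ∈ Q ↔ x ∈ Q := by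
  obtain ⟨m, hm, hJm⟩ := Ideal.exists_le_maximal J hJ
  haveI := hm.isPrime
  obtain ⟨Q, hQ, -⟩ := Ideal.exists_minimalPrimes_le hJm
  haveI hQp : Q.IsPrime := hQ.1.1
  have hpow : ∀ (n : ℕ) x, (F ^ n) x ∈ J ↔ x ∈ J := by
    intro n
    induction n with
    | zero => intro x; rfl
    | succ n ih => intro x; rw [pow_succ', RingAut.mul_apply, h, ih]
  have hmem : ∀ n : ℕ, Q.comap ((F ^ n : S ≃+* S) : S →+* S) ∈ J.minimalPrimes := by
    intro n
    refine ⟨⟨Ideal.IsPrime.comap _, fun x hx => hQ.1.2 ((hpow n x).2 hx)⟩, ?_⟩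
    rintro q ⟨hq, hJq⟩ hle x hx
    have h1 : J ≤ q.comap ((F ^ n).symm : S →+* S) := fun y hy => hJq (by
      rw [← hpow n]
      change (F ^ n) ((F ^ n).symm y) ∈ J
      rwa [RingEquiv.apply_symm_apply])
    have h2 : q.comap ((F ^ n).symm : S →+* S) ≤ Q := fun y hy => by
      have : (F ^ n) ((F ^ n).symm y) ∈ Q := hle hy
      rwa [RingEquiv.apply_symm_apply] at this
    have h3 : (F ^ n).symm ((F ^ n) x) ∈ q := hQ.2 ⟨Ideal.IsPrime.comap _, h1⟩ h2 hx
    rwa [RingEquiv.symm_apply_apply] at h3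
  have hfin := J.finite_minimalPrimes_of_isNoetherianRing S
  obtain ⟨a, b, hab, heq⟩ := Set.Finite.exists_lt_map_eq_of_forall_mem hmem hfin
  refine ⟨Q, b - a, hQp, hQ.1.2, Nat.sub_pos_of_lt hab, fun x => ?_⟩
  have h1 : (F ^ a).symm x ∈ Q.comap ((F ^ a : S ≃+* S) : S →+* S) ↔
    (F ^ a).symm x ∈ Q.comap ((F ^ b : S ≃+* S) : S →+* S) := by rw [heq]
  change (F ^ a) ((F ^ a).symm x) ∈ Q ↔ (F ^ b) ((F ^ a).symm x) ∈ Q at h1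
  rw [RingEquiv.apply_symm_apply] at h1
  have h2 : (F ^ b) ((F ^ a).symm x) = (F ^ (b - a)) x := by
    conv_lhs => rw [← Nat.sub_add_cancel hab.le, pow_add, RingAut.mul_apply,
      RingEquiv.apply_symm_apply]
  rw [h1, h2]

/-! ### The normal case -/

/-- The theorem for normal `R`, with height-one primes described as the minimal nonzero primes: if
`F x ∈ R` then `x ∈ R`. -/
theorem mem_range_of_normal.{u} {k : Type*} {R S : Type u} [Field k] [CharZero k]
    [CommRing R] [IsDomain R] [IsIntegrallyClosed R] [Algebra k R] [Algebra.FiniteType k R]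
    [CommRing S] [IsDomain S] [Algebra k S] [Algebra.FiniteType k S]
    [Algebra R S] [IsScalarTower k R S] [FaithfulSMul R S]
    (hht : ∀ p : Ideal R, p.IsPrime → p ≠ ⊥ →
      (∀ q : Ideal R, q.IsPrime → q ≤ p → q ≠ ⊥ → q = p) → p.map (algebraMap R S) ≠ ⊤)
    (F : S ≃ₐ[k] S) (hF : ∀ r : R, F (algebraMap R S r) ∈ (algebraMap R S).range)
    (x : S) (hx : F x ∈ (algebraMap R S).range) : x ∈ (algebraMap R S).range := by
  by_contra hxR
  haveI : IsNoetherianRing R := Algebra.FiniteType.isNoetherianRing k R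
  haveI : IsNoetherianRing S := Algebra.FiniteType.isNoetherianRing k S
  have hinj := FaithfulSMul.algebraMap_injective R S
  have hFn : ∀ (n : ℕ) (r : R), (F ^ n) (algebraMap R S r) ∈ (algebraMap R S).range := by
    intro n
    induction n with
    | zero => exact fun r => ⟨r, rfl⟩
    | succ n ih =>
      intro r
      obtain ⟨r', hr'⟩ := ih r
      rw [pow_succ', AlgEquiv.mul_apply, ← hr']
      exact hF r'
  have hFmono : ∀ (n m : ℕ) (y : S), n ≤ m → (F ^ n) y ∈ (algebraMap R S).range →
      (F ^ m) y ∈ (algebraMap R S).range := by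
    rintro n m y hnm ⟨r, hr⟩
    rw [← Nat.sub_add_cancel hnm, pow_add, AlgEquiv.mul_apply, ← hr]
    exact hFn _ r
  have hfrac : ∀ (n : ℕ) (y : S), (F ^ n) y ∈ (algebraMap R S).range →
      ∃ a b : R, b ≠ 0 ∧ algebraMap R S b * y = algebraMap R S a := by
    intro n y hy
    obtain ⟨a, b, hb, hab⟩ := exists_sub_mem (k := k) (F ^ n) (hFn n) (⊥ : Ideal S) y hy
    refine ⟨a, b, fun h => hb (by rw [h, map_zero]; exact Ideal.zero_mem _), ?_⟩
    exact sub_eq_zero.1 (Ideal.mem_bot.1 hab)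
  -- The conductor-like ideal: its zero locus is the union of the polar loci of all `y` with
  -- `Fⁿ y ∈ R`.
  let D : Ideal R := ⨅ (n : ℕ) (y : S) (_ : (F ^ n) y ∈ (algebraMap R S).range),
    (denomIdeal R y).radical
  have hD : ∀ c, c ∈ D ↔ ∀ (n : ℕ) (y : S), (F ^ n) y ∈ (algebraMap R S).range →
      c ∈ (denomIdeal R y).radical := by
    intro c
    simp only [D, Ideal.mem_iInf]
  have hDF : ∀ y ∈ D.map (algebraMap R S), F y ∈ D.map (algebraMap R S) := by
    have : D.map (algebraMap R S) ≤ (D.map (algebraMap R S)).comap (F : S →+* S) := by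
      rw [Ideal.map_le_iff_le_comap]
      intro c hc
      obtain ⟨c', hc'⟩ := hF c
      change F (algebraMap R S c) ∈ D.map (algebraMap R S)
      rw [← hc']
      refine Ideal.mem_map_of_mem _ ((hD c').2 fun n y hy => ?_)
      have h1 : (F ^ (n + 1)) (F.symm y) ∈ (algebraMap R S).range := by
        rwa [pow_succ, AlgEquiv.mul_apply, AlgEquiv.apply_symm_apply]
      obtain ⟨m, hm⟩ := (hD c).1 hc _ _ h1
      obtain ⟨r, hr⟩ := mem_denomIdeal.1 hm
      refine ⟨m, mem_denomIdeal.2 ?_⟩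
      have h2 : F (algebraMap R S r) = algebraMap R S (c' ^ m) * y := by
        rw [hr, map_mul F, map_pow, map_pow F, ← hc', AlgEquiv.apply_symm_apply, map_pow]
      rw [← h2]
      exact hF r
    exact fun y hy => this hy
  have hDtop : D.map (algebraMap R S) ≠ ⊤ := by
    have h1 : denomIdeal R x ≠ ⊤ := by
      intro h
      have : (1 : R) ∈ denomIdeal R x := h ▸ Submodule.mem_top
      rw [mem_denomIdeal, map_one, one_mul] at this
      exact hxR this
    obtain ⟨p', hp', hle⟩ := Ideal.exists_le_maximal _ h1
    haveI := hp'.isPrime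
    have hx1 : (F ^ 1) x ∈ (algebraMap R S).range := by rwa [pow_one]
    obtain ⟨a, b, hb, hab⟩ := hfrac 1 x hx1
    obtain ⟨p, hp, -, hxp, hp0, hpmin⟩ := exists_minimal_prime_denomIdeal a b hb hab p' hle
    have hDp : D ≤ p := fun c hc => (hp.radical_le_iff.2 hxp) ((hD c).1 hc 1 x hx1)
    exact fun h => hht p hp hp0 hpmin (top_le_iff.1 (h ▸ Ideal.map_mono hDp))
  obtain ⟨Q, N, hQ, hDQ, hN, hNQ⟩ := exists_pow_fixes_minimalPrime F.toRingEquiv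
    (D.map (algebraMap R S)) hDtop (comap_eq_of_le_comap F.toRingEquiv _ hDF)
  have hpow : ∀ (n : ℕ) (y : S), (F.toRingEquiv ^ n) y = (F ^ n) y := by
    intro n
    induction n with
    | zero => exact fun y => rfl
    | succ n ih => intro y; rw [pow_succ', RingAut.mul_apply, ih, pow_succ', AlgEquiv.mul_apply]; rfl
  have hNnQ : ∀ (n : ℕ) (y : S), (F ^ (N * n)) y ∈ Q ↔ y ∈ Q := by
    intro n
    induction n with
    | zero => exact fun y => Iff.rfl
    | succ n ih => intro y; rw [Nat.mul_succ, pow_add, AlgEquiv.mul_apply, ih, ← hpow, hNQ]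
  let P := Q.comap (algebraMap R S)
  haveI hP : P.IsPrime := Ideal.IsPrime.comap _
  have hDP : D ≤ P := Ideal.map_le_iff_le_comap.1 hDQ
  -- Every `y` with `Fⁿ y ∈ R` lies in `R_P`, although `P` contains `D`.
  have hreg : ∀ (n : ℕ) (y : S), (F ^ n) y ∈ (algebraMap R S).range →
      ∃ u ∉ P, u ∈ denomIdeal R y := by
    intro n y hy
    obtain ⟨a, b, hb, hab⟩ := hfrac n y hy
    have hy' := hFmono n (N * n) y (Nat.le_mul_of_pos_left n hN) hy
    obtain ⟨u, hu, huy⟩ := exists_mul_mem_of_approx hinj Q P rfl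
      (exists_symb_le_symb (k := k) Q P rfl) y a b hb hab fun j =>
        exists_sub_mem_symb Q (F ^ (N * n)).toRingEquiv (hNnQ n) (hFn (N * n)) hinj
          (fun z hz => exists_sub_mem (k := k) (F ^ (N * n)) (hFn (N * n)) Q z hz) j y hy'
    exact ⟨u, hu, mem_denomIdeal.2 huy⟩
  obtain ⟨c, hc0, hc⟩ := exists_pow_mul_mem (k := k) (R := R) (S := S)
  -- All polar loci are unions of components of `c = 0`; choosing in each component not through `P`
  -- a function `z` not vanishing at `P` gives an element of `D` outside `P`.
  have hfin : {p ∈ (Ideal.span {c}).minimalPrimes | ¬ p ≤ P}.Finite :=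
    ((Ideal.span {c}).finite_minimalPrimes_of_isNoetherianRing R).subset fun p hp => hp.1
  have hch : ∀ p : Ideal R, ∃ z : R, ¬ p ≤ P → z ∈ p ∧ z ∉ P := by
    intro p
    by_cases h : p ≤ P
    · exact ⟨0, fun h' => (h' h).elim⟩
    · obtain ⟨z, hz⟩ := Set.not_subset.1 h
      exact ⟨z, fun _ => hz⟩
  choose z hz using hch
  have hyP : ∏ p ∈ hfin.toFinset, z p ∉ P := by
    intro h
    obtain ⟨p, hp, hpz⟩ := (hP.prod_mem_iff).1 h
    exact (hz p ((hfin.mem_toFinset).1 hp).2).2 hpz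
  refine hyP (hDP ((hD _).2 fun n r hr => ?_))
  obtain ⟨a, b, hb, hab⟩ := hfrac n r hr
  obtain ⟨u, hu, hur⟩ := hreg n r hr
  rw [Ideal.radical_eq_sInf, Submodule.mem_sInf]
  rintro p' ⟨hrp', hp'⟩
  haveI := hp'
  obtain ⟨p, hp, hpp', hrp, hp0, hpmin⟩ := exists_minimal_prime_denomIdeal a b hb hab p' hrp'
  obtain ⟨m, r', hr'⟩ := hc r a b hb hab
  have hcp : c ∈ p := hp.mem_of_pow_mem m (hrp (mem_denomIdeal.2 ⟨r', hr'.symm⟩))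
  have hpc : p ∈ (Ideal.span {c}).minimalPrimes := by
    refine ⟨⟨hp, (Ideal.span_singleton_le_iff_mem _).2 hcp⟩, ?_⟩
    rintro q ⟨hq, hcq⟩ hqp
    refine (hpmin q hq hqp fun h => hc0 ?_).ge
    have := (Ideal.span_singleton_le_iff_mem _).1 hcq
    rw [h] at this
    exact this
  have hpP : ¬ p ≤ P := fun h => hu (h (hrp hur))
  exact hpp' (Ideal.mem_of_dvd _ (Finset.dvd_prod_of_mem z (hfin.mem_toFinset.2 ⟨hpc, hpP⟩))
    (hz p hpP).1)

/-! ### Reduction to the normalization -/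

/-- If contraction is injective on maximal ideals of an integral extension, with Jacobson upper
ring, then it reflects inclusions of primes. -/
theorem le_of_comap_le_comap {R R' : Type*} [CommRing R] [CommRing R'] [IsJacobsonRing R']
    [Algebra R R'] [Algebra.IsIntegral R R']
    (hnorm : ∀ m₁ m₂ : Ideal R', m₁.IsMaximal → m₂.IsMaximal →
      m₁.comap (algebraMap R R') = m₂.comap (algebraMap R R') → m₁ = m₂)
    (p q : Ideal R') [p.IsPrime] [hq : q.IsPrime]
    (h : p.comap (algebraMap R R') ≤ q.comap (algebraMap R R')) : p ≤ q := by
  rw [← IsJacobsonRing.out' q hq.isRadical]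
  refine le_sInf ?_
  rintro m ⟨hqm, hm⟩
  haveI := hm.isPrime
  obtain ⟨m₂, hpm₂, hm₂, hcomap⟩ := Ideal.exists_ideal_over_prime_of_isIntegral
    (m.comap (algebraMap R R')) p (h.trans (Ideal.comap_mono hqm))
  haveI : (m.comap (algebraMap R R')).IsMaximal :=
    Ideal.isMaximal_comap_of_isIntegral_of_isMaximal m
  have hm₂max : m₂.IsMaximal :=
    Ideal.isMaximal_of_isIntegral_of_isMaximal_comap (R := R) m₂ (hcomap ▸ this)
  exact hpm₂.trans (hnorm m₂ m hm₂max hm hcomap).le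

/-- The passage from `R ⊆ S` to finite, respectively integral, extensions `R' ⊆ S'` with `R'` normal,
when `F` is an automorphism of `S'` preserving both `R` and `R'`. -/
theorem mem_range_of_finite_normalization.{u} {k : Type*} {R S R' S' : Type u}
    [Field k] [CharZero k]
    [CommRing R] [IsDomain R] [IsNoetherianRing R]
    [CommRing S] [IsDomain S]
    [CommRing R'] [IsDomain R'] [IsIntegrallyClosed R'] [Algebra k R'] [Algebra.FiniteType k R']
    [CommRing S'] [IsDomain S'] [Algebra k S'] [Algebra.FiniteType k S']
    [Algebra R S] [Algebra R R'] [Algebra S S'] [Algebra R' S'] [Algebra R S']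
    [IsScalarTower R R' S'] [IsScalarTower R S S'] [IsScalarTower k R' S']
    [FaithfulSMul R R'] [FaithfulSMul S S'] [FaithfulSMul R' S']
    [Module.Finite R R'] [Algebra.IsIntegral S S']
    (hnorm : ∀ m₁ m₂ : Ideal R', m₁.IsMaximal → m₂.IsMaximal →
      m₁.comap (algebraMap R R') = m₂.comap (algebraMap R R') → m₁ = m₂)
    (hht : ∀ p : Ideal R, p.IsPrime → p ≠ ⊥ →
      (∀ q : Ideal R, q.IsPrime → q ≤ p → q ≠ ⊥ → q = p) → p.map (algebraMap R S) ≠ ⊤)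
    (F : S' ≃ₐ[k] S')
    (hFR : ∀ r : R, F (algebraMap R S' r) ∈ (algebraMap R S').range)
    (hFR' : ∀ r : R', F (algebraMap R' S' r) ∈ (algebraMap R' S').range)
    (x : S) (hx : F (algebraMap S S' x) ∈ (algebraMap R S').range) :
    x ∈ (algebraMap R S).range := by
  haveI : IsJacobsonRing R' := isJacobsonRing_of_finiteType (A := k)
  have hRR' := FaithfulSMul.algebraMap_injective R R'
  -- Minimal nonzero primes of `R'` contract to minimal nonzero primes of `R`.
  have hht' : ∀ p : Ideal R', p.IsPrime → p ≠ ⊥ →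
      (∀ q : Ideal R', q.IsPrime → q ≤ p → q ≠ ⊥ → q = p) → p.map (algebraMap R' S') ≠ ⊤ := by
    intro p' hp' hp0 hpmin
    have h1 := hht (p'.comap (algebraMap R R')) (Ideal.IsPrime.comap _)
      (Ideal.IsIntegral.comap_ne_bot R hp0) (by
        intro q hq hqp hq0
        obtain ⟨q', -, hq', rfl⟩ := Ideal.exists_ideal_over_prime_of_isIntegral q (⊥ : Ideal R')
          (by
            intro a ha
            rw [Ideal.mem_comap, Ideal.mem_bot, map_eq_zero_iff _ hRR'] at ha
            rw [ha]
            exact Ideal.zero_mem _)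
        have hle := le_of_comap_le_comap hnorm q' p' hqp
        rw [hpmin q' hq' hle]
        rintro rfl
        refine hq0 ?_
        rw [eq_bot_iff]
        intro a ha
        rw [Ideal.mem_comap, Ideal.mem_bot, map_eq_zero_iff _ hRR'] at ha
        exact ha)
    -- A prime of `S'` above a maximal ideal containing `(p' ∩ R) S` contains `p'`.
    obtain ⟨M, hM, hpM⟩ := Ideal.exists_le_maximal _ h1
    haveI := hM.isPrime
    obtain ⟨M', -, hM', hM'M⟩ := Ideal.exists_ideal_over_prime_of_isIntegral M (⊥ : Ideal S')
      (by
        intro a ha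
        rw [Ideal.mem_comap, Ideal.mem_bot,
          map_eq_zero_iff _ (FaithfulSMul.algebraMap_injective S S')] at ha
        rw [ha]
        exact Ideal.zero_mem _)
    haveI : (M'.comap (algebraMap R' S')).IsPrime := Ideal.IsPrime.comap _
    have hle : p' ≤ M'.comap (algebraMap R' S') := by
      refine le_of_comap_le_comap hnorm _ _ ?_
      intro a ha
      have h2 : algebraMap R S a ∈ M := hpM (Ideal.mem_map_of_mem _ ha)
      rw [← hM'M, Ideal.mem_comap, ← IsScalarTower.algebraMap_apply R S S'] at h2
      rwa [Ideal.mem_comap, Ideal.mem_comap, ← IsScalarTower.algebraMap_apply R R' S']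
    intro h
    exact hM'.ne_top (top_le_iff.1 (h ▸ Ideal.map_le_iff_le_comap.2 hle))
  have hnormal := mem_range_of_normal hht' F hFR'
  have hFn : ∀ (n : ℕ) (r : R), (F ^ n) (algebraMap R S' r) ∈ (algebraMap R S').range := by
    intro n
    induction n with
    | zero => exact fun r => ⟨r, rfl⟩
    | succ n ih =>
      intro r
      obtain ⟨r', hr'⟩ := ih r
      rw [pow_succ', AlgEquiv.mul_apply, ← hr']
      exact hFR r'
  -- The ascending chain `F⁻ⁿ(R)` of `R`-submodules of the finite `R`-module `R'`.
  let N : ℕ → Submodule R R' := fun n =>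
    { carrier := {y | (F ^ n) (algebraMap R' S' y) ∈ (algebraMap R S').range}
      zero_mem' := by
        change (F ^ n) (algebraMap R' S' 0) ∈ (algebraMap R S').range
        rw [map_zero, map_zero]
        exact zero_mem _
      add_mem' := by
        intro y z hy hz
        change (F ^ n) (algebraMap R' S' (y + z)) ∈ (algebraMap R S').range
        rw [map_add, map_add]
        exact add_mem hy hz
      smul_mem' := by
        intro r y hy
        change (F ^ n) (algebraMap R' S' (r • y)) ∈ (algebraMap R S').range
        rw [Algebra.smul_def, map_mul, map_mul, ← IsScalarTower.algebraMap_apply R R' S']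
        exact mul_mem (hFn n r) hy }
  have hN : Monotone N := by
    refine monotone_nat_of_le_succ fun n y hy => ?_
    obtain ⟨r, hr⟩ := hy
    change (F ^ (n + 1)) (algebraMap R' S' y) ∈ (algebraMap R S').range
    rw [pow_succ', AlgEquiv.mul_apply, ← hr]
    exact hFR r
  obtain ⟨n, hn⟩ := monotone_stabilizes_iff_noetherian.2 (inferInstance : IsNoetherian R R') ⟨N, hN⟩
  have hx' : algebraMap S S' x ∈ (algebraMap R' S').range := by
    refine hnormal _ ?_
    obtain ⟨r, hr⟩ := hx
    exact ⟨algebraMap R R' r, by rw [← hr, ← IsScalarTower.algebraMap_apply R R' S']⟩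
  have hback : ∀ (n : ℕ) (z : S'), (F ^ n) z ∈ (algebraMap R' S').range →
      z ∈ (algebraMap R' S').range := by
    intro n
    induction n with
    | zero => exact fun z hz => hz
    | succ n ih =>
      intro z hz
      rw [pow_succ', AlgEquiv.mul_apply] at hz
      exact ih z (hnormal _ hz)
  obtain ⟨y, hy⟩ := hback n ((F ^ n).symm (algebraMap S S' x)) (by
    rwa [AlgEquiv.apply_symm_apply])
  have h1 : y ∈ N (n + 1) := by
    change (F ^ (n + 1)) (algebraMap R' S' y) ∈ (algebraMap R S').range
    rwa [hy, pow_succ', AlgEquiv.mul_apply, AlgEquiv.apply_symm_apply]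
  have h2 : y ∈ N n := (hn (n + 1) (Nat.le_succ n)).ge h1
  change (F ^ n) (algebraMap R' S' y) ∈ (algebraMap R S').range at h2
  rw [hy, AlgEquiv.apply_symm_apply] at h2
  obtain ⟨r, hr⟩ := h2
  refine ⟨r, FaithfulSMul.algebraMap_injective S S' ?_⟩
  rw [← hr, ← IsScalarTower.algebraMap_apply R S S']

/-- Finiteness of the normalization of an affine domain in characteristic zero. -/
theorem finite_integralClosure_fractionRing (k : Type*) {A : Type*} (K : Type*) [Field k]
    [CharZero k] [CommRing A] [IsDomain A] [Algebra k A] [Algebra.FiniteType k A] [Field K]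
    [Algebra A K] [IsFractionRing A K] : Module.Finite A (integralClosure A K) := by
  obtain ⟨d, g, hg, hfin⟩ := exists_finite_inj_algHom_of_fg k A
  let B := MvPolynomial (Fin d) k
  letI : Algebra B A := g.toRingHom.toAlgebra
  haveI : Module.Finite B A := hfin
  letI : Algebra B K := ((algebraMap A K).comp (algebraMap B A)).toAlgebra
  haveI : IsScalarTower B A K := IsScalarTower.of_algebraMap_eq fun _ => rfl
  haveI : FaithfulSMul B A := (faithfulSMul_iff_algebraMap_injective B A).2 hg
  haveI : FaithfulSMul B K := (faithfulSMul_iff_algebraMap_injective B K).2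
    ((IsFractionRing.injective A K).comp hg)
  let E := FractionRing B
  letI : Algebra E K := FractionRing.liftAlgebra B K
  haveI : IsScalarTower B E K := inferInstance
  haveI : CharZero E := charZero_of_injective_algebraMap
    ((IsFractionRing.injective B E).comp (MvPolynomial.C_injective (Fin d) k) :
      Function.Injective ((algebraMap B E).comp MvPolynomial.C))
  haveI : Algebra.IsAlgebraic B A := inferInstance
  haveI : IsLocalization (Algebra.algebraMapSubmonoid A (nonZeroDivisors B)) K :=
    inferInstance
  haveI : Module.Finite E K := Module.Finite.of_isLocalization B A (nonZeroDivisors B)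
  haveI : IsIntegralClosure (integralClosure A K) B K :=
    { algebraMap_injective := Subtype.val_injective
      isIntegral_iff := by
        intro x
        refine ⟨fun hx => ⟨⟨x, hx.tower_top⟩, rfl⟩, ?_⟩
        rintro ⟨y, rfl⟩
        exact isIntegral_trans _ y.2 }
  have h1 : Module.Finite B (integralClosure A K) := IsIntegralClosure.finite B E K _
  exact Module.Finite.of_restrictScalars_finite B A _

/-- `mem_range_of_finite_normalization` for the integral closures in the fraction fields, to which
`F` extends. -/
theorem mem_range_of_fractionRing.{u} {k : Type*} {R S K L : Type u}
    [Field k] [CharZero k]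
    [CommRing R] [IsDomain R] [Algebra k R] [Algebra.FiniteType k R]
    [CommRing S] [IsDomain S] [Algebra k S] [Algebra.FiniteType k S]
    [Algebra R S] [IsScalarTower k R S] [FaithfulSMul R S]
    [Field K] [Algebra R K] [IsFractionRing R K] [Algebra k K] [IsScalarTower k R K]
    [Field L] [Algebra S L] [IsFractionRing S L] [Algebra k L] [IsScalarTower k S L]
    [Algebra R L] [IsScalarTower R S L] [Algebra K L] [IsScalarTower R K L]
    (hnorm : ∀ m₁ m₂ : Ideal (integralClosure R K), m₁.IsMaximal → m₂.IsMaximal →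
      m₁.comap (algebraMap R (integralClosure R K)) =
        m₂.comap (algebraMap R (integralClosure R K)) → m₁ = m₂)
    (hht : ∀ p : Ideal R, p.IsPrime → p ≠ ⊥ →
      (∀ q : Ideal R, q.IsPrime → q ≤ p → q ≠ ⊥ → q = p) → p.map (algebraMap R S) ≠ ⊤)
    (F : S ≃ₐ[k] S) (hF : ∀ r : R, F (algebraMap R S r) ∈ (algebraMap R S).range)
    (x : S) (hx : F x ∈ (algebraMap R S).range) : x ∈ (algebraMap R S).range := by
  haveI : IsNoetherianRing R := Algebra.FiniteType.isNoetherianRing k R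
  haveI := finite_integralClosure_fractionRing k (A := R) K
  haveI := finite_integralClosure_fractionRing k (A := S) L
  haveI : IsScalarTower k R (integralClosure R K) :=
    IsScalarTower.of_algebraMap_eq fun c => Subtype.ext (IsScalarTower.algebraMap_apply k R K c)
  haveI : IsScalarTower k S (integralClosure S L) :=
    IsScalarTower.of_algebraMap_eq fun c => Subtype.ext (IsScalarTower.algebraMap_apply k S L c)
  haveI : Algebra.FiniteType k (integralClosure R K) :=
    Algebra.FiniteType.trans (inferInstance : Algebra.FiniteType k R) inferInstance
  haveI : Algebra.FiniteType k (integralClosure S L) :=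
    Algebra.FiniteType.trans (inferInstance : Algebra.FiniteType k S) inferInstance
  haveI : IsIntegrallyClosed (integralClosure R K) :=
    integralClosure.isIntegrallyClosedOfFiniteExtension K
  -- The inclusion `R' → S'`.
  have hφ : ∀ y : integralClosure R K, IsIntegral S (algebraMap K L y) := fun y =>
    IsIntegral.map_of_comp_eq (algebraMap R S) (algebraMap K L) (by
      rw [← IsScalarTower.algebraMap_eq, ← IsScalarTower.algebraMap_eq]) y.2
  let φ : integralClosure R K →+* integralClosure S L :=
    ((algebraMap K L).comp (integralClosure R K).val.toRingHom).codRestrict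
      (integralClosure S L) hφ
  letI : Algebra (integralClosure R K) (integralClosure S L) := φ.toAlgebra
  have hφval : ∀ y : integralClosure R K,
      ((algebraMap (integralClosure R K) (integralClosure S L) y : integralClosure S L) : L) =
        algebraMap K L y := fun y => rfl
  have hRL : ∀ r : R, ((algebraMap R (integralClosure S L) r : integralClosure S L) : L) =
      algebraMap R L r := fun r => rfl
  have hSL : ∀ r : S, ((algebraMap S (integralClosure S L) r : integralClosure S L) : L) =
      algebraMap S L r := fun r => rfl
  haveI : IsScalarTower R S (integralClosure S L) :=
    IsScalarTower.of_algebraMap_eq fun c => Subtype.ext (IsScalarTower.algebraMap_apply R S L c)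
  haveI : IsScalarTower R (integralClosure R K) (integralClosure S L) :=
    IsScalarTower.of_algebraMap_eq fun c => Subtype.ext (IsScalarTower.algebraMap_apply R K L c)
  haveI : IsScalarTower k (integralClosure R K) (integralClosure S L) :=
    IsScalarTower.of_algebraMap_eq fun c => Subtype.ext (by
      change algebraMap k L c = algebraMap K L (algebraMap k K c)
      rw [IsScalarTower.algebraMap_apply k S L, IsScalarTower.algebraMap_apply k R S,
        ← IsScalarTower.algebraMap_apply R S L, IsScalarTower.algebraMap_apply R K L,
        ← IsScalarTower.algebraMap_apply k R K])
  haveI : FaithfulSMul (integralClosure R K) (integralClosure S L) :=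
    (faithfulSMul_iff_algebraMap_injective _ _).2 fun a b h => Subtype.ext
      ((algebraMap K L).injective (congrArg Subtype.val h))
  -- The extension of `F` to an automorphism of `S'`.
  let FL : L ≃+* L := IsFractionRing.ringEquivOfRingEquiv (F : S ≃+* S)
  have hFL : ∀ s : S, FL (algebraMap S L s) = algebraMap S L (F s) := fun s =>
    IsFractionRing.ringEquivOfRingEquiv_algebraMap (F : S ≃+* S) s
  have hFLs : ∀ s : S, FL.symm (algebraMap S L s) = algebraMap S L (F.symm s) := fun s => by
    rw [RingEquiv.symm_apply_eq, hFL, AlgEquiv.apply_symm_apply]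
  have hinteg : ∀ y : integralClosure S L, FL y ∈ integralClosure S L := fun y =>
    IsIntegral.map_of_comp_eq (F : S →+* S) (FL : L →+* L) (RingHom.ext fun s => (hFL s).symm) y.2
  have hints : ∀ y : integralClosure S L, FL.symm y ∈ integralClosure S L := fun y =>
    IsIntegral.map_of_comp_eq (F.symm : S →+* S) (FL.symm : L →+* L)
      (RingHom.ext fun s => (hFLs s).symm) y.2
  let F' : integralClosure S L ≃ₐ[k] integralClosure S L :=
    { toFun := fun y => ⟨FL y, hinteg y⟩
      invFun := fun y => ⟨FL.symm y, hints y⟩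
      left_inv := fun y => Subtype.ext (FL.symm_apply_apply _)
      right_inv := fun y => Subtype.ext (FL.apply_symm_apply _)
      map_mul' := fun y z => Subtype.ext (map_mul FL _ _)
      map_add' := fun y z => Subtype.ext (map_add FL _ _)
      commutes' := fun c => Subtype.ext (by
        change FL (algebraMap k L c) = algebraMap k L c
        rw [IsScalarTower.algebraMap_apply k S L, hFL, AlgEquiv.commutes]) }
  have hF'val : ∀ y, ((F' y : integralClosure S L) : L) = FL y := fun y => rfl
  have hF'S : ∀ s : S, F' (algebraMap S (integralClosure S L) s) =
      algebraMap S (integralClosure S L) (F s) := fun s => Subtype.ext (hFL s)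
  have hFR : ∀ r : R, F' (algebraMap R (integralClosure S L) r) ∈
      (algebraMap R (integralClosure S L)).range := by
    intro r
    obtain ⟨r', hr'⟩ := hF r
    refine ⟨r', ?_⟩
    rw [IsScalarTower.algebraMap_apply R S (integralClosure S L), hr',
      IsScalarTower.algebraMap_apply R S (integralClosure S L), hF'S]
  have hRS := FaithfulSMul.algebraMap_injective R S
  -- The restriction of `F` to `R` extends to an endomorphism of the field `K`.
  choose f hf using hF
  let fR : R →+* R :=
    { toFun := f
      map_one' := hRS (by rw [hf, map_one, map_one])
      map_mul' := fun a b => hRS (by rw [hf, map_mul, map_mul F, map_mul, hf, hf])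
      map_zero' := hRS (by rw [hf, map_zero, map_zero])
      map_add' := fun a b => hRS (by rw [hf, map_add, map_add F, map_add, hf, hf]) }
  have hfR : Function.Injective fR := fun a b h => hRS (F.injective (by
    rw [← hf, ← hf]; exact congrArg _ h))
  let fK : K →+* K := IsFractionRing.map hfR
  have hfK : ∀ r : R, fK (algebraMap R K r) = algebraMap R K (f r) := fun r =>
    IsLocalization.map_eq _ r
  have hcomm : ∀ y : K, FL (algebraMap K L y) = algebraMap K L (fK y) := by
    intro y
    have : (FL : L →+* L).comp (algebraMap K L) = (algebraMap K L).comp fK := by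
      refine IsLocalization.ringHom_ext (nonZeroDivisors R) (RingHom.ext fun r => ?_)
      change FL (algebraMap K L (algebraMap R K r)) = algebraMap K L (fK (algebraMap R K r))
      rw [hfK, ← IsScalarTower.algebraMap_apply R K L, ← IsScalarTower.algebraMap_apply R K L,
        IsScalarTower.algebraMap_apply R S L, IsScalarTower.algebraMap_apply R S L, hFL, hf]
    exact RingHom.congr_fun this y
  have hFR' : ∀ r : integralClosure R K, F' (algebraMap _ (integralClosure S L) r) ∈
      (algebraMap (integralClosure R K) (integralClosure S L)).range := by
    intro r
    have : IsIntegral R (fK r) := IsIntegral.map_of_comp_eq fR fK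
      (RingHom.ext fun s => (hfK s).symm) r.2
    exact ⟨⟨fK r, this⟩, Subtype.ext (hcomm r).symm⟩
  refine mem_range_of_finite_normalization (k := k) (R' := integralClosure R K)
    (S' := integralClosure S L) hnorm hht F' hFR hFR' x ?_
  obtain ⟨r, hr⟩ := hx
  exact ⟨r, by rw [hF'S, ← hr, IsScalarTower.algebraMap_apply R S (integralClosure S L)]⟩

theorem heightOf_eq_one {R : Type*} [CommRing R] [IsDomain R] (p : Ideal R) (hp : p.IsPrime)
    (hp0 : p ≠ ⊥) (hmin : ∀ q : Ideal R, q.IsPrime → q ≤ p → q ≠ ⊥ → q = p) :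
    p.heightOf = 1 := by
  have h1 : Order.height (⟨p, hp⟩ : PrimeSpectrum R) = 1 := by
    rw [Order.height_eq_iSup_lt_height]
    apply le_antisymm
    · refine iSup₂_le fun q hq => ?_
      have hq0 : q.asIdeal = ⊥ := by
        by_contra h
        exact hq.ne (PrimeSpectrum.ext (hmin _ q.isPrime hq.le h))
      have : Order.height q = 0 := by
        rw [Order.height_eq_zero]
        intro q' _
        change q.asIdeal ≤ q'.asIdeal
        rw [hq0]
        exact bot_le
      rw [this, zero_add]
    · have hlt : (⟨⊥, Ideal.isPrime_bot⟩ : PrimeSpectrum R) < ⟨p, hp⟩ :=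
        (PrimeSpectrum.asIdeal_lt_asIdeal _ _).1 (bot_lt_iff_ne_bot.2 hp0)
      exact le_trans (by simp) (le_iSup₂ (f := fun (y : PrimeSpectrum R)
        (_ : y < ⟨p, hp⟩) => Order.height y + 1) _ hlt)
  apply le_antisymm
  · exact (iInf₂_le (⟨p, hp⟩ : PrimeSpectrum R) (le_refl p)).trans h1.le
  · refine le_iInf₂ fun q hq => ?_
    rw [← h1]
    exact Order.height_mono hq

/-- Let `k` be a field of characteristic 0 and `S`, `R` affine domains over `k` with
`R` a `k`-subalgebra of `S`.  Assume the variety of `R` has no selfintersection points,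
i.e. the contraction map on maximal ideals from the integral closure `R'` of `R` in its
fraction field to `R` is injective, and assume every ideal of height 1 in `R` generates
a proper ideal in `S`.  If a `k`-algebra endomorphism `F : S → S` with `F(R) ⊆ R` is
bijective, then so is its restriction `R → R`. -/
theorem subring_invariant_automorphism_restricts_no_selfintersection
    {k S : Type*} [Field k] [CharZero k]
    [CommRing S] [IsDomain S] [Algebra k S] [Algebra.FiniteType k S]
    (R : Subalgebra k S) [Algebra.FiniteType k ↥R]
    (hnorm : ∀ m₁ m₂ : Ideal ↥(integralClosure ↥R (FractionRing ↥R)),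
      m₁.IsMaximal → m₂.IsMaximal →
      Ideal.comap (algebraMap ↥R ↥(integralClosure ↥R (FractionRing ↥R))) m₁ =
        Ideal.comap (algebraMap ↥R ↥(integralClosure ↥R (FractionRing ↥R))) m₂ →
      m₁ = m₂)
    (hht : ∀ I : Ideal ↥R, I.heightOf = 1 → Ideal.map (algebraMap ↥R S) I ≠ ⊤)
    (F : S →ₐ[k] S) (hF : ∀ r ∈ R, F r ∈ R)
    (hFbij : Function.Bijective F) :
    Function.Bijective (fun r : ↥R => (⟨F r.1, hF r.1 r.2⟩ : ↥R)) := by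
  refine ⟨fun a b h => Subtype.ext (hFbij.1 (congrArg Subtype.val h)), fun r => ?_⟩
  obtain ⟨x, hx⟩ := hFbij.2 r.1
  letI : Algebra (FractionRing ↥R) (FractionRing S) := FractionRing.liftAlgebra ↥R (FractionRing S)
  obtain ⟨y, hy⟩ := mem_range_of_fractionRing (k := k) (R := ↥R) (S := S) (K := FractionRing ↥R)
    (L := FractionRing S) hnorm
    (fun p hp hp0 hmin => hht p (heightOf_eq_one p hp hp0 hmin))
    (AlgEquiv.ofBijective F hFbij) (fun s => ⟨⟨F s.1, hF s.1 s.2⟩, rfl⟩) x ⟨r, hx.symm⟩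
  refine ⟨y, Subtype.ext ?_⟩
  change F (algebraMap ↥R S y) = r.1
  rw [hy, hx]
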